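/- arXiv:1901.04705 — 6 statements merged into one kernel-verified Lean document; each statement's English description precedes it below -/
import Mathlib

section
/- Let α, β > 0, μ ≥ 0 with α − β(μ+1) < −1, and γ, δ ∈ ℝ, and suppose m := δ(α+1)/β − γ is a positive integer. Define the constant C := β^{m−1} · Γ(−(α+1)/β + μ + 1) · Γ((α+1)/β) / (2^m · Γ(μ+1)). Then S_{α,β,γ,δ,μ}(r) / (C · r^{2(α+1)/β − 2(μ+1)} · (log r)^{−m}) → 1 as r → ∞. -/
open Filter Real

/-!
The terms with `n ^ β * (log n) ^ δ` comparable to `r ^ 2` dominate the series. For those,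
`log n` is close to `L = (2 / β) * log r`, so `n` has the order of the solution `X` of
`X ^ β * L ^ δ = r ^ 2`. In the variable `y = n / X` the series becomes
`X ^ (α + 1) * L ^ γ / (r ^ 2) ^ (μ + 1)` times a Riemann sum of mesh `1 / X`. Since
`log (y * X) / L → 1`, its summands converge to `y ^ α / (y ^ β + 1) ^ (μ + 1)`, whose integral over
`(0, ∞)` is a beta integral. Dominated convergence applies because replacing `log (y * X) / L` by
`1` costs at most a factor `K * exp (ε * |log y|)` with `ε` arbitrarily small.
-/

section

open Asymptotics MeasureTheory ProbabilityTheory Set Topology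

lemma setIntegral_Ioo_rpow_mul_one_sub_rpow {s v : ℝ} (hs : 0 < s) (hv : 0 < v) :
    ∫ x in Ioo (0 : ℝ) 1, x ^ (s - 1) * (1 - x) ^ (v - 1) = beta s v := by
  rw [beta_eq_betaIntegralReal s v hs hv, Complex.betaIntegral,
    intervalIntegral.integral_of_le zero_le_one, ← integral_Ioc_eq_integral_Ioo,
    ← Complex.ofReal_re (∫ x in Ioc (0 : ℝ) 1, _), ← integral_complex_ofReal]
  congr 1
  refine setIntegral_congr_fun measurableSet_Ioc fun x hx => ?_
  simp only [Complex.ofReal_mul, Complex.ofReal_cpow hx.1.le,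
    Complex.ofReal_cpow (sub_nonneg.2 hx.2), Complex.ofReal_sub, Complex.ofReal_one]

lemma bijOn_div_one_sub : BijOn (fun x : ℝ => x / (1 - x)) (Ioo 0 1) (Ioi 0) := by
  refine InvOn.bijOn (f' := fun y => y / (1 + y)) ⟨fun x hx => ?_, fun y hy => ?_⟩
    (fun x hx => div_pos hx.1 (sub_pos.2 hx.2)) fun y hy => ?_
  · have : 1 - x ≠ 0 := (sub_pos.2 hx.2).ne'
    simp only
    field_simp
    ring
  all_goals have hy : 0 < y := hy
  · simp only
    field_simp
    ring
  · exact ⟨by positivity, (div_lt_one (by positivity)).2 (by linarith)⟩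

lemma hasDerivAt_div_one_sub {x : ℝ} (hx : x ≠ 1) :
    HasDerivAt (fun x : ℝ => x / (1 - x)) (1 / (1 - x) ^ 2) x := by
  have h := (hasDerivAt_id x).fun_div ((hasDerivAt_id x).const_sub 1) (sub_ne_zero.2 hx.symm)
  simpa using h

lemma setIntegral_Ioi_rpow_div_add_one_rpow {s v : ℝ} (hs : 0 < s) (hv : 0 < v) :
    ∫ u in Ioi (0 : ℝ), u ^ (s - 1) / (u + 1) ^ (s + v) = beta s v := by
  rw [← bijOn_div_one_sub.image_eq, integral_image_eq_integral_abs_deriv_smul measurableSet_Ioo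
    (fun x hx => (hasDerivAt_div_one_sub hx.2.ne).hasDerivWithinAt) bijOn_div_one_sub.injOn,
    ← setIntegral_Ioo_rpow_mul_one_sub_rpow hs hv]
  refine setIntegral_congr_fun measurableSet_Ioo fun x ⟨hx, hx1⟩ => ?_
  have h1 : 0 < 1 - x := sub_pos.2 hx1
  have hadd : x / (1 - x) + 1 = (1 - x)⁻¹ := by field_simp; ring
  have hsplit : (1 - x) ^ (s + v) = (1 - x) ^ (v - 1) * (1 - x) ^ (s - 1) * (1 - x) ^ 2 := by
    rw [← rpow_natCast, ← rpow_add h1, ← rpow_add h1]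
    congr 1
    push_cast
    ring
  simp only [smul_eq_mul]
  rw [hadd, abs_of_pos (by positivity), div_rpow hx.le h1.le, inv_rpow h1.le, div_inv_eq_mul,
    hsplit]
  field_simp

lemma setIntegral_Ioi_rpow_div_rpow_add_one {a b q : ℝ} (ha : -1 < a) (hb : 0 < b)
    (hq : a + 1 < b * q) :
    ∫ t in Ioi (0 : ℝ), t ^ a / (t ^ b + 1) ^ q = beta ((a + 1) / b) (q - (a + 1) / b) / b := by
  have hs : 0 < (a + 1) / b := div_pos (by linarith) hb
  have hv : 0 < q - (a + 1) / b := by rwa [sub_pos, div_lt_iff₀' hb]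
  rw [← setIntegral_Ioi_rpow_div_add_one_rpow hs hv,
    ← integral_comp_rpow_Ioi_of_pos (g := fun u => u ^ ((a + 1) / b - 1) / (u + 1) ^ (_ + _)) hb,
    ← integral_div]
  refine setIntegral_congr_fun measurableSet_Ioi fun t (ht : 0 < t) => ?_
  have hexp : t ^ a = t ^ (b - 1) * t ^ (b * ((a + 1) / b - 1)) := by
    rw [← rpow_add ht]
    congr 1
    field_simp
    ring
  simp only [smul_eq_mul]
  rw [← rpow_mul ht.le, hexp, add_sub_cancel]
  field_simp

section RiemannSum

variable {E : Type*} [NormedAddCommGroup E] [NormedSpace ℝ E] [CompleteSpace E]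

lemma iUnion_Ico_natCast : ⋃ n : ℕ, Ico (n : ℝ) (n + 1) = Ici 0 := by
  refine Subset.antisymm (iUnion_subset fun n x hx => n.cast_nonneg.trans hx.1) fun x hx => ?_
  exact mem_iUnion.2 ⟨⌊x⌋₊, Nat.floor_le hx, Nat.lt_floor_add_one x⟩

lemma hasSum_setIntegral_Ioi_floor {g : ℕ → E}
    (hg : IntegrableOn (fun t : ℝ => g ⌊t⌋₊) (Ioi 0)) :
    HasSum g (∫ t in Ioi (0 : ℝ), g ⌊t⌋₊) := by
  have hdisj : Pairwise (Function.onFun Disjoint fun n : ℕ => Ico (n : ℝ) (n + 1)) := fun i j hij =>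
    mod_cast pairwise_disjoint_Ico_intCast ℝ (Nat.cast_injective.ne hij : (i : ℤ) ≠ j)
  have hstep (n : ℕ) : ∫ t in Ico (n : ℝ) (n + 1), g ⌊t⌋₊ = g n := by
    rw [setIntegral_congr_fun measurableSet_Ico fun t ht => by
      rw [(Nat.floor_eq_iff (n.cast_nonneg.trans ht.1)).2 ht]]
    simp
  rw [← integrableOn_Ici_iff_integrableOn_Ioi, ← iUnion_Ico_natCast] at hg
  have hsum := hasSum_integral_iUnion (fun _ => measurableSet_Ico) hdisj hg
  simpa only [hstep, iUnion_Ico_natCast, integral_Ici_eq_integral_Ioi] using hsum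

lemma inv_smul_tsum_eq_setIntegral_Ioi_floor {g : ℕ → E} {X : ℝ} (hX : 0 < X)
    (hg : IntegrableOn (fun t : ℝ => g ⌊t * X⌋₊) (Ioi 0)) :
    X⁻¹ • ∑' n, g n = ∫ t in Ioi (0 : ℝ), g ⌊t * X⌋₊ := by
  rw [integrableOn_Ioi_comp_mul_right_iff (fun t => g ⌊t⌋₊) 0 hX, zero_mul] at hg
  rw [integral_comp_mul_right_Ioi (fun t => g ⌊t⌋₊) 0 hX, zero_mul,
    (hasSum_setIntegral_Ioi_floor hg).tsum_eq]

lemma tendsto_inv_smul_tsum_of_dominated_convergence {ι : Type*} {l : Filter ι}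
    [l.IsCountablyGenerated] {g : ι → ℕ → E} {X : ι → ℝ} {f : ℝ → E} {bound : ℝ → ℝ}
    (hX : ∀ᶠ i in l, 0 < X i) (hbound : IntegrableOn bound (Ioi 0))
    (hle : ∀ᶠ i in l, ∀ t, 0 < t → ‖g i ⌊t * X i⌋₊‖ ≤ bound t)
    (hlim : ∀ t, 0 < t → Tendsto (fun i => g i ⌊t * X i⌋₊) l (𝓝 (f t))) :
    Tendsto (fun i => (X i)⁻¹ • ∑' n, g i n) l (𝓝 (∫ t in Ioi (0 : ℝ), f t)) := by
  have hmeas (i : ι) : AEStronglyMeasurable (fun t => g i ⌊t * X i⌋₊) (volume.restrict (Ioi 0)) :=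
    (StronglyMeasurable.of_discrete.comp_measurable
      (Nat.measurable_floor.comp (measurable_mul_const (X i)))).aestronglyMeasurable
  have hle' : ∀ᶠ i in l, ∀ᵐ t ∂volume.restrict (Ioi 0), ‖g i ⌊t * X i⌋₊‖ ≤ bound t :=
    hle.mono fun i => ae_restrict_of_forall_mem measurableSet_Ioi
  refine (tendsto_integral_filter_of_dominated_convergence bound (.of_forall hmeas) hle' hbound
    (ae_restrict_of_forall_mem measurableSet_Ioi hlim)).congr' ?_
  filter_upwards [hX, hle'] with i hXi hlei
  exact (inv_smul_tsum_eq_setIntegral_Ioi_floor hXi (hbound.mono' (hmeas i) hlei)).symm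

end RiemannSum

lemma one_le_of_inv_le {x M : ℝ} (hx : 0 < x) (hxM : x ≤ M) (hinvM : x⁻¹ ≤ M) : 1 ≤ M := by
  rcases le_total 1 x with h | h
  · exact h.trans hxM
  · exact ((one_le_inv₀ hx).2 h).trans hinvM

lemma rpow_le_rpow_of_inv_le {x M g s : ℝ} (hx : 0 < x) (hxM : x ≤ M) (hinvM : x⁻¹ ≤ M)
    (hgs : |g| ≤ s) : x ^ g ≤ M ^ s := by
  calc x ^ g ≤ M ^ |g| := by
        rcases le_total 0 g with hg | hg
        · rw [abs_of_nonneg hg]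
          exact rpow_le_rpow hx.le hxM hg
        · rw [abs_of_nonpos hg, ← neg_neg g, rpow_neg hx.le, ← inv_rpow hx.le, neg_neg]
          exact rpow_le_rpow (inv_pos.2 hx).le hinvM (neg_nonneg.2 hg)
    _ ≤ M ^ s := rpow_le_rpow_of_exponent_le (one_le_of_inv_le hx hxM hinvM) hgs

lemma div_le_mul_exp_abs_sub {A B c η : ℝ} (hc : 0 < c) (hη : 0 < η) (hB : c ≤ B) :
    A / B ≤ (1 + 1 / (η * c)) * exp (η * |A - B|) := by
  have hB0 : 0 < B := hc.trans_le hB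
  calc A / B = 1 + (A - B) / B := by field_simp; ring
    _ ≤ 1 + |A - B| / c := by
        gcongr
        exact le_abs_self _
    _ ≤ 1 + |A - B| / c + (η * |A - B| + 1 / (η * c)) := le_add_of_nonneg_right (by positivity)
    _ = (1 + 1 / (η * c)) * (η * |A - B| + 1) := by field_simp; ring
    _ ≤ (1 + 1 / (η * c)) * exp (η * |A - B|) := by
        gcongr
        exact add_one_le_exp _

lemma log_mul_div_le_and_inv_le {X L y η : ℝ} (hη : 0 < η) (hX : 2 ≤ X) (hyX : 2 ≤ y * X)
    (hXL : log X / L ≤ 2) (hLX : L / log X ≤ 2) :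
    log (y * X) / L ≤ 2 * (1 + 1 / (η * log 2)) * exp (η * |log y|) ∧
      (log (y * X) / L)⁻¹ ≤ 2 * (1 + 1 / (η * log 2)) * exp (η * |log y|) := by
  have hlog2 : 0 < log 2 := log_pos one_lt_two
  have hX0 : 0 < X := two_pos.trans_le hX
  have hy : 0 < y := pos_of_mul_pos_left (two_pos.trans_le hyX) hX0.le
  have hB : log 2 ≤ log X := log_le_log two_pos hX
  have hA : log 2 ≤ log (y * X) := log_le_log two_pos hyX
  have hsub : log (y * X) - log X = log y := by rw [log_mul hy.ne' hX0.ne', add_sub_cancel_right]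
  have hAB := div_le_mul_exp_abs_sub (A := log (y * X)) hlog2 hη hB
  have hBA := div_le_mul_exp_abs_sub (A := log X) hlog2 hη hA
  rw [abs_sub_comm] at hBA
  rw [hsub] at hAB hBA
  have hA0 : 0 < log (y * X) := hlog2.trans_le hA
  have hB0 : 0 < log X := hlog2.trans_le hB
  rw [mul_assoc]
  constructor
  · calc log (y * X) / L = log X / L * (log (y * X) / log X) := by field_simp
      _ ≤ _ := by gcongr
  · calc (log (y * X) / L)⁻¹ = L / log X * (log X / log (y * X)) := by field_simp
      _ ≤ _ := by gcongr

lemma rpow_mul_div_rpow_le_mul_min {a b q y u v M : ℝ} (hq : 0 ≤ q) (hy : 0 < y) (hu : u ≤ M)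
    (hv : 0 < v) (hvM : v⁻¹ ≤ M) (hM : 1 ≤ M) :
    y ^ a * u / (y ^ b * v + 1) ^ q ≤ M ^ (1 + q) * min (y ^ a) (y ^ (a - b * q)) := by
  have hM0 : 0 < M := one_pos.trans_le hM
  rw [mul_min_of_nonneg _ _ (by positivity), rpow_add hM0, rpow_one]
  refine le_min ?_ ?_
  · calc y ^ a * u / (y ^ b * v + 1) ^ q ≤ y ^ a * M / 1 := by
          gcongr
          exact one_le_rpow (le_add_of_nonneg_left (by positivity)) hq
      _ = M * 1 * y ^ a := by ring
      _ ≤ M * M ^ q * y ^ a := by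
          gcongr
          exact one_le_rpow hM hq
  · calc y ^ a * u / (y ^ b * v + 1) ^ q ≤ y ^ a * M / (y ^ b * M⁻¹) ^ q := by
          gcongr
          calc y ^ b * M⁻¹ ≤ y ^ b * v := by
                gcongr
                exact inv_le_of_inv_le₀ hv hvM
            _ ≤ y ^ b * v + 1 := le_add_of_nonneg_right zero_le_one
      _ = M * M ^ q * y ^ (a - b * q) := by
          rw [mul_rpow (by positivity) (by positivity), inv_rpow hM0.le, ← rpow_mul hy.le,
            rpow_sub hy]
          field_simp

lemma exp_abs_log_mul_min_rpow_le {a c ε σ p y : ℝ} (hy : 0 < y) (hcp : c + ε ≤ p) (hpσ : p ≤ σ)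
    (hσa : σ ≤ a - ε) :
    exp (ε * |log y|) * min (y ^ a) (y ^ c) ≤ min (y ^ σ) (y ^ p) := by
  rcases le_total y 1 with hy1 | hy1
  · have hexp : exp (ε * |log y|) = y ^ (-ε) := by
      rw [abs_of_nonpos (log_nonpos hy.le hy1), rpow_def_of_pos hy]
      ring_nf
    calc exp (ε * |log y|) * min (y ^ a) (y ^ c) ≤ y ^ (-ε) * y ^ a := by
          rw [hexp]
          gcongr
          exact min_le_left _ _
      _ = y ^ (a - ε) := by rw [← rpow_add hy, neg_add_eq_sub]
      _ ≤ min (y ^ σ) (y ^ p) := le_min (rpow_le_rpow_of_exponent_ge hy hy1 hσa)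
          (rpow_le_rpow_of_exponent_ge hy hy1 (hpσ.trans hσa))
  · have hexp : exp (ε * |log y|) = y ^ ε := by
      rw [abs_of_nonneg (log_nonneg hy1), rpow_def_of_pos hy, mul_comm]
    calc exp (ε * |log y|) * min (y ^ a) (y ^ c) ≤ y ^ ε * y ^ c := by
          rw [hexp]
          gcongr
          exact min_le_right _ _
      _ = y ^ (c + ε) := by rw [← rpow_add hy, add_comm]
      _ ≤ min (y ^ σ) (y ^ p) := le_min (rpow_le_rpow_of_exponent_le hy1 (hcp.trans hpσ))
          (rpow_le_rpow_of_exponent_le hy1 hcp)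

lemma integrableOn_Ioi_min_rpow {σ p : ℝ} (hσ : -1 < σ) (hp : p < -1) :
    IntegrableOn (fun t : ℝ => min (t ^ σ) (t ^ p)) (Ioi 0) := by
  have hmeas : Measurable fun t : ℝ => min (t ^ σ) (t ^ p) := by fun_prop
  have hnonneg {t : ℝ} (ht : 0 < t) : 0 ≤ min (t ^ σ) (t ^ p) := by positivity
  rw [← Ioc_union_Ioi_eq_Ioi zero_le_one]
  refine IntegrableOn.union ?_ ?_
  · have hint : IntegrableOn (fun t : ℝ => t ^ σ) (Ioc 0 1) :=
      (intervalIntegrable_iff_integrableOn_Ioc_of_le zero_le_one).1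
        (intervalIntegral.intervalIntegrable_rpow' hσ)
    refine hint.mono' hmeas.aestronglyMeasurable
      (ae_restrict_of_forall_mem measurableSet_Ioc fun t ht => ?_)
    rw [norm_of_nonneg (hnonneg ht.1)]
    exact min_le_left _ _
  · refine (integrableOn_Ioi_rpow_of_lt hp one_pos).mono' hmeas.aestronglyMeasurable
      (ae_restrict_of_forall_mem measurableSet_Ioi fun t ht => ?_)
    rw [norm_of_nonneg (hnonneg (one_pos.trans ht))]
    exact min_le_right _ _

section Kernel

variable {a b γ δ q : ℝ}

/-- The general term of the Mathieu-type series in the rescaled variable `y = n / X`, with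
logarithms measured in units of `L`: if `X ^ b * L ^ δ = r ^ 2`, the term at `n = y * X` is
`X ^ a * L ^ γ / (r ^ 2) ^ q` times this kernel. -/
noncomputable def mathieuKernel (a b γ δ q X L y : ℝ) : ℝ :=
  y ^ a * (log (y * X) / L) ^ γ / (y ^ b * (log (y * X) / L) ^ δ + 1) ^ q

lemma mathieuKernel_nonneg {X L y : ℝ} (hL : 0 ≤ L) (hy : 0 ≤ y) (hyX : 1 ≤ y * X) :
    0 ≤ mathieuKernel a b γ δ q X L y := by
  have : 0 ≤ log (y * X) := log_nonneg hyX
  unfold mathieuKernel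
  positivity

variable (a b γ δ) in
lemma exists_mathieuKernel_le_mul_exp_abs_log {ε : ℝ} (hq : 0 ≤ q) (hε : 0 < ε) :
    ∃ K : ℝ, 0 < K ∧ ∀ X L y : ℝ, 2 ≤ X → 2 ≤ y * X → 0 < L → log X / L ≤ 2 → L / log X ≤ 2 →
      mathieuKernel a b γ δ q X L y ≤
        K * (exp (ε * |log y|) * min (y ^ a) (y ^ (a - b * q))) := by
  set s := |γ| + |δ|
  set η := ε / (s * (1 + q) + 1)
  have hη : 0 < η := by positivity
  have hηε : η * (s * (1 + q)) ≤ ε := by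
    rw [div_mul_eq_mul_div, div_le_iff₀ (by positivity)]
    nlinarith
  set C := 2 * (1 + 1 / (η * log 2))
  refine ⟨C ^ (s * (1 + q)), by positivity, fun X L y hX hyX hL hXL hLX => ?_⟩
  have hX0 : 0 < X := two_pos.trans_le hX
  have hy : 0 < y := pos_of_mul_pos_left (two_pos.trans_le hyX) hX0.le
  have hratio : 0 < log (y * X) / L := div_pos (log_pos (one_lt_two.trans_le hyX)) hL
  obtain ⟨hle, hinv⟩ := log_mul_div_le_and_inv_le hη hX hyX hXL hLX
  have hM : 1 ≤ C * exp (η * |log y|) := one_le_of_inv_le hratio hle hinv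
  have hγ := rpow_le_rpow_of_inv_le (g := γ) (s := s) hratio hle hinv
    (le_add_of_nonneg_right (abs_nonneg δ))
  have hδ := rpow_le_rpow_of_inv_le (g := -δ) (s := s) hratio hle hinv
    (by simpa only [abs_neg] using le_add_of_nonneg_left (abs_nonneg γ))
  rw [rpow_neg hratio.le] at hδ
  calc mathieuKernel a b γ δ q X L y
      ≤ ((C * exp (η * |log y|)) ^ s) ^ (1 + q) * min (y ^ a) (y ^ (a - b * q)) :=
        rpow_mul_div_rpow_le_mul_min hq hy hγ (by positivity) hδ (one_le_rpow hM (by positivity))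
    _ = C ^ (s * (1 + q)) *
          (exp (η * (s * (1 + q)) * |log y|) * min (y ^ a) (y ^ (a - b * q))) := by
        rw [← rpow_mul (by positivity), mul_rpow (by positivity) (exp_pos _).le, ← exp_mul,
          mul_assoc, mul_right_comm η]
    _ ≤ _ := by gcongr

variable (γ δ) in
lemma exists_integrableOn_mathieuKernel_le (ha : -1 < a) (hq0 : 0 ≤ q) (hq : a + 1 < b * q) :
    ∃ bound : ℝ → ℝ, IntegrableOn bound (Ioi 0) ∧ ∀ X L t y : ℝ, 2 ≤ X → 2 ≤ y * X → 0 < L →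
      log X / L ≤ 2 → L / log X ≤ 2 → 0 < t → t ≤ y → mathieuKernel a b γ δ q X L y ≤ bound t := by
  obtain ⟨ε, hε, hεlt⟩ := exists_between (lt_min (neg_lt_iff_pos_add.1 ha) (sub_pos.2 hq))
  obtain ⟨hεa, hεq⟩ := lt_min_iff.1 hεlt
  set p := a - b * q + ε
  set σ := min (a - ε) 0
  have hσ : -1 < σ := lt_min (by linarith) (by norm_num)
  have hp : p < -1 := by linarith
  obtain ⟨K, hK, hle⟩ := exists_mathieuKernel_le_mul_exp_abs_log a b γ δ hq0 hε
  refine ⟨fun t => K * min (t ^ σ) (t ^ p), (integrableOn_Ioi_min_rpow hσ hp).const_mul K,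
    fun X L t y hX hyX hL hXL hLX ht hty => ?_⟩
  calc mathieuKernel a b γ δ q X L y
      ≤ K * (exp (ε * |log y|) * min (y ^ a) (y ^ (a - b * q))) := hle X L y hX hyX hL hXL hLX
    _ ≤ K * min (y ^ σ) (y ^ p) := by
        gcongr
        exact exp_abs_log_mul_min_rpow_le (ht.trans_le hty) le_rfl (hp.trans hσ).le
          (min_le_left _ _)
    _ ≤ K * min (t ^ σ) (t ^ p) := by
        gcongr ?_ * min ?_ ?_
        · exact rpow_le_rpow_of_nonpos ht hty (min_le_right _ _)
        · exact rpow_le_rpow_of_nonpos ht hty (by linarith)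

section Limit

variable {ι : Type*} {l : Filter ι} {X L : ι → ℝ}

lemma isEquivalent_log_mul {y : ι → ℝ} {t : ℝ} (hX : Tendsto X l atTop)
    (hXL : (fun i => log (X i)) ~[l] L) (hy : Tendsto y l (𝓝 t)) (ht : 0 < t) :
    (fun i => log (y i * X i)) ~[l] L := by
  have hL : Tendsto L l atTop := hXL.tendsto_atTop (tendsto_log_atTop.comp hX)
  have hlogy : (fun i => log (y i)) =o[l] L :=
    ((hy.log ht.ne').isBigO_one ℝ).trans_isLittleO
      (isLittleO_one_left_iff ℝ |>.2 (tendsto_norm_atTop_atTop.comp hL))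
  refine (hXL.add_isLittleO hlogy).congr_left ?_
  filter_upwards [hX.eventually_gt_atTop 0, hy.eventually_const_lt ht] with i hXi hyi
  rw [log_mul hyi.ne' hXi.ne', Pi.add_apply, add_comm]

lemma tendsto_mathieuKernel {y : ι → ℝ} {t : ℝ} (hX : Tendsto X l atTop)
    (hXL : (fun i => log (X i)) ~[l] L) (hy : Tendsto y l (𝓝 t)) (ht : 0 < t) :
    Tendsto (fun i => mathieuKernel a b γ δ q (X i) (L i) (y i)) l
      (𝓝 (t ^ a / (t ^ b + 1) ^ q)) := by
  have hL : Tendsto L l atTop := hXL.tendsto_atTop (tendsto_log_atTop.comp hX)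
  have hratio : Tendsto (fun i => log (y i * X i) / L i) l (𝓝 1) :=
    (isEquivalent_iff_tendsto_one (hL.eventually_ne_atTop 0)).1 (isEquivalent_log_mul hX hXL hy ht)
  have hratio_rpow (g : ℝ) : Tendsto (fun i => (log (y i * X i) / L i) ^ g) l (𝓝 1) := by
    simpa only [one_rpow] using hratio.rpow_const (p := g) (.inl one_ne_zero)
  have hy_rpow (g : ℝ) : Tendsto (fun i => y i ^ g) l (𝓝 (t ^ g)) := hy.rpow_const (.inl ht.ne')
  have hbase : Tendsto (fun i => y i ^ b * (log (y i * X i) / L i) ^ δ + 1) l (𝓝 (t ^ b + 1)) := by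
    simpa only [mul_one] using ((hy_rpow b).mul (hratio_rpow δ)).add_const 1
  have hpos : 0 < t ^ b + 1 := by positivity
  simpa only [mul_one] using! ((hy_rpow a).mul (hratio_rpow γ)).div
    (hbase.rpow_const (.inl hpos.ne')) (rpow_pos_of_pos hpos q).ne'

lemma tendsto_floor_add_two_div (hX : Tendsto X l atTop) {t : ℝ} (ht : 0 ≤ t) :
    Tendsto (fun i => ((⌊t * X i⌋₊ : ℝ) + 2) / X i) l (𝓝 t) := by
  simpa only [Function.comp_def, add_div, add_zero] using
    ((tendsto_nat_floor_mul_div_atTop ht).comp hX).add (hX.const_div_atTop 2)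

lemma le_floor_add_two_div {x t : ℝ} (hx : 0 < x) : t ≤ ((⌊t * x⌋₊ : ℝ) + 2) / x := by
  rw [le_div_iff₀ hx]
  linarith [Nat.lt_floor_add_one (t * x)]

variable (γ δ) in
lemma tendsto_inv_mul_tsum_mathieuKernel [l.IsCountablyGenerated] (ha : -1 < a) (hb : 0 < b)
    (hq : a + 1 < b * q) (hX : Tendsto X l atTop) (hXL : (fun i => log (X i)) ~[l] L) :
    Tendsto (fun i => (X i)⁻¹ * ∑' n : ℕ, mathieuKernel a b γ δ q (X i) (L i) ((n + 2) / X i)) l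
      (𝓝 (beta ((a + 1) / b) (q - (a + 1) / b) / b)) := by
  have hq0 : 0 ≤ q := (pos_of_mul_pos_right (by linarith : 0 < b * q) hb.le).le
  obtain ⟨bound, hbound, hle⟩ := exists_integrableOn_mathieuKernel_le γ δ ha hq0 hq
  have hlogX : Tendsto (fun i => log (X i)) l atTop := tendsto_log_atTop.comp hX
  have hL : Tendsto L l atTop := hXL.tendsto_atTop hlogX
  have hXL1 := (isEquivalent_iff_tendsto_one (hL.eventually_ne_atTop 0)).1 hXL
  have hLX1 := (isEquivalent_iff_tendsto_one (hlogX.eventually_ne_atTop 0)).1 hXL.symm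
  rw [← setIntegral_Ioi_rpow_div_rpow_add_one ha hb hq]
  refine tendsto_inv_smul_tsum_of_dominated_convergence (hX.eventually_gt_atTop 0) hbound ?_
    fun t ht => tendsto_mathieuKernel hX hXL (tendsto_floor_add_two_div hX ht.le) ht
  filter_upwards [hX.eventually_ge_atTop 2, hL.eventually_gt_atTop 0,
    hXL1.eventually_le_const one_lt_two, hLX1.eventually_le_const one_lt_two]
    with i hXi hLi hXLi hLXi t ht
  have hXi0 : 0 < X i := two_pos.trans_le hXi
  have hyX : 2 ≤ ((⌊t * X i⌋₊ : ℝ) + 2) / X i * X i := by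
    rw [div_mul_cancel₀ _ hXi0.ne']
    exact le_add_of_nonneg_left (Nat.cast_nonneg _)
  rw [norm_of_nonneg (mathieuKernel_nonneg hLi.le (by positivity) (one_le_two.trans hyX))]
  exact hle _ _ t _ hXi hyX hLi hXLi hLXi ht (le_floor_add_two_div hXi0)

end Limit

end Kernel

section Series

/-- The Mathieu-type series `S_{α,β,γ,δ,μ}(r)`. The sum over `n ≥ 2` is reindexed by `n + 2` with
`n : ℕ`. -/
noncomputable def mathieuSeries (α β γ δ μ r : ℝ) : ℝ :=
  ∑' n : ℕ, ((n : ℝ) + 2) ^ α * log ((n : ℝ) + 2) ^ γ /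
    (((n : ℝ) + 2) ^ β * log ((n : ℝ) + 2) ^ δ + r ^ 2) ^ (μ + 1)

/-- The size `2 / β * log r` of `log n` at the terms dominating `mathieuSeries`. -/
noncomputable def mathieuLogScale (β r : ℝ) : ℝ :=
  2 / β * log r

/-- The size of the indices `n` dominating `mathieuSeries`. It solves
`X ^ β * mathieuLogScale β r ^ δ = r ^ 2`, which approximates `n ^ β * log n ^ δ = r ^ 2`. -/
noncomputable def mathieuScale (β δ r : ℝ) : ℝ :=
  r ^ (2 / β) * mathieuLogScale β r ^ (-δ / β)

variable {α β γ δ μ κ r : ℝ}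

lemma mathieuLogScale_pos (hβ : 0 < β) (hr : 1 < r) : 0 < mathieuLogScale β r :=
  mul_pos (div_pos two_pos hβ) (log_pos hr)

lemma mathieuScale_pos (hβ : 0 < β) (hr : 1 < r) : 0 < mathieuScale β δ r :=
  mul_pos (rpow_pos_of_pos (one_pos.trans hr) _) (rpow_pos_of_pos (mathieuLogScale_pos hβ hr) _)

lemma tendsto_mathieuLogScale (hβ : 0 < β) : Tendsto (mathieuLogScale β) atTop atTop :=
  tendsto_log_atTop.const_mul_atTop (div_pos two_pos hβ)

lemma isEquivalent_log_mathieuScale (hβ : 0 < β) :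
    (fun r => log (mathieuScale β δ r)) ~[atTop] mathieuLogScale β := by
  have hlog : (fun r => -δ / β * log (mathieuLogScale β r)) =o[atTop] mathieuLogScale β :=
    (isLittleO_log_id_atTop.comp_tendsto (tendsto_mathieuLogScale hβ)).const_mul_left _
  refine (IsEquivalent.refl.add_isLittleO hlog).congr_left ?_
  filter_upwards [eventually_gt_atTop 1] with r hr
  have hr0 : 0 < r := one_pos.trans hr
  have hL : 0 < mathieuLogScale β r := mathieuLogScale_pos hβ hr
  rw [mathieuScale, log_mul (by positivity) (by positivity), log_rpow hr0, log_rpow hL]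
  rfl

lemma tendsto_mathieuScale (hβ : 0 < β) : Tendsto (mathieuScale β δ) atTop atTop := by
  have hlog : Tendsto (fun r => log (mathieuScale β δ r)) atTop atTop :=
    (isEquivalent_log_mathieuScale hβ).symm.tendsto_atTop (tendsto_mathieuLogScale hβ)
  refine (tendsto_exp_atTop.comp hlog).congr' ?_
  filter_upwards [eventually_gt_atTop 1] with r hr
  exact exp_log (mathieuScale_pos hβ hr)

lemma mathieuScale_rpow (hβ : 0 < β) (hr : 1 < r) (s : ℝ) :
    mathieuScale β δ r ^ s = r ^ (2 * s / β) * mathieuLogScale β r ^ (-(δ * s / β)) := by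
  have hr0 : 0 < r := one_pos.trans hr
  have hL : 0 < mathieuLogScale β r := mathieuLogScale_pos hβ hr
  rw [mathieuScale, mul_rpow (by positivity) (by positivity), ← rpow_mul hr0.le, ← rpow_mul hL.le]
  congr 2 <;> ring

lemma mathieuScale_rpow_mul_mathieuLogScale_rpow (hβ : 0 < β) (hr : 1 < r) :
    mathieuScale β δ r ^ β * mathieuLogScale β r ^ δ = r ^ 2 := by
  rw [mathieuScale_rpow hβ hr, mul_assoc, ← rpow_add (mathieuLogScale_pos hβ hr),
    mul_div_cancel_right₀ _ hβ.ne', mul_div_cancel_right₀ _ hβ.ne', neg_add_cancel, rpow_zero,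
    mul_one, rpow_two]

lemma rpow_mul_log_rpow_div_eq_mul_mathieuKernel {q X L ρ x : ℝ} (hX : 0 < X) (hL : 0 < L)
    (hx : 1 < x) (hρ : X ^ β * L ^ δ = ρ) :
    x ^ α * log x ^ γ / (x ^ β * log x ^ δ + ρ) ^ q =
      X ^ α * L ^ γ / ρ ^ q * mathieuKernel α β γ δ q X L (x / X) := by
  have hx0 : 0 < x := one_pos.trans hx
  have hlogx : 0 < log x := log_pos hx
  have hρ0 : 0 < ρ := hρ ▸ by positivity
  have hden : x ^ β * log x ^ δ + ρ = ((x / X) ^ β * (log x / L) ^ δ + 1) * ρ := by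
    rw [← hρ, div_rpow hx0.le hX.le, div_rpow hlogx.le hL.le]
    field_simp
  rw [mathieuKernel, div_mul_cancel₀ _ hX.ne', hden, mul_rpow (by positivity) hρ0.le,
    div_rpow hx0.le hX.le α, div_rpow hlogx.le hL.le γ]
  field_simp

lemma mathieuSeries_eq_mul_tsum_mathieuKernel (hβ : 0 < β) (hr : 1 < r) :
    mathieuSeries α β γ δ μ r =
      mathieuScale β δ r ^ (α + 1) * mathieuLogScale β r ^ γ / (r ^ 2) ^ (μ + 1) *
        ((mathieuScale β δ r)⁻¹ * ∑' n : ℕ,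
          mathieuKernel α β γ δ (μ + 1) (mathieuScale β δ r) (mathieuLogScale β r)
            ((n + 2) / mathieuScale β δ r)) := by
  have hX : 0 < mathieuScale β δ r := mathieuScale_pos hβ hr
  have hterm (n : ℕ) := rpow_mul_log_rpow_div_eq_mul_mathieuKernel (α := α) (γ := γ) (q := μ + 1) hX
    (mathieuLogScale_pos hβ hr) (by linarith [n.cast_nonneg (α := ℝ)] : 1 < (n : ℝ) + 2)
    (mathieuScale_rpow_mul_mathieuLogScale_rpow hβ hr)
  rw [mathieuSeries, tsum_congr hterm, tsum_mul_left, rpow_add_one hX.ne']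
  field_simp

lemma mathieuScale_rpow_mul_mathieuLogScale_rpow_div (hβ : 0 < β) (hr : 1 < r)
    (hκ : δ * (α + 1) / β - γ = κ) :
    mathieuScale β δ r ^ (α + 1) * mathieuLogScale β r ^ γ / (r ^ 2) ^ (μ + 1) =
      (β / 2) ^ κ * (r ^ (2 * (α + 1) / β - 2 * (μ + 1)) * log r ^ (-κ)) := by
  have hr0 : 0 < r := one_pos.trans hr
  have hlog : mathieuLogScale β r ^ (-(δ * (α + 1) / β)) * mathieuLogScale β r ^ γ =
      (β / 2) ^ κ * log r ^ (-κ) := by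
    rw [← rpow_add (mathieuLogScale_pos hβ hr), neg_add_eq_sub, ← neg_sub, hκ, mathieuLogScale,
      mul_rpow (by positivity) (log_pos hr).le, rpow_neg (by positivity),
      ← inv_rpow (by positivity), inv_div]
  have hr2 : (r ^ 2) ^ (μ + 1) = r ^ (2 * (μ + 1)) := by rw [← rpow_two, ← rpow_mul hr0.le]
  rw [mathieuScale_rpow hβ hr, mul_assoc, hlog, hr2, rpow_sub hr0]
  ring

lemma tendsto_mathieuSeries_div (hα : -1 < α) (hβ : 0 < β) (hconv : α - β * (μ + 1) < -1)
    (hκ : δ * (α + 1) / β - γ = κ) :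
    Tendsto
      (fun r => mathieuSeries α β γ δ μ r /
        (r ^ (2 * (α + 1) / β - 2 * (μ + 1)) * log r ^ (-κ)))
      atTop (𝓝 ((β / 2) ^ κ * (beta ((α + 1) / β) (μ + 1 - (α + 1) / β) / β))) := by
  have hq : α + 1 < β * (μ + 1) := by linarith
  have hlim := (tendsto_inv_mul_tsum_mathieuKernel γ δ hα hβ hq
    (tendsto_mathieuScale hβ) (isEquivalent_log_mathieuScale (δ := δ) hβ)).const_mul ((β / 2) ^ κ)
  refine hlim.congr' ?_
  filter_upwards [eventually_gt_atTop 1] with r hr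
  have hlogr : 0 < log r := log_pos hr
  rw [mathieuSeries_eq_mul_tsum_mathieuKernel hβ hr,
    mathieuScale_rpow_mul_mathieuLogScale_rpow_div hβ hr hκ]
  field_simp

theorem mathieu_power_log_asymptotics_int_general (hα : -1 < α) (hβ : 0 < β)
    (hconv : α - β * (μ + 1) < -1) (hκ : δ * (α + 1) / β - γ = κ) :
    Tendsto
      (fun r => mathieuSeries α β γ δ μ r /
        (β ^ (κ - 1) * Gamma (-((α + 1) / β) + μ + 1) * Gamma ((α + 1) / β) /
            (2 ^ κ * Gamma (μ + 1)) *
          r ^ (2 * (α + 1) / β - 2 * (μ + 1)) * log r ^ (-κ)))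
      atTop (𝓝 1) := by
  have hs : 0 < (α + 1) / β := div_pos (by linarith) hβ
  have hv : 0 < μ + 1 - (α + 1) / β := by rw [sub_pos, div_lt_iff₀' hβ]; linarith
  have hbeta : 0 < beta ((α + 1) / β) (μ + 1 - (α + 1) / β) := beta_pos hs hv
  have hC : β ^ (κ - 1) * Gamma (-((α + 1) / β) + μ + 1) * Gamma ((α + 1) / β) /
      (2 ^ κ * Gamma (μ + 1)) = (β / 2) ^ κ * (beta ((α + 1) / β) (μ + 1 - (α + 1) / β) / β) := by
    rw [beta, add_sub_cancel, add_assoc, neg_add_eq_sub, rpow_sub_one hβ.ne',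
      div_rpow hβ.le two_pos.le]
    ring
  have hC0 : (β / 2) ^ κ * (beta ((α + 1) / β) (μ + 1 - (α + 1) / β) / β) ≠ 0 := by positivity
  have hlim := (tendsto_mathieuSeries_div hα hβ hconv hκ).div_const
    ((β / 2) ^ κ * (beta ((α + 1) / β) (μ + 1 - (α + 1) / β) / β))
  rw [div_self hC0] at hlim
  refine hlim.congr fun r => ?_
  rw [hC, div_div]
  ring

end Series

end

/-- Theorem 1.1 (integer case): first-order asymptotics of the
power-logarithmic Mathieu-type series when `m = δ(α+1)/β − γ` is a positive
integer. -/
theorem mathieu_power_log_asymptotics_int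
    (α β γ δ μ : ℝ) (hα : 0 < α) (hβ : 0 < β) (hμ : 0 ≤ μ)
    (hconv : α - β * (μ + 1) < -1)
    (m : ℕ) (hm : 0 < m) (hmeq : δ * (α + 1) / β - γ = (m : ℝ)) :
    Filter.Tendsto
      (fun r : ℝ =>
        (∑' n : ℕ, ((n : ℝ) + 2) ^ α * (Real.log ((n : ℝ) + 2)) ^ γ /
          (((n : ℝ) + 2) ^ β * (Real.log ((n : ℝ) + 2)) ^ δ + r ^ 2) ^ (μ + 1)) /
        ((β ^ (m - 1) * Real.Gamma (-((α + 1) / β) + μ + 1) *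
            Real.Gamma ((α + 1) / β) / (2 ^ m * Real.Gamma (μ + 1))) *
          r ^ (2 * (α + 1) / β - 2 * (μ + 1)) *
          (Real.log r) ^ (-(m : ℝ))))
      Filter.atTop (nhds 1) := by
  simpa only [mathieuSeries, ← Nat.cast_pred hm, rpow_natCast] using
    mathieu_power_log_asymptotics_int_general (by linarith) hβ hconv hmeq
end

section
/- Assume the inverse Gamma function expansion: there exist constants C₀ > 0 and x₀ > 0 such that for all x ≥ x₀, |G(x) − u₀(x) − 1/2| ≤ C₀ / log(x/√(2π)), where G(x) is the unique y ≥ 2 with Γ(y) = x and u₀(x) is the unique u ≥ e with u·log u − u = log(x/√(2π)). Let α, β > 0, μ ≥ 0 with α − β(μ+1) < 0, and 0 < d₁ < d₂ < 1. For r large, set g(r) := G(r^{2/β}), let {g(r)} denote the fractional part of g(r), and define m(r) := min( α·{g(r)}, (β(μ+1) − α)·(1 − {g(r)}) ). Then there exist constants C > 0 and r₀ such that for all r ≥ r₀ with d₁ ≤ {g(r)} ≤ d₂, one has | log S^!_{α,β,μ}(r) + 2(μ+1 − α/β)·log r + m(r)·log log r | ≤ C · log log log r. -/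
open Filter Real

/-!
Put `x = r ^ (2 / β)`, so that `r ^ 2 = x ^ β`, and `γ = β (μ + 1) - α`. Up to bounded factors, the
`n`-th term of the series is `(n!) ^ α / x ^ (α + γ)` while `n! ≤ x` and `(n!) ^ (-γ)` once
`n! ≥ x`. Both regimes are geometrically dominated by their term next to the crossover, so the
series has the order of the larger of the two terms with `k! ≤ x ≤ (k + 1)!`. Writing `x = Γ(y)`
with `y = k + 1 + t`, log-convexity of `Γ` gives `log x - log k! = t log y + O(1)` and
`log (k + 1)! - log x = (1 - t) log y + O(1)`. Finally, `Γ(y)` lies between a geometric sequence and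
`y ^ y`, hence `log y = log log x + O(log log log x)`.
-/

/-- `a` is positive and grows at least geometrically with ratio `ρ > 1`. The factor `c` makes room
for sequences such as `n!`, whose ratio of consecutive terms reaches `ρ` only after a few steps. -/
structure GrowsGeometrically (a : ℕ → ℝ) (c ρ : ℝ) : Prop where
  one_lt_ratio : 1 < ρ
  pos : ∀ n, 0 < a n
  mul_pow_le : ∀ m n, a m * ρ ^ n ≤ c * a (m + n)

namespace GrowsGeometrically

variable {a : ℕ → ℝ} {c ρ : ℝ}

lemma const_pos (h : GrowsGeometrically a c ρ) : 0 < c := by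
  have hle : a 0 ≤ c * a 0 := by simpa using h.mul_pow_le 0 0
  exact pos_of_mul_pos_left ((h.pos 0).trans_le hle) (h.pos 0).le

lemma inv_ratio_pos (h : GrowsGeometrically a c ρ) : 0 < ρ⁻¹ :=
  inv_pos.2 (one_pos.trans h.one_lt_ratio)

lemma inv_ratio_lt_one (h : GrowsGeometrically a c ρ) : ρ⁻¹ < 1 :=
  inv_lt_one_of_one_lt₀ h.one_lt_ratio

lemma rpow (h : GrowsGeometrically a c ρ) {p : ℝ} (hp : 0 < p) :
    GrowsGeometrically (fun n => a n ^ p) (c ^ p) (ρ ^ p) where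
  one_lt_ratio := one_lt_rpow h.one_lt_ratio hp
  pos n := rpow_pos_of_pos (h.pos n) p
  mul_pow_le m n := by
    have hρ : 0 < ρ := one_pos.trans h.one_lt_ratio
    have ham := h.pos m
    rw [rpow_pow_comm hρ.le, ← mul_rpow ham.le (by positivity),
      ← mul_rpow h.const_pos.le (h.pos _).le]
    exact rpow_le_rpow (by positivity) (h.mul_pow_le m n) hp.le

lemma le_mul_inv_pow (h : GrowsGeometrically a c ρ) (m n : ℕ) :
    a m ≤ c * a (m + n) * ρ⁻¹ ^ n := by
  have hρ : 0 < ρ := one_pos.trans h.one_lt_ratio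
  rw [inv_pow, ← div_eq_mul_inv, le_div_iff₀ (by positivity)]
  exact h.mul_pow_le m n

lemma inv_le_mul_inv_pow (h : GrowsGeometrically a c ρ) (m n : ℕ) :
    (a (m + n))⁻¹ ≤ c * (a m)⁻¹ * ρ⁻¹ ^ n := by
  have ham := h.pos m
  have hamn := h.pos (m + n)
  rw [inv_le_iff_one_le_mul₀ hamn]
  calc 1 = a m * (a m)⁻¹ := (mul_inv_cancel₀ ham.ne').symm
    _ ≤ c * a (m + n) * ρ⁻¹ ^ n * (a m)⁻¹ := by gcongr; exact h.le_mul_inv_pow m n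
    _ = c * (a m)⁻¹ * ρ⁻¹ ^ n * a (m + n) := by ring

lemma sum_range_succ_le (h : GrowsGeometrically a c ρ) (k : ℕ) :
    ∑ n ∈ Finset.range (k + 1), a n ≤ c * (1 - ρ⁻¹)⁻¹ * a k := by
  have hc := h.const_pos
  have hak := h.pos k
  calc ∑ n ∈ Finset.range (k + 1), a n
      = ∑ j ∈ Finset.range (k + 1), a (k - j) := (Finset.sum_range_reflect a (k + 1)).symm
    _ ≤ ∑ j ∈ Finset.range (k + 1), c * a k * ρ⁻¹ ^ j := by
      refine Finset.sum_le_sum fun j hj => ?_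
      have hjk : k - j + j = k := Nat.sub_add_cancel (Nat.lt_succ_iff.1 (Finset.mem_range.1 hj))
      simpa only [hjk] using h.le_mul_inv_pow (k - j) j
    _ = c * a k * ∑ j ∈ Finset.range (k + 1), ρ⁻¹ ^ j := (Finset.mul_sum ..).symm
    _ ≤ c * a k * (1 - ρ⁻¹)⁻¹ := by
      have hρ := h.inv_ratio_pos
      rw [← tsum_geometric_of_lt_one hρ.le h.inv_ratio_lt_one]
      gcongr
      exact (summable_geometric_of_lt_one hρ.le h.inv_ratio_lt_one).sum_le_tsum _
        fun _ _ => by positivity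
    _ = c * (1 - ρ⁻¹)⁻¹ * a k := by ring

lemma summable_inv_add (h : GrowsGeometrically a c ρ) (k : ℕ) :
    Summable fun n => (a (k + n))⁻¹ :=
  .of_nonneg_of_le (fun _ => (inv_pos.2 (h.pos _)).le) (h.inv_le_mul_inv_pow k)
    ((summable_geometric_of_lt_one h.inv_ratio_pos.le h.inv_ratio_lt_one).mul_left _)

lemma tsum_inv_add_le (h : GrowsGeometrically a c ρ) (k : ℕ) :
    ∑' n, (a (k + n))⁻¹ ≤ c * (1 - ρ⁻¹)⁻¹ * (a k)⁻¹ := by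
  have hgeom := summable_geometric_of_lt_one h.inv_ratio_pos.le h.inv_ratio_lt_one
  calc ∑' n, (a (k + n))⁻¹
      ≤ ∑' n, c * (a k)⁻¹ * ρ⁻¹ ^ n :=
        (h.summable_inv_add k).tsum_le_tsum (h.inv_le_mul_inv_pow k) (hgeom.mul_left _)
    _ = c * (1 - ρ⁻¹)⁻¹ * (a k)⁻¹ := by
      rw [tsum_mul_left, tsum_geometric_of_lt_one h.inv_ratio_pos.le h.inv_ratio_lt_one]
      ring

end GrowsGeometrically

section MathieuTerm

/-- The Mathieu term `A ^ α / (A ^ β + r ^ 2) ^ s`, with the parameter normalised to `r ^ 2 = x ^ β`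
so that the crossover between the two regimes of the denominator is at `A = x`. -/
noncomputable def mathieuTerm (α β s x A : ℝ) : ℝ :=
  A ^ α / (A ^ β + x ^ β) ^ s

variable {α β s x A : ℝ}

lemma mathieuTerm_pos (hx : 0 < x) (hA : 0 < A) : 0 < mathieuTerm α β s x A := by
  unfold mathieuTerm
  positivity

lemma mathieuTerm_le_rpow_div_rpow (hx : 0 < x) (hA : 0 < A) (hs : 0 ≤ s) :
    mathieuTerm α β s x A ≤ A ^ α / x ^ (β * s) := by
  rw [mathieuTerm, rpow_mul hx.le]
  gcongr
  exact le_add_of_nonneg_left (by positivity)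

lemma mathieuTerm_le_inv_rpow (hx : 0 < x) (hA : 0 < A) (hs : 0 ≤ s) :
    mathieuTerm α β s x A ≤ (A ^ (β * s - α))⁻¹ := by
  rw [mathieuTerm, rpow_sub hA, rpow_mul hA.le, inv_div]
  gcongr
  exact le_add_of_nonneg_right (by positivity)

lemma rpow_div_rpow_le_two_rpow_mul_mathieuTerm (hA : 0 < A) (hβ : 0 ≤ β) (hs : 0 ≤ s)
    (hAx : A ≤ x) : A ^ α / x ^ (β * s) ≤ 2 ^ s * mathieuTerm α β s x A := by
  have hx : 0 < x := hA.trans_le hAx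
  have hden : (A ^ β + x ^ β) ^ s ≤ 2 ^ s * x ^ (β * s) := by
    rw [rpow_mul hx.le, ← mul_rpow two_pos.le (by positivity)]
    gcongr
    linarith [rpow_le_rpow hA.le hAx hβ]
  rw [mathieuTerm, ← mul_div_assoc, div_le_div_iff₀ (by positivity) (by positivity),
    mul_right_comm, mul_comm (A ^ α)]
  gcongr

lemma inv_rpow_le_two_rpow_mul_mathieuTerm (hx : 0 < x) (hβ : 0 ≤ β) (hs : 0 ≤ s)
    (hxA : x ≤ A) : (A ^ (β * s - α))⁻¹ ≤ 2 ^ s * mathieuTerm α β s x A := by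
  have hA : 0 < A := hx.trans_le hxA
  have hden : (A ^ β + x ^ β) ^ s ≤ 2 ^ s * A ^ (β * s) := by
    rw [rpow_mul hA.le, ← mul_rpow two_pos.le (by positivity)]
    gcongr
    linarith [rpow_le_rpow hx.le hxA hβ]
  rw [mathieuTerm, rpow_sub hA, inv_div, ← mul_div_assoc,
    div_le_div_iff₀ (by positivity) (by positivity), mul_right_comm, mul_comm (A ^ α)]
  gcongr

lemma log_max_rpow_div_rpow_inv_rpow {B : ℝ} (hx : 0 < x) (hA : 0 < A) (hB : 0 < B) :
    log (max (A ^ α / x ^ (β * s)) (B ^ (β * s - α))⁻¹) =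
      -((β * s - α) * log x +
        min (α * (log x - log A)) ((β * s - α) * (log B - log x))) := by
  have hlogA : log (A ^ α / x ^ (β * s)) =
      -((β * s - α) * log x + α * (log x - log A)) := by
    rw [log_div (by positivity) (by positivity), log_rpow hA, log_rpow hx]
    ring
  have hlogB : log (B ^ (β * s - α))⁻¹ =
      -((β * s - α) * log x + (β * s - α) * (log B - log x)) := by
    rw [log_inv, log_rpow hB]
    ring
  have hA' : 0 < A ^ α / x ^ (β * s) := by positivity
  have hB' : 0 < (B ^ (β * s - α))⁻¹ := by positivity
  rw [strictMonoOn_log.monotoneOn.map_max hA' hB', hlogA, hlogB, max_neg_neg, min_add_add_left]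

end MathieuTerm

namespace GrowsGeometrically

variable {a : ℕ → ℝ} {c ρ α β s x : ℝ}

lemma summable_mathieuTerm (h : GrowsGeometrically a c ρ) (hs : 0 ≤ s) (hαβ : α < β * s)
    (hx : 0 < x) : Summable fun n => mathieuTerm α β s x (a n) :=
  .of_nonneg_of_le (fun n => (mathieuTerm_pos hx (h.pos n)).le)
    (fun n => mathieuTerm_le_inv_rpow hx (h.pos n) hs)
    (by simpa using (h.rpow (sub_pos.2 hαβ)).summable_inv_add 0)

lemma tsum_mathieuTerm_le (h : GrowsGeometrically a c ρ) (hα : 0 < α) (hs : 0 ≤ s)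
    (hαβ : α < β * s) (hx : 0 < x) (k : ℕ) :
    ∑' n, mathieuTerm α β s x (a n) ≤
      c ^ α * (1 - (ρ ^ α)⁻¹)⁻¹ * (a k ^ α / x ^ (β * s)) +
        c ^ (β * s - α) * (1 - (ρ ^ (β * s - α))⁻¹)⁻¹ * (a (k + 1) ^ (β * s - α))⁻¹ := by
  have hsum := h.summable_mathieuTerm hs hαβ hx
  rw [← hsum.sum_add_tsum_nat_add (k + 1)]
  apply add_le_add
  · calc ∑ n ∈ Finset.range (k + 1), mathieuTerm α β s x (a n)
        ≤ ∑ n ∈ Finset.range (k + 1), a n ^ α / x ^ (β * s) :=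
          Finset.sum_le_sum fun n _ => mathieuTerm_le_rpow_div_rpow hx (h.pos n) hs
      _ = (∑ n ∈ Finset.range (k + 1), a n ^ α) / x ^ (β * s) := (Finset.sum_div ..).symm
      _ ≤ c ^ α * (1 - (ρ ^ α)⁻¹)⁻¹ * a k ^ α / x ^ (β * s) := by
        gcongr
        exact (h.rpow hα).sum_range_succ_le k
      _ = _ := mul_div_assoc ..
  · simp only [add_comm _ (k + 1)]
    have hγ := h.rpow (sub_pos.2 hαβ)
    calc ∑' n, mathieuTerm α β s x (a (k + 1 + n))
        ≤ ∑' n, (a (k + 1 + n) ^ (β * s - α))⁻¹ :=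
          Summable.tsum_le_tsum (fun n => mathieuTerm_le_inv_rpow hx (h.pos _) hs)
            (hsum.comp_injective (add_right_injective (k + 1))) (hγ.summable_inv_add (k + 1))
      _ ≤ _ := hγ.tsum_inv_add_le (k + 1)

lemma max_le_two_rpow_mul_tsum_mathieuTerm (h : GrowsGeometrically a c ρ) (hβ : 0 ≤ β)
    (hs : 0 ≤ s) (hαβ : α < β * s) {k : ℕ} (hkx : a k ≤ x) (hxk : x ≤ a (k + 1)) :
    max (a k ^ α / x ^ (β * s)) (a (k + 1) ^ (β * s - α))⁻¹ ≤
      2 ^ s * ∑' n, mathieuTerm α β s x (a n) := by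
  have hx : 0 < x := (h.pos k).trans_le hkx
  have hterm (n : ℕ) :
      2 ^ s * mathieuTerm α β s x (a n) ≤ 2 ^ s * ∑' n, mathieuTerm α β s x (a n) := by
    gcongr
    exact (h.summable_mathieuTerm hs hαβ hx).le_tsum n
      fun j _ => (mathieuTerm_pos hx (h.pos j)).le
  exact max_le
    ((rpow_div_rpow_le_two_rpow_mul_mathieuTerm (h.pos k) hβ hs hkx).trans (hterm k))
    ((inv_rpow_le_two_rpow_mul_mathieuTerm hx hβ hs hxk).trans (hterm (k + 1)))

lemma exists_tsum_mathieuTerm_le_mul_max (h : GrowsGeometrically a c ρ) (hα : 0 < α) (hs : 0 ≤ s)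
    (hαβ : α < β * s) : ∃ K > 0, ∀ x > 0, ∀ k : ℕ, ∑' n, mathieuTerm α β s x (a n) ≤
      K * max (a k ^ α / x ^ (β * s)) (a (k + 1) ^ (β * s - α))⁻¹ := by
  have hfactor_pos {p : ℝ} (hp : 0 < p) : 0 < c ^ p * (1 - (ρ ^ p)⁻¹)⁻¹ :=
    mul_pos (h.rpow hp).const_pos (inv_pos.2 (sub_pos.2 (h.rpow hp).inv_ratio_lt_one))
  have hK₁ := hfactor_pos hα
  have hK₂ := hfactor_pos (sub_pos.2 hαβ)
  refine ⟨_, add_pos hK₁ hK₂, fun x hx k => (h.tsum_mathieuTerm_le hα hs hαβ hx k).trans ?_⟩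
  rw [add_mul]
  gcongr
  exacts [le_max_left _ _, le_max_right _ _]

theorem exists_abs_log_tsum_mathieuTerm_add_le (h : GrowsGeometrically a c ρ) (hα : 0 < α)
    (hβ : 0 < β) (hαβ : α < β * s) :
    ∃ C, ∀ x, ∀ k : ℕ, a k ≤ x → x ≤ a (k + 1) →
      |log (∑' n, mathieuTerm α β s x (a n)) + (β * s - α) * log x +
        min (α * (log x - log (a k))) ((β * s - α) * (log (a (k + 1)) - log x))| ≤ C := by
  have hs : 0 ≤ s := (pos_of_mul_pos_right (hα.trans hαβ) hβ.le).le
  obtain ⟨K, hK, hupper⟩ := h.exists_tsum_mathieuTerm_le_mul_max hα hs hαβ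
  refine ⟨max (log K) (s * log 2), fun x k hkx hxk => ?_⟩
  have hx : 0 < x := (h.pos k).trans_le hkx
  have hupper := hupper x hx k
  have hlower := h.max_le_two_rpow_mul_tsum_mathieuTerm hβ.le hs hαβ hkx hxk
  have hlogM := log_max_rpow_div_rpow_inv_rpow (α := α) (β := β) (s := s) hx (h.pos k)
    (h.pos (k + 1))
  set S := ∑' n, mathieuTerm α β s x (a n)
  set M := max (a k ^ α / x ^ (β * s)) (a (k + 1) ^ (β * s - α))⁻¹
  have hM : 0 < M := lt_max_of_lt_right (inv_pos.2 (rpow_pos_of_pos (h.pos _) _))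
  have hS : 0 < S := pos_of_mul_pos_right (hM.trans_le hlower) (by positivity)
  have hlog_upper : log S ≤ log K + log M := by
    rw [← log_mul hK.ne' hM.ne']
    exact log_le_log hS hupper
  have hlog_lower : log M ≤ s * log 2 + log S := by
    rw [← log_rpow two_pos, ← log_mul (by positivity) hS.ne']
    exact log_le_log hM hlower
  rw [abs_le]
  constructor
  · linarith [le_max_right (log K) (s * log 2)]
  · linarith [le_max_left (log K) (s * log 2)]

end GrowsGeometrically

lemma growsGeometrically_factorial : GrowsGeometrically (fun n => (n.factorial : ℝ)) 2 2 where
  one_lt_ratio := one_lt_two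
  pos n := by positivity
  mul_pow_le m n := by
    suffices m.factorial * 2 ^ n ≤ 2 * (m + n).factorial by exact_mod_cast this
    induction n with
    | zero => simpa using Nat.le_mul_of_pos_left _ two_pos
    | succ n ih =>
      obtain hzero | hpos := Nat.eq_zero_or_pos (m + n)
      · obtain ⟨rfl, rfl⟩ := Nat.add_eq_zero_iff.1 hzero
        simp
      · calc m.factorial * 2 ^ (n + 1) = 2 * (m.factorial * 2 ^ n) := by ring
          _ ≤ (m + n + 1) * (2 * (m + n).factorial) := Nat.mul_le_mul (by omega) ih
          _ = 2 * (m + (n + 1)).factorial := by rw [← add_assoc, Nat.factorial_succ]; ring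

lemma log_Gamma_add_one {x : ℝ} (hx : 0 < x) : log (Gamma (x + 1)) = log (Gamma x) + log x := by
  rw [Gamma_add_one hx.ne', log_mul hx.ne' (Gamma_pos_of_pos hx).ne', add_comm]

lemma log_Gamma_add_le {x t : ℝ} (hx : 0 < x) (ht₀ : 0 ≤ t) (ht₁ : t ≤ 1) :
    log (Gamma (x + t)) ≤ log (Gamma x) + t * log x := by
  have hconv := convexOn_log_Gamma.2 (Set.mem_Ioi.2 hx) (Set.mem_Ioi.2 (add_pos hx one_pos))
    (sub_nonneg.2 ht₁) ht₀ (sub_add_cancel 1 t)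
  have hpoint : (1 - t) * x + t * (x + 1) = x + t := by ring
  simp only [smul_eq_mul, Function.comp_apply, hpoint, log_Gamma_add_one hx] at hconv
  linarith

lemma log_Gamma_add_one_le {x t : ℝ} (hx : 0 < x) (ht₀ : 0 ≤ t) (ht₁ : t ≤ 1) :
    log (Gamma (x + 1)) ≤ log (Gamma (x + t)) + (1 - t) * log (x + t) := by
  have hbound := log_Gamma_add_le (x := x + t) (t := 1 - t) (by linarith) (by linarith)
    (by linarith)
  rwa [add_add_sub_cancel] at hbound

lemma abs_log_Gamma_add_sub_le {x t : ℝ} (hx : 1 ≤ x) (ht₀ : 0 ≤ t) (ht₁ : t ≤ 1) :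
    |log (Gamma (x + t)) - log (Gamma x) - t * log (x + t)| ≤ log 2 ∧
      |log (Gamma (x + 1)) - log (Gamma (x + t)) - (1 - t) * log (x + t)| ≤ log 2 := by
  have hx₀ : 0 < x := one_pos.trans_le hx
  have hle : log x ≤ log (x + t) := log_le_log hx₀ (by linarith)
  have hge : log (x + t) ≤ log 2 + log x := by
    rw [← log_mul two_ne_zero hx₀.ne']
    exact log_le_log (by linarith) (by linarith)
  have hupper := log_Gamma_add_le hx₀ ht₀ ht₁
  have hlower := log_Gamma_add_one_le hx₀ ht₀ ht₁
  have hstep := log_Gamma_add_one hx₀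
  have hgap : 0 ≤ t * (log (x + t) - log x) := mul_nonneg ht₀ (sub_nonneg.2 hle)
  simp only [abs_le]
  refine ⟨⟨?_, ?_⟩, ?_, ?_⟩ <;> linarith

lemma Gamma_nat_add_one_add_mem_Icc_factorial {k : ℕ} {t : ℝ} (hk : 1 ≤ k) (ht₀ : 0 ≤ t)
    (ht₁ : t ≤ 1) : Gamma (k + 1 + t) ∈ Set.Icc (k.factorial : ℝ) (k + 1).factorial := by
  have hk' : (1 : ℝ) ≤ k := by exact_mod_cast hk
  rw [← Gamma_nat_eq_factorial, ← Gamma_nat_eq_factorial, Nat.cast_succ]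
  have hmono := Gamma_strictMonoOn_Ici.monotoneOn
  exact ⟨hmono (Set.mem_Ici.2 (by linarith)) (Set.mem_Ici.2 (by linarith)) (by linarith),
    hmono (Set.mem_Ici.2 (by linarith)) (Set.mem_Ici.2 (by linarith)) (by linarith)⟩

lemma exists_factorial_le_Gamma_le_factorial_succ {y : ℝ} (hy : 2 ≤ y) :
    ∃ k : ℕ, y = k + 1 + Int.fract y ∧
      Gamma y ∈ Set.Icc (k.factorial : ℝ) (k + 1).factorial := by
  have hfloor : 2 ≤ ⌊y⌋ := Int.le_floor.2 (by exact_mod_cast hy)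
  obtain ⟨k, hk⟩ := Int.eq_ofNat_of_zero_le (show 0 ≤ ⌊y⌋ - 1 by omega)
  have hcast : (⌊y⌋ : ℝ) = k + 1 := by exact_mod_cast (by omega : ⌊y⌋ = k + 1)
  have hyk : y = k + 1 + Int.fract y := by rw [← hcast, Int.floor_add_fract]
  have hΓ := Gamma_nat_add_one_add_mem_Icc_factorial (show 1 ≤ k by omega) (Int.fract_nonneg y)
    (Int.fract_lt_one y).le
  rw [← hyk] at hΓ
  exact ⟨k, hyk, hΓ⟩

lemma log_Gamma_le_mul_log {y : ℝ} (hy : 2 ≤ y) : log (Gamma y) ≤ y * log y := by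
  obtain ⟨k, hyk, hΓ⟩ := exists_factorial_le_Gamma_le_factorial_succ hy
  have hky : (k : ℝ) + 1 ≤ y := by linarith [Int.fract_nonneg y]
  have hfact : Gamma y ≤ ((k : ℝ) + 1) ^ (k + 1) :=
    hΓ.2.trans (by exact_mod_cast Nat.factorial_le_pow (k + 1))
  calc log (Gamma y) ≤ log (((k : ℝ) + 1) ^ (k + 1)) :=
        log_le_log (Gamma_pos_of_pos (by linarith)) hfact
    _ = ((k : ℝ) + 1) * log (k + 1) := by rw [log_pow]; push_cast; rfl
    _ ≤ y * log y :=
      mul_le_mul hky (log_le_log (by positivity) hky)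
        (log_nonneg (by linarith [k.cast_nonneg (α := ℝ)])) (by linarith)

lemma le_three_add_two_mul_log_Gamma {y : ℝ} (hy : 2 ≤ y) : y ≤ 3 + 2 * log (Gamma y) := by
  obtain ⟨k, hyk, hΓ⟩ := exists_factorial_le_Gamma_le_factorial_succ hy
  have ht₁ := Int.fract_lt_one y
  have hpow : (2 : ℝ) ^ k ≤ 2 * Gamma y :=
    calc (2 : ℝ) ^ k ≤ 2 * k.factorial := by
          simpa using growsGeometrically_factorial.mul_pow_le 0 k
      _ ≤ 2 * Gamma y := by
          gcongr
          exact hΓ.1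
  have hlog := log_le_log (by positivity) hpow
  rw [log_pow, log_mul two_ne_zero (Gamma_pos_of_pos (by linarith)).ne'] at hlog
  have hk : (1 : ℝ) ≤ k := Nat.one_le_cast.2 (Nat.cast_pos (α := ℝ).1 (by linarith))
  nlinarith [log_two_gt_d9]

lemma abs_log_log_Gamma_sub_log_le {y : ℝ} (hy : 2 ≤ y) (hlog : 3 ≤ log (Gamma y)) :
    |log (log (Gamma y)) - log y| ≤ 2 + log (2 + log (log (Gamma y))) := by
  have hlogy : 0 < log y := log_pos (by linarith)
  have hlow : log y ≤ 2 + log (log (Gamma y)) := by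
    have hle : y ≤ 3 * log (Gamma y) := by linarith [le_three_add_two_mul_log_Gamma hy]
    have hlog_le := log_le_log (by linarith) hle
    rw [log_mul three_ne_zero (by linarith)] at hlog_le
    linarith [log_le_sub_one_of_pos (x := 3) three_pos]
  have hup : log (log (Gamma y)) ≤ log y + log (log y) := by
    rw [← log_mul (by linarith) hlogy.ne']
    exact log_le_log (by linarith) (log_Gamma_le_mul_log hy)
  have hloglog : log (log y) ≤ log (2 + log (log (Gamma y))) := log_le_log hlogy hlow
  have hnonneg : 0 ≤ log (2 + log (log (Gamma y))) :=
    log_nonneg (by linarith [log_nonneg (show 1 ≤ log (Gamma y) by linarith)])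
  rw [abs_le]
  constructor <;> linarith

lemma exists_eventually_abs_log_log_sub_log_le {p : ℝ} (hp : 0 < p) :
    ∃ C > 0, ∀ᶠ r : ℝ in atTop, ∀ y ≥ 2, Gamma y = r ^ p →
      |log (log r) - log y| ≤ C * log (log (log r)) := by
  refine ⟨4 + |log p|, by positivity, ?_⟩
  have hloglog : Tendsto (fun r : ℝ => log (log r)) atTop atTop :=
    tendsto_log_atTop.comp tendsto_log_atTop
  have hlogloglog : Tendsto (fun r : ℝ => log (log (log r))) atTop atTop :=
    tendsto_log_atTop.comp hloglog
  filter_upwards [eventually_gt_atTop 1, tendsto_log_atTop.eventually_ge_atTop (3 / p),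
    hloglog.eventually_ge_atTop (2 + |log p|),
    hlogloglog.eventually_ge_atTop 1] with r hr hlog hloglog hlogloglog y hy hyr
  have hlogr : 0 < log r := log_pos hr
  have hlogx : log (Gamma y) = p * log r := by rw [hyr, log_rpow (by linarith)]
  have hloglogx : log (log (Gamma y)) = log p + log (log r) := by
    rw [hlogx, log_mul hp.ne' hlogr.ne']
  have hsize := abs_log_log_Gamma_sub_log_le hy (by rwa [hlogx, mul_comm, ← div_le_iff₀ hp])
  rw [hloglogx] at hsize
  have hbound : log (2 + (log p + log (log r))) ≤ 1 + log (log (log r)) := by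
    have hdouble : log (2 + (log p + log (log r))) ≤ log (2 * log (log r)) :=
      log_le_log (by linarith [neg_abs_le (log p)]) (by linarith [le_abs_self (log p)])
    rw [log_mul two_ne_zero (by linarith [abs_nonneg (log p)])] at hdouble
    linarith [log_two_lt_d9]
  have htri : |log (log r) - log y| ≤ |log p + log (log r) - log y| + |log p| := by
    simpa [add_sub_assoc] using abs_sub (log p + log (log r) - log y) (log p)
  have hscale := le_mul_of_one_le_right (abs_nonneg (log p)) hlogloglog
  linarith

theorem exists_abs_log_tsum_mathieuTerm_factorial_add_le {α β s : ℝ} (hα : 0 < α) (hβ : 0 < β)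
    (hαβ : α < β * s) :
    ∃ C > 0, ∀ y ≥ 2,
      |log (∑' n : ℕ, mathieuTerm α β s (Gamma y) n.factorial) + (β * s - α) * log (Gamma y) +
        min (α * Int.fract y) ((β * s - α) * (1 - Int.fract y)) * log y| ≤ C := by
  obtain ⟨C, hC⟩ :=
    growsGeometrically_factorial.exists_abs_log_tsum_mathieuTerm_add_le hα hβ hαβ
  have hβs : 0 < β * s := hα.trans hαβ
  refine ⟨|C| + β * s * log 2, by positivity, fun y hy => ?_⟩
  obtain ⟨k, hyk, hΓ⟩ := exists_factorial_le_Gamma_le_factorial_succ hy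
  have ht₀ := Int.fract_nonneg y
  have ht₁ := (Int.fract_lt_one y).le
  obtain ⟨hbelow, habove⟩ :=
    abs_log_Gamma_add_sub_le (x := (k : ℝ) + 1) (by linarith [k.cast_nonneg (α := ℝ)]) ht₀ ht₁
  have hsucc : Gamma ((k : ℝ) + 1 + 1) = (k + 1).factorial := by
    exact_mod_cast Gamma_nat_eq_factorial (k + 1)
  rw [← hyk, Gamma_nat_eq_factorial] at hbelow
  rw [← hyk, hsucc] at habove
  have hmin : |min (α * Int.fract y) ((β * s - α) * (1 - Int.fract y)) * log y -
      min (α * (log (Gamma y) - log k.factorial))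
        ((β * s - α) * (log (k + 1).factorial - log (Gamma y)))| ≤ β * s * log 2 := by
    have hscale {p t D : ℝ} (hp₀ : 0 ≤ p) (hp : p ≤ β * s) (hD : |D - t * log y| ≤ log 2) :
        |p * t * log y - p * D| ≤ β * s * log 2 := by
      rw [mul_assoc, ← mul_sub, abs_mul, abs_of_nonneg hp₀, abs_sub_comm]
      gcongr
    rw [min_mul_of_nonneg _ _ (log_nonneg (by linarith))]
    exact (abs_min_sub_min_le_max ..).trans
      (max_le (hscale hα.le hαβ.le hbelow) (hscale (by linarith) (by linarith) habove))
  have hmain := (hC (Gamma y) k hΓ.1 hΓ.2).trans (le_abs_self C)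
  rw [abs_le] at hmin hmain ⊢
  constructor <;> linarith

lemma abs_min_mul_fract_le {α γ : ℝ} (hα : 0 ≤ α) (hγ : 0 ≤ γ) (y : ℝ) :
    |min (α * Int.fract y) (γ * (1 - Int.fract y))| ≤ α := by
  have ht₁ := (Int.fract_lt_one y).le
  rw [abs_of_nonneg (le_min (by positivity) (mul_nonneg hγ (sub_nonneg.2 ht₁)))]
  exact (min_le_left _ _).trans (mul_le_of_le_one_right hα ht₁)

theorem mathieu_factorial_asymptotics_general
    (α β μ : ℝ) (hα : 0 < α) (hβ : 0 < β) (hconv : α - β * (μ + 1) < 0) (G : ℝ → ℝ)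
    (hG : ∀ᶠ x in atTop, 2 ≤ G x ∧ Gamma (G x) = x) :
    ∃ C > (0 : ℝ), ∃ r₀ : ℝ, ∀ r ≥ r₀,
      |log (∑' n : ℕ, (n.factorial : ℝ) ^ α / ((n.factorial : ℝ) ^ β + r ^ 2) ^ (μ + 1))
        + 2 * (μ + 1 - α / β) * log r
        + min (α * Int.fract (G (r ^ (2 / β))))
            ((β * (μ + 1) - α) * (1 - Int.fract (G (r ^ (2 / β)))))
          * log (log r)|
        ≤ C * log (log (log r)) := by
  have hαβ : α < β * (μ + 1) := sub_neg.1 hconv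
  have hp : 0 < 2 / β := by positivity
  obtain ⟨C₁, hC₁, hseries⟩ := exists_abs_log_tsum_mathieuTerm_factorial_add_le hα hβ hαβ
  obtain ⟨C₂, hC₂, hsize⟩ := exists_eventually_abs_log_log_sub_log_le hp
  refine ⟨C₁ + α * C₂, by positivity, eventually_atTop.1 ?_⟩
  have hlogloglog : Tendsto (fun r : ℝ => log (log (log r))) atTop atTop :=
    tendsto_log_atTop.comp (tendsto_log_atTop.comp tendsto_log_atTop)
  filter_upwards [(tendsto_rpow_atTop hp).eventually hG, hsize, eventually_gt_atTop 0,
    hlogloglog.eventually_ge_atTop 1] with r hGr hsize hr hlogloglog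
  obtain ⟨hy, hΓ⟩ := hGr
  have hbound := hseries _ hy
  have hdist := hsize _ hy hΓ
  have hrβ : (r ^ (2 / β)) ^ β = r ^ 2 := by
    rw [← rpow_mul hr.le, div_mul_cancel₀ _ hβ.ne', rpow_two]
  have hlog : (β * (μ + 1) - α) * log (r ^ (2 / β)) = 2 * (μ + 1 - α / β) * log r := by
    rw [log_rpow hr]
    field_simp
  simp only [hΓ, mathieuTerm, hrβ, hlog] at hbound
  set m := min (α * Int.fract (G (r ^ (2 / β))))
    ((β * (μ + 1) - α) * (1 - Int.fract (G (r ^ (2 / β)))))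
  have hm : |m| ≤ α := abs_min_mul_fract_le hα.le (by linarith) _
  have herror : |m * (log (log r) - log (G (r ^ (2 / β))))| ≤ α * (C₂ * log (log (log r))) := by
    rw [abs_mul]
    gcongr
  have hscale := le_mul_of_one_le_right hC₁.le hlogloglog
  rw [abs_le] at hbound herror ⊢
  constructor <;> linarith

/-- Theorem 1.3: asymptotics of the factorial Mathieu-type series
`S^!_{α,β,μ}(r) = ∑_{n=0}^∞ (n!)^α / ((n!)^β + r²)^{μ+1}` on the set of good
radii `d₁ ≤ {Γ⁻¹(r^{2/β})} ≤ d₂`, conditional on the asymptotic expansion of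
the inverse Gamma function `G` in terms of `u₀`. -/
theorem mathieu_factorial_asymptotics
    (α β μ : ℝ) (hα : 0 < α) (hβ : 0 < β) (hμ : 0 ≤ μ)
    (hconv : α - β * (μ + 1) < 0)
    (d₁ d₂ : ℝ) (hd₁ : 0 < d₁) (hd₁₂ : d₁ < d₂) (hd₂ : d₂ < 1)
    (G u₀ : ℝ → ℝ)
    (hG : ∀ᶠ x in Filter.atTop, 2 ≤ G x ∧ Real.Gamma (G x) = x)
    (hu₀ : ∀ᶠ x in Filter.atTop, Real.exp 1 ≤ u₀ x ∧
      u₀ x * Real.log (u₀ x) - u₀ x = Real.log (x / Real.sqrt (2 * Real.pi)))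
    (hinv : ∃ C₀ > (0 : ℝ), ∃ x₀ > (0 : ℝ), ∀ x ≥ x₀,
      |G x - u₀ x - 1 / 2| ≤ C₀ / Real.log (x / Real.sqrt (2 * Real.pi))) :
    ∃ C > (0 : ℝ), ∃ r₀ : ℝ, ∀ r ≥ r₀,
      d₁ ≤ Int.fract (G (r ^ (2 / β))) → Int.fract (G (r ^ (2 / β))) ≤ d₂ →
      |Real.log (∑' n : ℕ,
          ((n.factorial : ℝ)) ^ α / (((n.factorial : ℝ)) ^ β + r ^ 2) ^ (μ + 1))
        + 2 * (μ + 1 - α / β) * Real.log r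
        + min (α * Int.fract (G (r ^ (2 / β))))
            ((β * (μ + 1) - α) * (1 - Int.fract (G (r ^ (2 / β)))))
          * Real.log (Real.log r)|
        ≤ C * Real.log (Real.log (Real.log r)) := by
  obtain ⟨C, hC, r₀, hbound⟩ := mathieu_factorial_asymptotics_general α β μ hα hβ hconv G hG
  exact ⟨C, hC, r₀, fun r hr _ _ => hbound r hr⟩
end

section
/- Let η, θ ∈ ℝ. There exists a function F analytic (complex differentiable) on ℂ \ (−∞, 1] such that for all complex s with Re(s) > 1, F(s) = Σ_{n=2}^∞ (log n)^η / (n (log n)^θ)^s, where the series converges absolutely for Re(s) > 1. -/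
open Filter Complex

/-!
The Weyl fractional integral `(I^w G)(s) = Γ(w)⁻¹ ∫₀^∞ t^(w-1) G(s + t) dt` multiplies `e^(-λs)` by
`λ^(-w)`, so for `Re w > 0` it turns a Dirichlet series `∑ f(n) n^(-s)` without constant term into
`∑ f(n) (log n)^(-w) n^(-s)`. The integral only sees `G` on the ray `s + [0, ∞)`, where `G` decays
exponentially, hence it makes sense and is holomorphic wherever `G` is continued to a domain stable
under rightward translation, even if `w` varies holomorphically with `s`. The condition `Re w > 0`
is removed by replacing `G` and `w` by `(-1)^k G^(k)` and `w + k`; the result does not depend on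
`k` by the identity theorem, applied with `w` fixed. The theorem is the case `G = ζ - 1`,
`w = θs - η`.
-/

open MeasureTheory Set Topology LSeries

section ParametricIntegral

variable {α E : Type*} [MeasurableSpace α] {μ : Measure α} [NormedAddCommGroup E]

theorem aestronglyMeasurable_deriv_of_eventually_param {𝕜 : Type*} [NontriviallyNormedField 𝕜]
    [NormedSpace 𝕜 E] {f : 𝕜 → α → E} {s₀ : 𝕜}
    (hmeas : ∀ᶠ s in 𝓝 s₀, AEStronglyMeasurable (f s) μ)
    (hdiff : ∀ᵐ a ∂μ, DifferentiableAt 𝕜 (f · a) s₀) :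
    AEStronglyMeasurable (fun a ↦ deriv (f · a) s₀) μ := by
  have hmeas_ne : ∀ᶠ s in 𝓝[≠] s₀, AEStronglyMeasurable (f s) μ :=
    hmeas.filter_mono nhdsWithin_le_nhds
  obtain ⟨u, hu, hmeas_u⟩ := exists_seq_forall_of_frequently hmeas_ne.frequently
  refine aestronglyMeasurable_of_tendsto_ae atTop (f := fun n a ↦ slope (f · a) s₀ (u n))
    (fun n ↦ ((hmeas_u n).sub hmeas.self_of_nhds).const_smul (u n - s₀)⁻¹) ?_
  filter_upwards [hdiff] with a ha
  exact ha.hasDerivAt.tendsto_slope.comp hu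

theorem differentiableAt_integral_of_dominated [NormedSpace ℂ E] [CompleteSpace E]
    {f : ℂ → α → E} {s₀ : ℂ} {U : Set ℂ} {bound : α → ℝ} (hU : U ∈ 𝓝 s₀)
    (hmeas : ∀ s ∈ U, AEStronglyMeasurable (f s) μ)
    (hdiff : ∀ᵐ a ∂μ, DifferentiableOn ℂ (f · a) U)
    (hbound : ∀ᵐ a ∂μ, ∀ s ∈ U, ‖f s a‖ ≤ bound a) (hint : Integrable bound μ) :
    DifferentiableAt ℂ (fun s ↦ ∫ a, f s a ∂μ) s₀ := by
  obtain ⟨R, hR, hRU⟩ := Metric.mem_nhds_iff.1 hU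
  have hclosedBall {s : ℂ} (hs : s ∈ Metric.ball s₀ (R / 2)) : Metric.closedBall s (R / 2) ⊆ U :=
    (Metric.closedBall_subset_ball' (by linarith [Metric.mem_ball.1 hs])).trans hRU
  have hdiffAt : ∀ᵐ a ∂μ, ∀ s ∈ Metric.ball s₀ (R / 2), DifferentiableAt ℂ (f · a) s := by
    filter_upwards [hdiff] with a ha s hs
    exact ha.differentiableAt
      (mem_of_superset (Metric.closedBall_mem_nhds s (by positivity)) (hclosedBall hs))
  have hs₀ : s₀ ∈ Metric.ball s₀ (R / 2) := Metric.mem_ball_self (by positivity)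
  refine (hasDerivAt_integral_of_dominated_loc_of_deriv_le
    (F' := fun s a ↦ deriv (f · a) s) (bound := fun a ↦ bound a / (R / 2))
    (Metric.ball_mem_nhds s₀ (half_pos hR)) (eventually_of_mem hU hmeas)
    (hint.mono' (hmeas s₀ (mem_of_mem_nhds hU)) ?_) ?_ ?_ (hint.div_const _)
    ?_).2.differentiableAt
  · filter_upwards [hbound] with a ha using ha s₀ (mem_of_mem_nhds hU)
  · refine aestronglyMeasurable_deriv_of_eventually_param (eventually_of_mem hU hmeas) ?_
    filter_upwards [hdiffAt] with a ha using ha s₀ hs₀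
  · filter_upwards [hbound, hdiff] with a hbound_a hdiff_a s hs
    exact norm_deriv_le_of_forall_mem_sphere_norm_le (by positivity)
      ((hdiff_a.mono (hclosedBall hs)).diffContOnCl_ball subset_rfl)
      fun z hz ↦ hbound_a z (hclosedBall hs (Metric.sphere_subset_closedBall hz))
  · filter_upwards [hdiffAt] with a ha s hs using (ha s hs).hasDerivAt

end ParametricIntegral

section WeylIntegral

theorem rpow_le_rpow_add_rpow {t x a b : ℝ} (ht : 0 < t) (hax : a ≤ x) (hxb : x ≤ b) :
    t ^ x ≤ t ^ a + t ^ b := by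
  rcases le_total t 1 with h1 | h1
  · exact (Real.rpow_le_rpow_of_exponent_ge ht h1 hax).trans
      (le_add_of_nonneg_right (Real.rpow_nonneg ht.le b))
  · exact (Real.rpow_le_rpow_of_exponent_le h1 hxb).trans
      (le_add_of_nonneg_left (Real.rpow_nonneg ht.le a))

theorem integrableOn_rpow_add_rpow_mul_exp_neg {a b c : ℝ} (ha : -1 < a) (hb : -1 < b)
    (hc : 0 < c) (C : ℝ) :
    IntegrableOn (fun t : ℝ ↦ (t ^ a + t ^ b) * (C * Real.exp (-c * t))) (Ioi 0) := by
  have hpow {x : ℝ} (hx : -1 < x) :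
      IntegrableOn (fun t : ℝ ↦ t ^ x * Real.exp (-c * t)) (Ioi 0) := by
    simpa only [Real.rpow_one] using integrableOn_rpow_mul_exp_neg_mul_rpow hx one_pos hc
  refine (((hpow ha).add (hpow hb)).const_mul C).congr (ae_of_all _ fun t ↦ ?_)
  simp only [Pi.add_apply]
  ring

variable {G w : ℂ → ℂ} {Ω : Set ℂ} {s₀ : ℂ} {c : ℝ}

theorem continuousOn_cpow_smul_comp_add {s : ℂ} (z : ℂ) (hG : ContinuousOn G Ω)
    (hadd : ∀ t : ℝ, 0 < t → s + t ∈ Ω) :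
    ContinuousOn (fun t : ℝ ↦ (t : ℂ) ^ z • G (s + t)) (Ioi 0) :=
  ContinuousOn.smul
    (fun _ ht ↦ (continuousAt_ofReal_cpow_const _ z (Or.inr (ne_of_gt ht))).continuousWithinAt)
    (hG.comp (by fun_prop) hadd)

theorem differentiableAt_mellin_comp_add (hΩ : IsOpen Ω)
    (hadd : ∀ s ∈ Ω, ∀ t : ℝ, 0 ≤ t → s + t ∈ Ω) (hG : DifferentiableOn ℂ G Ω) (hc : 0 < c)
    (hdecay : ∀ K ⊆ Ω, IsCompact K →
      ∃ C, ∀ s ∈ K, ∀ t : ℝ, 0 ≤ t → ‖G (s + t)‖ ≤ C * Real.exp (-c * t))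
    (hs₀ : s₀ ∈ Ω) (hw : AnalyticAt ℂ w s₀) (hpos : 0 < (w s₀).re) :
    DifferentiableAt ℂ (fun s ↦ mellin (fun t : ℝ ↦ G (s + t)) (w s)) s₀ := by
  set a := (w s₀).re / 2
  set b := (w s₀).re + 1
  have hre : ContinuousAt (fun s ↦ (w s).re) s₀ := continuous_re.continuousAt.comp hw.continuousAt
  have hnear : ∀ᶠ s in 𝓝 s₀, s ∈ Ω ∧ AnalyticAt ℂ w s ∧ a < (w s).re ∧ (w s).re < b :=
    (hΩ.eventually_mem hs₀).and <| hw.eventually_analyticAt.and <|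
      (hre.eventually_const_lt (half_lt_self hpos)).and (hre.eventually_lt_const (lt_add_one _))
  obtain ⟨K, hK, hKnear, hKcompact⟩ := local_compact_nhds hnear
  obtain ⟨C, hC⟩ := hdecay K (fun s hs ↦ (hKnear hs).1) hKcompact
  refine differentiableAt_integral_of_dominated
    (bound := fun t ↦ (t ^ (a - 1) + t ^ (b - 1)) * (C * Real.exp (-c * t))) hK ?_ ?_ ?_
    (integrableOn_rpow_add_rpow_mul_exp_neg (by simp only [a]; linarith)
      (by simp only [b]; linarith) hc C)
  · exact fun s hs ↦ (continuousOn_cpow_smul_comp_add (w s - 1) hG.continuousOn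
      fun t ht ↦ hadd s (hKnear hs).1 t (le_of_lt ht)).aestronglyMeasurable measurableSet_Ioi
  · filter_upwards [ae_restrict_mem measurableSet_Ioi] with t (ht : 0 < t) s hs
    have hGt : DifferentiableAt ℂ G (s + t) :=
      hG.differentiableAt (hΩ.mem_nhds (hadd s (hKnear hs).1 t ht.le))
    have hpow : DifferentiableAt ℂ (fun z ↦ (t : ℂ) ^ (w z - 1)) s :=
      ((hKnear hs).2.1.differentiableAt.sub_const 1).const_cpow
        (Or.inl (ofReal_ne_zero.2 ht.ne'))
    exact (hpow.smul (hGt.comp s (differentiableAt_id.add_const _))).differentiableWithinAt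
  · filter_upwards [ae_restrict_mem measurableSet_Ioi] with t (ht : 0 < t) s hs
    obtain ⟨-, -, ha, hb⟩ := hKnear hs
    rw [norm_smul, norm_cpow_eq_rpow_re_of_pos ht, sub_re, one_re]
    exact mul_le_mul (rpow_le_rpow_add_rpow ht (by linarith) (by linarith)) (hC s hs t ht.le)
      (norm_nonneg _) (by positivity)

/-- The Weyl fractional integral of order `w` of `G` at `s`,
`Γ(w)⁻¹ ∫₀^∞ t^(w-1) G(s + t) dt`, meaningful for `0 < Re w`. -/
noncomputable def weylIntegral (G : ℂ → ℂ) (w s : ℂ) : ℂ :=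
  mellin (fun t : ℝ ↦ G (s + t)) w / Gamma w

theorem differentiableAt_weylIntegral (hΩ : IsOpen Ω)
    (hadd : ∀ s ∈ Ω, ∀ t : ℝ, 0 ≤ t → s + t ∈ Ω) (hG : DifferentiableOn ℂ G Ω) (hc : 0 < c)
    (hdecay : ∀ K ⊆ Ω, IsCompact K →
      ∃ C, ∀ s ∈ K, ∀ t : ℝ, 0 ≤ t → ‖G (s + t)‖ ≤ C * Real.exp (-c * t))
    (hs₀ : s₀ ∈ Ω) (hw : AnalyticAt ℂ w s₀) (hpos : 0 < (w s₀).re) :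
    DifferentiableAt ℂ (fun s ↦ weylIntegral G (w s) s) s₀ := by
  have hGamma : DifferentiableAt ℂ Gamma (w s₀) := differentiableAt_Gamma _ fun m hm ↦ by
    rw [hm, neg_re, natCast_re] at hpos
    linarith [m.cast_nonneg (α := ℝ)]
  exact (differentiableAt_mellin_comp_add hΩ hadd hG hc hdecay hs₀ hw hpos).div
    (hGamma.comp s₀ hw.differentiableAt) (Gamma_ne_zero_of_re_pos hpos)

/-- The Weyl fractional integral of arbitrary order `w`, obtained by raising the order to
`w + k` with `0 < Re (w + k)` and compensating by `(-d/ds)^k`. The choice of `k` is immaterial for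
continuations of Dirichlet series, see `ContinuesLSeries.weylDifferintegral_eq`. -/
noncomputable def weylDifferintegral (G : ℂ → ℂ) (w s : ℂ) : ℂ :=
  weylIntegral ((fun g ↦ -deriv g)^[⌈-w.re⌉₊ + 1] G) (w + (⌈-w.re⌉₊ + 1 : ℕ)) s

theorem re_add_natCeil_neg_re_add_one_pos (w : ℂ) : 0 < (w + (⌈-w.re⌉₊ + 1 : ℕ)).re := by
  rw [add_re, natCast_re, Nat.cast_add_one]
  linarith [Nat.le_ceil (-w.re)]

end WeylIntegral

section LSeries

variable {f : ℕ → ℂ}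

theorem term_eq_zero_or_two_le (hf : f 1 = 0) (s : ℂ) (n : ℕ) : term f s n = 0 ∨ 2 ≤ n := by
  obtain rfl | rfl | hn : n = 0 ∨ n = 1 ∨ 2 ≤ n := by omega
  · exact Or.inl (term_zero f s)
  · exact Or.inl (by simp [hf])
  · exact Or.inr hn

theorem norm_term_le_mul_exp_of_apply_one_eq_zero (hf : f 1 = 0) {x : ℝ} {z : ℂ} (hxz : x ≤ z.re)
    (n : ℕ) : ‖term f z n‖ ≤ ‖term f x n‖ * Real.exp (-Real.log 2 * (z.re - x)) := by
  rcases term_eq_zero_or_two_le hf z n with hz | hn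
  · rw [hz, norm_zero]
    positivity
  have hn0 : n ≠ 0 := by omega
  have hn2 : (2 : ℝ) ≤ n := mod_cast hn
  have hnpos : (0 : ℝ) < n := by positivity
  have hpow : Real.exp (Real.log 2 * (z.re - x)) ≤ (n : ℝ) ^ (z.re - x) := by
    rw [← Real.rpow_def_of_pos two_pos]
    exact Real.rpow_le_rpow zero_le_two hn2 (sub_nonneg.2 hxz)
  rw [norm_term_eq, norm_term_eq, if_neg hn0, if_neg hn0, ofReal_re, neg_mul, Real.exp_neg,
    ← div_eq_mul_inv, div_div, ← add_sub_cancel x z.re, Real.rpow_add hnpos, add_sub_cancel]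
  gcongr

theorem norm_LSeries_le_mul_exp_of_apply_one_eq_zero (hf : f 1 = 0) {x : ℝ} {z : ℂ}
    (hsum : LSeriesSummable f x) (hxz : x ≤ z.re) :
    ‖LSeries f z‖ ≤ (∑' n, ‖term f x n‖) * Real.exp (-Real.log 2 * (z.re - x)) :=
  tsum_of_norm_bounded (hsum.norm.hasSum.mul_right _)
    (norm_term_le_mul_exp_of_apply_one_eq_zero hf hxz)

theorem summable_norm_term_div_log_rpow (hf : f 1 = 0) {s : ℂ} (hsum : LSeriesSummable f s)
    {c : ℝ} (hc : 0 ≤ c) : Summable fun n ↦ ‖term f s n‖ / Real.log n ^ c := by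
  refine (hsum.norm.div_const (Real.log 2 ^ c)).of_nonneg_of_le
    (fun n ↦ by positivity) fun n ↦ ?_
  rcases term_eq_zero_or_two_le hf s n with hs | hn
  · simp [hs]
  have hn2 : (2 : ℝ) ≤ n := mod_cast hn
  gcongr

theorem term_add_ofReal (f : ℕ → ℂ) (s : ℂ) (t : ℝ) (n : ℕ) :
    term f (s + t) n = term f s n * Real.exp (-Real.log n * t) := by
  rcases eq_or_ne n 0 with rfl | hn
  · simp
  have hn' : (n : ℂ) ≠ 0 := Nat.cast_ne_zero.2 hn
  rw [term_of_ne_zero hn, term_of_ne_zero hn, cpow_add _ _ hn', cpow_def_of_ne_zero hn' t,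
    ← natCast_log, ← div_div, ofReal_exp, div_eq_mul_inv _ (cexp _), ← Complex.exp_neg]
  push_cast
  ring_nf

theorem iterate_logMul_apply (f : ℕ → ℂ) (k n : ℕ) :
    (logMul^[k] f) n = log n ^ k * f n := by
  induction k with
  | zero => simp
  | succ k ih => rw [Function.iterate_succ_apply', logMul, ih, pow_succ']; ring

theorem term_iterate_logMul_div_log_cpow (hf : f 1 = 0) (w s : ℂ) (k n : ℕ) :
    term (logMul^[k] f) s n / (Real.log n : ℂ) ^ (w + k) =
      term f s n / (Real.log n : ℂ) ^ w := by
  obtain rfl | rfl | hn : n = 0 ∨ n = 1 ∨ 2 ≤ n := by omega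
  · simp
  · simp [iterate_logMul_apply, hf]
  have hlog : (Real.log n : ℂ) ≠ 0 :=
    ofReal_ne_zero.2 (Real.log_pos (mod_cast (by omega : 1 < n))).ne'
  rw [term_of_ne_zero (by omega), term_of_ne_zero (by omega), iterate_logMul_apply, ← natCast_log,
    cpow_add _ _ hlog, cpow_natCast]
  field_simp

end LSeries

/-- `G` is a holomorphic continuation of the Dirichlet series of `f`, without constant term and
absolutely convergent on `σ < Re s`, to an open set `Ω` stable under rightward translation. -/
structure ContinuesLSeries (f : ℕ → ℂ) (σ : ℝ) (G : ℂ → ℂ) (Ω : Set ℂ) : Prop where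
  isOpen : IsOpen Ω
  add_ofReal_mem : ∀ s ∈ Ω, ∀ t : ℝ, 0 ≤ t → s + t ∈ Ω
  mem_of_lt_re : ∀ s : ℂ, σ < s.re → s ∈ Ω
  differentiableOn : DifferentiableOn ℂ G Ω
  apply_one : f 1 = 0
  abscissa_le : abscissaOfAbsConv f ≤ σ
  eq_LSeries : ∀ s : ℂ, σ < s.re → G s = LSeries f s

namespace ContinuesLSeries

variable {f : ℕ → ℂ} {σ : ℝ} {G : ℂ → ℂ} {Ω : Set ℂ}

theorem abscissa_lt (h : ContinuesLSeries f σ G Ω) {s : ℂ} (hs : σ < s.re) :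
    abscissaOfAbsConv f < s.re :=
  h.abscissa_le.trans_lt (EReal.coe_lt_coe_iff.2 hs)

theorem summable (h : ContinuesLSeries f σ G Ω) {s : ℂ} (hs : σ < s.re) : LSeriesSummable f s :=
  LSeriesSummable_of_abscissaOfAbsConv_lt_re (h.abscissa_lt hs)

theorem neg_deriv (h : ContinuesLSeries f σ G Ω) :
    ContinuesLSeries (logMul f) σ (-deriv G) Ω where
  isOpen := h.isOpen
  add_ofReal_mem := h.add_ofReal_mem
  mem_of_lt_re := h.mem_of_lt_re
  differentiableOn := (h.differentiableOn.deriv h.isOpen).neg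
  apply_one := by simp [logMul]
  abscissa_le := abscissaOfAbsConv_logMul.trans_le h.abscissa_le
  eq_LSeries s hs := by
    have hnear : G =ᶠ[𝓝 s] LSeries f :=
      eventually_of_mem ((isOpen_lt continuous_const continuous_re).mem_nhds hs) h.eq_LSeries
    rw [Pi.neg_apply, hnear.deriv_eq, LSeries_deriv (h.abscissa_lt hs), neg_neg]

theorem iterate_neg_deriv (h : ContinuesLSeries f σ G Ω) (k : ℕ) :
    ContinuesLSeries (logMul^[k] f) σ ((fun g ↦ -deriv g)^[k] G) Ω := by
  induction k with
  | zero => exact h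
  | succ k ih => simpa only [Function.iterate_succ_apply'] using ih.neg_deriv

theorem exists_norm_add_le (h : ContinuesLSeries f σ G Ω) {K : Set ℂ} (hKΩ : K ⊆ Ω)
    (hK : IsCompact K) (T : ℝ) : ∃ B, ∀ s ∈ K, ∀ t ∈ Icc 0 T, ‖G (s + t)‖ ≤ B := by
  have hcont : ContinuousOn (fun p : ℂ × ℝ ↦ G (p.1 + p.2)) (K ×ˢ Icc 0 T) :=
    h.differentiableOn.continuousOn.comp (by fun_prop)
      fun p hp ↦ h.add_ofReal_mem p.1 (hKΩ hp.1) p.2 hp.2.1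
  obtain ⟨B, hB⟩ := (hK.prod isCompact_Icc).exists_bound_of_continuousOn hcont
  exact ⟨B, fun s hs t ht ↦ hB (s, t) ⟨hs, ht⟩⟩

theorem exists_norm_add_le_mul_exp (h : ContinuesLSeries f σ G Ω) (K : Set ℂ) (hKΩ : K ⊆ Ω)
    (hK : IsCompact K) :
    ∃ C, ∀ s ∈ K, ∀ t : ℝ, 0 ≤ t → ‖G (s + t)‖ ≤ C * Real.exp (-Real.log 2 * t) := by
  obtain ⟨M, hM⟩ := hK.isBounded.exists_norm_le
  set x : ℝ := σ + 1
  set T : ℝ := M + x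
  obtain ⟨B, hB⟩ := h.exists_norm_add_le hKΩ hK T
  set A : ℝ := ∑' n, ‖term f x n‖
  have hlog : 0 < Real.log 2 := Real.log_pos one_lt_two
  have hmax : 0 ≤ max B A := le_max_of_le_right (tsum_nonneg fun n ↦ norm_nonneg _)
  refine ⟨max B A * Real.exp (Real.log 2 * T), fun s hs t ht ↦ ?_⟩
  rw [mul_assoc, ← Real.exp_add]
  rcases le_total t T with htT | hTt
  · calc ‖G (s + t)‖ ≤ max B A := (hB s hs t ⟨ht, htT⟩).trans (le_max_left B A)
      _ ≤ _ := le_mul_of_one_le_right hmax (Real.one_le_exp (by nlinarith))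
  · have hre : t - T ≤ (s + t).re - x := by
      have := neg_le_of_abs_le ((abs_re_le_norm s).trans (hM s hs))
      simp only [add_re, ofReal_re, T]
      linarith
    have hsum : LSeriesSummable f x := h.summable (by simp [x])
    calc ‖G (s + t)‖ = ‖LSeries f (s + t)‖ := by rw [h.eq_LSeries _ (by linarith)]
      _ ≤ A * Real.exp (-Real.log 2 * ((s + t).re - x)) :=
          norm_LSeries_le_mul_exp_of_apply_one_eq_zero h.apply_one hsum (by linarith)
      _ ≤ _ := by
          gcongr
          · exact le_max_right B A
          · nlinarith

theorem differentiableAt_weylIntegral (h : ContinuesLSeries f σ G Ω) {w : ℂ → ℂ} {s : ℂ}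
    (hs : s ∈ Ω) (hw : AnalyticAt ℂ w s) (hpos : 0 < (w s).re) :
    DifferentiableAt ℂ (fun z ↦ weylIntegral G (w z) z) s :=
  _root_.differentiableAt_weylIntegral h.isOpen h.add_ofReal_mem h.differentiableOn
    (Real.log_pos one_lt_two) h.exists_norm_add_le_mul_exp hs hw hpos

theorem hasSum_weylIntegral (h : ContinuesLSeries f σ G Ω) {w s : ℂ} (hs : σ < s.re)
    (hw : 0 < w.re) :
    HasSum (fun n : ℕ ↦ term f s n / (Real.log n : ℂ) ^ w) (weylIntegral G w s) := by
  have hmellin := hasSum_mellin (a := term f s) (p := fun n : ℕ ↦ Real.log n)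
    (F := fun t : ℝ ↦ G (s + t)) (s := w) ?_ hw ?_
    (summable_norm_term_div_log_rpow h.apply_one (h.summable hs) hw.le)
  · refine (hmellin.div_const (Gamma w)).congr_fun fun n ↦ ?_
    rw [mul_div_assoc, mul_div_cancel_left₀ _ (Gamma_ne_zero_of_re_pos hw)]
  · intro n
    exact (term_eq_zero_or_two_le h.apply_one s n).imp_right fun hn ↦
      Real.log_pos (mod_cast (by omega : 1 < n))
  · intro t (ht : 0 < t)
    have hst : σ < (s + t).re := by
      rw [add_re, ofReal_re]
      linarith
    rw [h.eq_LSeries _ hst]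
    exact (h.summable hst).hasSum.congr_fun fun n ↦ (term_add_ofReal f s t n).symm

theorem hasSum_weylIntegral_iterate_neg_deriv (h : ContinuesLSeries f σ G Ω) {w s : ℂ} {k : ℕ}
    (hs : σ < s.re) (hwk : 0 < (w + k).re) :
    HasSum (fun n : ℕ ↦ term f s n / (Real.log n : ℂ) ^ w)
      (weylIntegral ((fun g ↦ -deriv g)^[k] G) (w + k) s) := by
  simpa only [term_iterate_logMul_div_log_cpow h.apply_one] using
    (h.iterate_neg_deriv k).hasSum_weylIntegral hs hwk

theorem weylIntegral_iterate_neg_deriv_eq (h : ContinuesLSeries f σ G Ω) (hΩ : IsPreconnected Ω)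
    {w s : ℂ} {j k : ℕ} (hs : s ∈ Ω) (hwj : 0 < (w + j).re) (hwk : 0 < (w + k).re) :
    weylIntegral ((fun g ↦ -deriv g)^[j] G) (w + j) s =
      weylIntegral ((fun g ↦ -deriv g)^[k] G) (w + k) s := by
  have hanalytic {k : ℕ} (hwk : 0 < (w + k).re) :
      AnalyticOnNhd ℂ (weylIntegral ((fun g ↦ -deriv g)^[k] G) (w + k)) Ω :=
    DifferentiableOn.analyticOnNhd (fun z hz ↦
      ((h.iterate_neg_deriv k).differentiableAt_weylIntegral hz analyticAt_const
        hwk).differentiableWithinAt) h.isOpen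
  have hσ : σ < ((σ + 1 : ℝ) : ℂ).re := by simp
  refine (hanalytic hwj).eqOn_of_preconnected_of_eventuallyEq (hanalytic hwk) hΩ
    (h.mem_of_lt_re _ hσ) ?_ hs
  filter_upwards [(isOpen_lt continuous_const continuous_re).mem_nhds hσ] with z hz
  exact (h.hasSum_weylIntegral_iterate_neg_deriv hz hwj).unique
    (h.hasSum_weylIntegral_iterate_neg_deriv hz hwk)

theorem weylDifferintegral_eq (h : ContinuesLSeries f σ G Ω) (hΩ : IsPreconnected Ω) {w s : ℂ}
    {k : ℕ} (hs : s ∈ Ω) (hwk : 0 < (w + k).re) :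
    weylDifferintegral G w s = weylIntegral ((fun g ↦ -deriv g)^[k] G) (w + k) s :=
  h.weylIntegral_iterate_neg_deriv_eq hΩ hs (re_add_natCeil_neg_re_add_one_pos w) hwk

theorem differentiableOn_weylDifferintegral (h : ContinuesLSeries f σ G Ω)
    (hΩ : IsPreconnected Ω) {w : ℂ → ℂ} (hw : DifferentiableOn ℂ w Ω) :
    DifferentiableOn ℂ (fun s ↦ weylDifferintegral G (w s) s) Ω := by
  intro s hs
  set k : ℕ := ⌈-(w s).re⌉₊ + 1
  have hanalytic : AnalyticAt ℂ (fun z ↦ w z + k) s :=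
    (hw.analyticAt (h.isOpen.mem_nhds hs)).add analyticAt_const
  have hpos : 0 < (w s + k).re := re_add_natCeil_neg_re_add_one_pos (w s)
  have hlocal : (fun z ↦ weylDifferintegral G (w z) z) =ᶠ[𝓝 s]
      fun z ↦ weylIntegral ((fun g ↦ -deriv g)^[k] G) (w z + k) z := by
    filter_upwards [h.isOpen.mem_nhds hs,
      (continuous_re.continuousAt.comp hanalytic.continuousAt).eventually_const_lt hpos]
      with z hz hzpos using h.weylDifferintegral_eq hΩ hz hzpos
  exact (((h.iterate_neg_deriv k).differentiableAt_weylIntegral hs hanalytic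
    hpos).congr_of_eventuallyEq hlocal).differentiableWithinAt

theorem hasSum_weylDifferintegral (h : ContinuesLSeries f σ G Ω) {s : ℂ} (hs : σ < s.re) (w : ℂ) :
    HasSum (fun n : ℕ ↦ term f s n / (Real.log n : ℂ) ^ w) (weylDifferintegral G w s) :=
  h.hasSum_weylIntegral_iterate_neg_deriv hs (re_add_natCeil_neg_re_add_one_pos w)

end ContinuesLSeries

theorem setOf_not_im_eq_zero_and_re_le_one_eq_preimage :
    {s : ℂ | ¬(s.im = 0 ∧ s.re ≤ 1)} = Homeomorph.subRight (1 : ℂ) ⁻¹' slitPlane := by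
  ext s
  simp only [mem_ofPred_eq, mem_preimage, Homeomorph.subRight_apply, mem_slitPlane_iff, sub_re,
    one_re, sub_im, one_im, sub_zero, sub_pos, not_and_or, not_le, or_comm, ne_eq]

theorem isPreconnected_setOf_not_im_eq_zero_and_re_le_one :
    IsPreconnected {s : ℂ | ¬(s.im = 0 ∧ s.re ≤ 1)} := by
  rw [setOf_not_im_eq_zero_and_re_le_one_eq_preimage, Homeomorph.isPreconnected_preimage]
  exact (starConvex_one_slitPlane.isPathConnected one_mem_slitPlane).isConnected.isPreconnected

theorem continuesLSeries_riemannZeta_sub_one :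
    ContinuesLSeries (1 - delta) 1 (fun s ↦ riemannZeta s - 1)
      {s : ℂ | ¬(s.im = 0 ∧ s.re ≤ 1)} where
  isOpen := by
    rw [setOf_not_im_eq_zero_and_re_le_one_eq_preimage]
    exact isOpen_slitPlane.preimage (Homeomorph.continuous _)
  add_ofReal_mem s hs t ht := by
    rintro ⟨him, hre⟩
    simp only [add_im, ofReal_im, add_zero, add_re, ofReal_re] at him hre
    exact hs ⟨him, by linarith⟩
  mem_of_lt_re s hs h := h.2.not_gt hs
  differentiableOn s hs := by
    have hs1 : s ≠ 1 := by
      rintro rfl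
      exact hs (by simp)
    exact ((differentiableAt_riemannZeta hs1).sub_const 1).differentiableWithinAt
  apply_one := by simp [delta]
  abscissa_le := by
    rw [abscissaOfAbsConv_congr' (g := 1)]
    · exact abscissaOfAbsConv_one.le
    · filter_upwards [eventually_gt_atTop 1] with n hn
      simp [delta, hn.ne']
  eq_LSeries s hs := by
    have hdelta : LSeriesSummable delta s := by
      refine summable_of_ne_finset_zero (s := {1}) fun n hn ↦ ?_
      rw [term_delta, if_neg (by simpa using hn)]
    rw [LSeries_sub (LSeriesSummable_one_iff.2 hs) hdelta, LSeries_one_eq_riemannZeta hs,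
      LSeries_delta, Pi.one_apply]

theorem term_one_sub_delta_div_log_cpow (η θ : ℝ) (s : ℂ) (n : ℕ) :
    term (1 - delta) s (n + 2) / (Real.log (n + 2 : ℕ) : ℂ) ^ (θ * s - η) =
      ((Real.log ((n : ℝ) + 2)) ^ η : ℝ) *
        Complex.exp (-s * ((Real.log ((n : ℝ) + 2) : ℝ)
          + θ * Real.log (Real.log ((n : ℝ) + 2)))) := by
  have hn : ((n + 2 : ℕ) : ℂ) ≠ 0 := Nat.cast_ne_zero.2 (by omega)
  have hlog : 0 < Real.log ((n : ℝ) + 2) := Real.log_pos (by linarith [n.cast_nonneg (α := ℝ)])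
  have hcoeff : (1 - delta) (n + 2) = 1 := by simp [delta]
  rw [term_of_ne_zero (by omega), hcoeff, cpow_def_of_ne_zero hn, ← natCast_log, Nat.cast_add,
    Nat.cast_ofNat, cpow_def_of_ne_zero (ofReal_ne_zero.2 hlog.ne'), ← ofReal_log hlog.le,
    Real.rpow_def_of_pos hlog, ofReal_exp, one_div, div_eq_mul_inv, ← Complex.exp_neg,
    ← Complex.exp_neg, ← Complex.exp_add, ← Complex.exp_add]
  congr 1
  push_cast
  ring

/-- Lemma 2.2 (analytic continuation): the Dirichlet series
`ζ_{η,θ}(s) = ∑_{n=2}^∞ (log n)^η / (n (log n)^θ)^s` extends to an analytic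
(complex differentiable) function on `ℂ \ (−∞, 1]`.  Here
`(n (log n)^θ)^s = exp(s (log n + θ log log n))`. -/
theorem zeta_eta_theta_analytic_continuation (η θ : ℝ) :
    ∃ F : ℂ → ℂ,
      DifferentiableOn ℂ F {s : ℂ | ¬(s.im = 0 ∧ s.re ≤ 1)} ∧
      ∀ s : ℂ, 1 < s.re →
        (Summable (fun n : ℕ =>
          ‖((Real.log ((n : ℝ) + 2)) ^ η : ℝ) *
            Complex.exp (-s * ((Real.log ((n : ℝ) + 2) : ℝ)
              + θ * Real.log (Real.log ((n : ℝ) + 2))))‖) ∧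
        F s = ∑' n : ℕ,
          ((Real.log ((n : ℝ) + 2)) ^ η : ℝ) *
            Complex.exp (-s * ((Real.log ((n : ℝ) + 2) : ℝ)
              + θ * Real.log (Real.log ((n : ℝ) + 2))))) := by
  have hζ := continuesLSeries_riemannZeta_sub_one
  refine ⟨fun s ↦ weylDifferintegral (fun z ↦ riemannZeta z - 1) (θ * s - η) s,
    hζ.differentiableOn_weylDifferintegral isPreconnected_setOf_not_im_eq_zero_and_re_le_one
      (by fun_prop), fun s hs ↦ ?_⟩
  have hsum := (hasSum_nat_add_iff' 2).2 (hζ.hasSum_weylDifferintegral hs (θ * s - η))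
  have hterm (n : ℕ) (hn : n ∈ Finset.range 2) : term (1 - delta) s n = 0 :=
    (term_eq_zero_or_two_le hζ.apply_one s n).resolve_right (Finset.mem_range.1 hn).not_ge
  rw [Finset.sum_eq_zero fun n hn ↦ by rw [hterm n hn, zero_div], sub_zero] at hsum
  simp only [term_one_sub_delta_div_log_cpow] at hsum
  exact ⟨hsum.summable.norm, hsum.tsum_eq.symm⟩
end

section
/- Let η, θ ∈ ℝ and let F be the analytic continuation of ζ_{η,θ} to ℂ \ (−∞, 1]. For any 0 < σ₁ ≤ σ₂ there exist constants C > 0 and k ∈ ℕ such that |F(s)| ≤ C·(1 + |Im(s)|)^k for all s with σ₁ ≤ Re(s) ≤ σ₂ and |Im(s)| ≥ 1. -/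
open Filter Complex

/-!
In the variable `u = log x` the terms of the series are the values at `u = log n` of
`u ^ (η - s θ) * exp (-s u)`, and the series is compared with the integral of this function
against `exp u du = dx`. For `Im s > 0` the contour of the tail of that integral is rotated
from `[a, ∞)` to the vertical ray `[a, a - i∞)`, along which `exp (-s u)` decays exponentially
whatever the real part of `s`. The competing factor `exp (Im s * θ * arg u)` coming from the
power of `u` is harmless as soon as `Re u ≥ 2|θ|`, since `|arg u| ≤ |Im u| / Re u`. The difference
between a term and the corresponding piece of the integral is `O((1 + |s|) n ^ (ε - 1 - Re s))`,
which is summable for `Re s > ε`, so that the comparison extends the series to `Re s > 0` with a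
bound linear in `Im s`. Conjugation gives the lower half-plane.
-/

open MeasureTheory Set
open scoped Topology Real ComplexConjugate

theorem exists_forall_rpow_le_mul_exp (p : ℝ) {ε : ℝ} (hε : 0 < ε) :
    ∃ C > 0, ∀ x : ℝ, 1 ≤ x → x ^ p ≤ C * Real.exp (ε * x) := by
  refine ⟨⌈p⌉₊.factorial / ε ^ ⌈p⌉₊, by positivity, fun x hx ↦ ?_⟩
  have hx₀ : 0 ≤ x := zero_le_one.trans hx
  calc x ^ p ≤ x ^ (⌈p⌉₊ : ℝ) := Real.rpow_le_rpow_of_exponent_le hx (Nat.le_ceil p)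
    _ = ⌈p⌉₊.factorial / ε ^ ⌈p⌉₊ * ((ε * x) ^ ⌈p⌉₊ / ⌈p⌉₊.factorial) := by
      rw [Real.rpow_natCast, mul_pow]; field_simp
    _ ≤ ⌈p⌉₊.factorial / ε ^ ⌈p⌉₊ * Real.exp (ε * x) := by
      gcongr; exact Real.pow_div_factorial_le_exp _ (mul_nonneg hε.le hx₀) _

theorem abs_arg_le_abs_im_div_re {z : ℂ} (hz : 0 < z.re) : |arg z| ≤ |z.im| / z.re := by
  have harg : |arg z| < π / 2 := abs_arg_lt_pi_div_two_iff.2 (.inl hz)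
  calc |arg z| ≤ Real.tan |arg z| := Real.le_tan (abs_nonneg _) harg
    _ ≤ |Real.tan (arg z)| := by
      rcases abs_choice (arg z) with h | h <;> rw [h]
      · exact le_abs_self _
      · rw [Real.tan_neg]; exact neg_le_abs _
    _ = |z.im| / z.re := by rw [tan_arg, abs_div, abs_of_pos hz]

theorem norm_sub_integral_exp_smul_le {E : Type*} [NormedAddCommGroup E] [NormedSpace ℝ E]
    [CompleteSpace E] {g g' : ℝ → E} {a b C : ℝ} (hab : a ≤ b)
    (hg : ∀ u ∈ Icc a b, HasDerivWithinAt g (g' u) (Icc a b) u)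
    (hC : ∀ u ∈ Icc a b, ‖g' u‖ ≤ C) :
    ‖(Real.exp b - Real.exp a) • g a - ∫ u in a..b, Real.exp u • g u‖ ≤
      (b - a) * C * (Real.exp b - Real.exp a) := by
  have hC₀ : 0 ≤ C := (norm_nonneg _).trans (hC a (left_mem_Icc.2 hab))
  have hosc : ∀ u ∈ Icc a b, ‖g a - g u‖ ≤ (b - a) * C := fun u hu ↦ by
    have hmean := norm_image_sub_le_of_norm_deriv_le_segment' hg
      (fun v hv ↦ hC v (Ico_subset_Icc_self hv)) u hu
    rw [norm_sub_rev, mul_comm]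
    exact hmean.trans (by gcongr; exact hu.2)
  have hg_cont : ContinuousOn g (uIcc a b) := by
    rw [uIcc_of_le hab]
    exact fun u hu ↦ (hg u hu).continuousWithinAt
  have hconst_int : IntervalIntegrable (fun u ↦ Real.exp u • g a) volume a b :=
    (Real.continuous_exp.smul continuous_const).intervalIntegrable a b
  have h_int : IntervalIntegrable (fun u ↦ Real.exp u • g u) volume a b :=
    (Real.continuous_exp.continuousOn.smul hg_cont).intervalIntegrable
  calc ‖(Real.exp b - Real.exp a) • g a - ∫ u in a..b, Real.exp u • g u‖
      = ‖∫ u in a..b, Real.exp u • (g a - g u)‖ := by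
        simp only [smul_sub]
        rw [intervalIntegral.integral_sub hconst_int h_int,
          intervalIntegral.integral_smul_const, integral_exp]
    _ ≤ ∫ u in a..b, Real.exp u * ((b - a) * C) := by
        refine intervalIntegral.norm_integral_le_of_norm_le hab (ae_of_all _ fun u hu ↦ ?_)
          ((Real.continuous_exp.intervalIntegrable a b).mul_const _)
        rw [norm_smul, Real.norm_of_nonneg (Real.exp_pos u).le]
        gcongr
        exact hosc u (Ioc_subset_Icc_self hu)
    _ = (b - a) * C * (Real.exp b - Real.exp a) := by
        rw [intervalIntegral.integral_mul_const, integral_exp, mul_comm]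

section ParametricIntegral

variable {α E : Type*} [MeasurableSpace α] {μ : Measure α}
  [NormedAddCommGroup E] [NormedSpace ℂ E]

theorem aestronglyMeasurable_deriv_of_differentiableOn {U : Set ℂ} (hU : IsOpen U) {f : ℂ → α → E}
    (hf_meas : ∀ s ∈ U, AEStronglyMeasurable (f s) μ)
    (hf_diff : ∀ᵐ x ∂μ, DifferentiableOn ℂ (f · x) U) {s₀ : ℂ} (hs₀ : s₀ ∈ U) :
    AEStronglyMeasurable (fun x ↦ deriv (f · x) s₀) μ := by
  obtain ⟨z, hz_lim, hzU⟩ : ∃ z : ℕ → ℂ, Tendsto z atTop (𝓝[≠] s₀) ∧ ∀ n, z n ∈ U :=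
    exists_seq_forall_of_frequently
      (hU.eventually_mem hs₀ |>.filter_mono nhdsWithin_le_nhds).frequently
  refine aestronglyMeasurable_of_tendsto_ae atTop (f := fun n x ↦ slope (f · x) s₀ (z n))
    (fun n ↦ ((hf_meas _ (hzU n)).sub (hf_meas s₀ hs₀)).const_smul (z n - s₀)⁻¹) ?_
  filter_upwards [hf_diff] with x hx
  exact (hx.differentiableAt (hU.mem_nhds hs₀)).hasDerivAt.tendsto_slope.comp hz_lim

theorem differentiableOn_integral_of_norm_le {U : Set ℂ} (hU : IsOpen U) {f : ℂ → α → E}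
    {bound : α → ℝ} (hf_meas : ∀ s ∈ U, AEStronglyMeasurable (f s) μ)
    (hf_diff : ∀ᵐ x ∂μ, DifferentiableOn ℂ (f · x) U)
    (hf_le : ∀ᵐ x ∂μ, ∀ s ∈ U, ‖f s x‖ ≤ bound x) (hbound : Integrable bound μ) :
    DifferentiableOn ℂ (fun s ↦ ∫ x, f s x ∂μ) U := by
  intro s₀ hs₀
  obtain ⟨r, hr, hball⟩ := Metric.isOpen_iff.1 hU s₀ hs₀
  have hsub : ∀ s ∈ Metric.ball s₀ (r / 2), Metric.closedBall s (r / 4) ⊆ U := fun s hs ↦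
    (Metric.closedBall_subset_ball' (by linarith [Metric.mem_ball.1 hs])).trans hball
  have hderiv_le : ∀ᵐ x ∂μ, ∀ s ∈ Metric.ball s₀ (r / 2),
      ‖deriv (f · x) s‖ ≤ bound x / (r / 4) := by
    filter_upwards [hf_diff, hf_le] with x hx_diff hx_le s hs
    refine norm_deriv_le_of_forall_mem_sphere_norm_le (by positivity)
      (hx_diff.diffContOnCl_ball (hsub s hs)) fun z hz ↦
        hx_le z (hsub s hs (Metric.sphere_subset_closedBall hz))
  refine (hasDerivAt_integral_of_dominated_loc_of_deriv_le (Metric.ball_mem_nhds s₀ (half_pos hr))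
    (eventually_of_mem (hU.mem_nhds hs₀) hf_meas)
    (hbound.mono' (hf_meas s₀ hs₀) (hf_le.mono fun x hx ↦ hx s₀ hs₀))
    (aestronglyMeasurable_deriv_of_differentiableOn hU hf_meas hf_diff hs₀)
    hderiv_le (hbound.div_const _) ?_).2.differentiableAt.differentiableWithinAt
  filter_upwards [hf_diff] with x hx s hs
  have hsU : s ∈ U := hsub s hs (Metric.mem_closedBall_self (by positivity))
  exact (hx.differentiableAt (hU.mem_nhds hsU)).hasDerivAt

end ParametricIntegral

theorem norm_sub_le_tsum_of_telescoping {U : Set ℂ} (hU : IsOpen U) (hU' : IsPreconnected U)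
    {F : ℂ → ℂ} {f T : ℕ → ℂ → ℂ} {w : ℕ → ℝ} (hF : DifferentiableOn ℂ F U)
    (hf : ∀ n, DifferentiableOn ℂ (f n) U) (hT : ∀ n, DifferentiableOn ℂ (T n) U)
    (hw : Summable w) (hle : ∀ n, ∀ s ∈ U, ‖f n s - (T n s - T (n + 1) s)‖ ≤ w n)
    {z₀ : ℂ} (hz₀ : z₀ ∈ U) (hsum : ∀ᶠ s in 𝓝 z₀, HasSum (f · s) (F s))
    (hT_lim : ∀ᶠ s in 𝓝 z₀, Tendsto (T · s) atTop (𝓝 0)) {s : ℂ} (hs : s ∈ U) :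
    ‖F s - T 0 s‖ ≤ ∑' n, w n := by
  set D : ℕ → ℂ → ℂ := fun n s ↦ f n s - (T n s - T (n + 1) s)
  have hD_diff : DifferentiableOn ℂ (fun s ↦ ∑' n, D n s) U :=
    differentiableOn_tsum_of_summable_norm hw (fun n ↦ (hf n).sub ((hT n).sub (hT (n + 1)))) hU hle
  have h_near : (fun s ↦ F s - T 0 s) =ᶠ[𝓝 z₀] fun s ↦ ∑' n, D n s := by
    filter_upwards [hU.mem_nhds hz₀, hsum, hT_lim] with s hs hF_sum hT_zero
    have hD_sum : Summable (D · s) := .of_norm_bounded hw (hle · s hs)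
    have hD_partial : ∀ m, ∑ n ∈ Finset.range m, D n s =
        ∑ n ∈ Finset.range m, f n s - (T 0 s - T m s) := fun m ↦ by
      rw [Finset.sum_sub_distrib, Finset.sum_range_sub' (T · s)]
    refine tendsto_nhds_unique ?_ hD_sum.hasSum.tendsto_sum_nat
    simpa only [hD_partial, sub_zero] using
      hF_sum.tendsto_sum_nat.sub (hT_zero.const_sub (T 0 s))
  have h_eq : EqOn (fun s ↦ F s - T 0 s) (fun s ↦ ∑' n, D n s) U :=
    ((hF.sub (hT 0)).analyticOnNhd hU).eqOn_of_preconnected_of_eventuallyEq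
      (hD_diff.analyticOnNhd hU) hU' hz₀ h_near
  rw [show F s - T 0 s = _ from h_eq hs]
  exact tsum_of_norm_bounded hw.hasSum (hle · s hs)

section VerticalTail

variable {E : Type*} [NormedAddCommGroup E] [NormedSpace ℂ E]

/-- The integral of `g` from `a` down the vertical ray to `a - i∞`, i.e. `∫_a^{a - i∞} g(u) du`. -/
noncomputable def verticalTail (g : ℂ → E) (a : ℝ) : E :=
  -I • ∫ y in Iic (0 : ℝ), g (a + y * I)

theorem norm_verticalTail_le {g : ℂ → E} {a K δ : ℝ} (hδ : 0 < δ)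
    (hg : ∀ y : ℝ, y ≤ 0 → ‖g (a + y * I)‖ ≤ K * Real.exp (δ * y)) :
    ‖verticalTail g a‖ ≤ K / δ := by
  calc ‖verticalTail g a‖ = ‖∫ y in Iic (0 : ℝ), g (a + y * I)‖ := by simp [verticalTail, norm_smul]
    _ ≤ ∫ y in Iic (0 : ℝ), K * Real.exp (δ * y) :=
      norm_integral_le_of_norm_le ((integrableOn_exp_mul_Iic hδ 0).const_mul K)
        (ae_restrict_of_forall_mem measurableSet_Iic hg)
    _ = K / δ := by
      rw [integral_const_mul, integral_exp_mul_Iic hδ, mul_zero, Real.exp_zero, mul_one_div]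

theorem differentiableOn_verticalTail {U : Set ℂ} (hU : IsOpen U) {G : ℂ → ℂ → E} {a K δ : ℝ}
    (hδ : 0 < δ) (hG_cont : ∀ s ∈ U, ContinuousOn (fun y : ℝ ↦ G s (a + y * I)) (Iic 0))
    (hG_diff : ∀ y : ℝ, y ≤ 0 → DifferentiableOn ℂ (fun s ↦ G s (a + y * I)) U)
    (hG_le : ∀ s ∈ U, ∀ y : ℝ, y ≤ 0 → ‖G s (a + y * I)‖ ≤ K * Real.exp (δ * y)) :
    DifferentiableOn ℂ (fun s ↦ verticalTail (G s) a) U := by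
  exact (differentiableOn_integral_of_norm_le hU
    (fun s hs ↦ (hG_cont s hs).aestronglyMeasurable measurableSet_Iic)
    (ae_restrict_of_forall_mem measurableSet_Iic hG_diff)
    (ae_restrict_of_forall_mem measurableSet_Iic fun y hy s hs ↦ hG_le s hs y hy)
    ((integrableOn_exp_mul_Iic hδ 0).const_mul K)).const_smul _

theorem tendsto_intervalIntegral_vertical {g : ℂ → E} {x K δ : ℝ} (hδ : 0 < δ)
    (hg : ContinuousOn (fun y : ℝ ↦ g (x + y * I)) (Iic 0))
    (hg_le : ∀ y : ℝ, y ≤ 0 → ‖g (x + y * I)‖ ≤ K * Real.exp (δ * y)) :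
    Tendsto (fun Y : ℝ ↦ ∫ y in Y..0, g (x + y * I)) atBot
      (𝓝 (∫ y in Iic (0 : ℝ), g (x + y * I))) :=
  intervalIntegral_tendsto_integral_Iic 0
    (((integrableOn_exp_mul_Iic hδ 0).const_mul K).mono'
      (hg.aestronglyMeasurable measurableSet_Iic)
      (ae_restrict_of_forall_mem measurableSet_Iic hg_le)) tendsto_id

theorem tendsto_intervalIntegral_horizontal {g : ℂ → E} {a b K δ : ℝ} (hab : a ≤ b) (hδ : 0 < δ)
    (hg_le : ∀ u ∈ Icc a b ×ℂ Iic 0, ‖g u‖ ≤ K * Real.exp (δ * u.im)) :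
    Tendsto (fun Y : ℝ ↦ ∫ x in a..b, g (x + Y * I)) atBot (𝓝 0) := by
  have hlim : Tendsto (fun Y ↦ K * Real.exp (δ * Y) * |b - a|) atBot (𝓝 0) := by
    simpa using ((Real.tendsto_exp_atBot.comp
      (tendsto_id.const_mul_atBot hδ)).const_mul K).mul_const |b - a|
  refine squeeze_zero_norm' ?_ hlim
  filter_upwards [eventually_le_atBot 0] with Y hY
  refine intervalIntegral.norm_integral_le_of_norm_le_const fun x hx ↦ ?_
  rw [uIoc_of_le hab] at hx
  simpa using hg_le (x + Y * I) (by simpa [mem_reProdIm] using ⟨Ioc_subset_Icc_self hx, hY⟩)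

theorem verticalTail_sub_verticalTail {g : ℂ → E} {a b K δ : ℝ} (hab : a ≤ b) (hδ : 0 < δ)
    (hg : DifferentiableOn ℂ g (Icc a b ×ℂ Iic 0))
    (hg_le : ∀ u ∈ Icc a b ×ℂ Iic 0, ‖g u‖ ≤ K * Real.exp (δ * u.im)) :
    verticalTail g a - verticalTail g b = ∫ x in a..b, g x := by
  have hmem : ∀ x ∈ Icc a b, ∀ y : ℝ, y ≤ 0 → (x + y * I : ℂ) ∈ Icc a b ×ℂ Iic 0 :=
    fun x hx y hy ↦ by simpa [mem_reProdIm] using ⟨hx, hy⟩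
  have hray : ∀ x ∈ Icc a b, Tendsto (fun Y : ℝ ↦ ∫ y in Y..0, g (x + y * I)) atBot
      (𝓝 (∫ y in Iic (0 : ℝ), g (x + y * I))) := fun x hx ↦
    tendsto_intervalIntegral_vertical hδ (hg.continuousOn.comp (by fun_prop) (hmem x hx))
      fun y hy ↦ by simpa using hg_le _ (hmem x hx y hy)
  have hrect : ∀ᶠ Y : ℝ in atBot, (((∫ x in a..b, g (x + Y * I)) - ∫ x in a..b, g x) +
      I • ∫ y in Y..0, g (b + y * I)) - I • ∫ y in Y..0, g (a + y * I) = 0 := by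
    filter_upwards [eventually_le_atBot 0] with Y hY
    have hsub : uIcc a b ×ℂ uIcc Y 0 ⊆ Icc a b ×ℂ Iic 0 := by
      rw [uIcc_of_le hab, uIcc_of_le hY]
      exact fun u hu ↦ ⟨hu.1, hu.2.2⟩
    simpa using integral_boundary_rect_eq_zero_of_differentiableOn g ⟨a, Y⟩ b (hg.mono hsub)
  have hlim := (((tendsto_intervalIntegral_horizontal hab hδ hg_le).sub_const
    (∫ x in a..b, g x)).add ((hray b (right_mem_Icc.2 hab)).const_smul I)).sub
    ((hray a (left_mem_Icc.2 hab)).const_smul I)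
  have hlim_eq := tendsto_nhds_unique (hlim.congr' hrect) tendsto_const_nhds
  rw [verticalTail, verticalTail]
  linear_combination (norm := module) hlim_eq

end VerticalTail

/-- The general term `(log n) ^ η / (n (log n) ^ θ) ^ s` of `ζ_{η,θ}` as a function of `u = log n`.
With principal powers it makes sense, and is holomorphic in `u`, on the whole slit plane, which
allows integrals over `u` to be moved off the real axis. -/
noncomputable def zetaTerm (η θ : ℝ) (s u : ℂ) : ℂ :=
  u ^ ((η : ℂ) - s * θ) * exp (-(s * u))

namespace zetaTerm

variable {η θ : ℝ} {s u : ℂ}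

theorem ofReal_log {x : ℝ} (hx : 1 < x) (s : ℂ) :
    zetaTerm η θ s (Real.log x) = ((Real.log x ^ η : ℝ) : ℂ) *
      exp (-s * ((Real.log x : ℝ) + θ * Real.log (Real.log x))) := by
  have hlog : 0 < Real.log x := Real.log_pos hx
  have hlog' : (Real.log x : ℂ) ≠ 0 := ofReal_ne_zero.2 hlog.ne'
  rw [zetaTerm, cpow_sub _ _ hlog', ofReal_cpow hlog.le, cpow_def_of_ne_zero hlog' (s * θ),
    ← Complex.ofReal_log hlog.le, div_eq_mul_inv, ← exp_neg, mul_assoc, ← exp_add]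
  ring_nf

theorem conj_ofReal {x : ℝ} (hx : 0 ≤ x) :
    conj (zetaTerm η θ (conj s) x) = zetaTerm η θ s x := by
  have harg : arg (x : ℂ) ≠ π := by simpa [arg_ofReal_of_nonneg hx] using Real.pi_ne_zero.symm
  have hpow : conj ((x : ℂ) ^ ((η : ℂ) - conj s * θ)) =
      (x : ℂ) ^ ((η : ℂ) - s * θ) := by
    rw [show (η : ℂ) - conj s * θ = conj (η - s * θ) by simp,
      cpow_conj _ _ harg, conj_conj, Complex.conj_ofReal]
  simp [zetaTerm, hpow, ← exp_conj]

theorem norm_ofReal {x : ℝ} (hx : 0 < x) :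
    ‖zetaTerm η θ s x‖ = x ^ (η - s.re * θ) * Real.exp (-(s.re * x)) := by
  simp [zetaTerm, norm_cpow_eq_rpow_re_of_pos hx, norm_exp]

theorem differentiable_left (hu : u ≠ 0) : Differentiable ℂ (zetaTerm η θ · u) := by
  unfold zetaTerm
  intro s
  exact DifferentiableAt.mul (DifferentiableAt.const_cpow (by fun_prop) (.inl hu)) (by fun_prop)

theorem hasDerivAt_right (hu : u ∈ slitPlane) :
    HasDerivAt (zetaTerm η θ s) (zetaTerm η θ s u * ((η - s * θ) / u - s)) u := by
  have hpow : HasDerivAt (fun u : ℂ ↦ u ^ ((η : ℂ) - s * θ)) _ u :=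
    (hasDerivAt_id u).cpow_const hu
  refine (hpow.mul ((hasDerivAt_id u).const_mul s).neg.cexp).congr_deriv ?_
  simp only [zetaTerm, id, Pi.neg_apply, cpow_sub _ _ (slitPlane_ne_zero hu), cpow_one]
  ring

theorem norm_sub_div_sub_le (η θ : ℝ) (s : ℂ) (hu : 1 ≤ ‖u‖) :
    ‖(η - s * θ) / u - s‖ ≤ (|η| + |θ| + 1) * (1 + ‖s‖) :=
  calc ‖(η - s * θ) / u - s‖ ≤ ‖(η - s * θ) / u‖ + ‖s‖ := norm_sub_le _ _
    _ ≤ ‖η - s * θ‖ + ‖s‖ := by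
        rw [norm_div]
        gcongr
        exact div_le_self (norm_nonneg _) hu
    _ ≤ |η| + ‖s‖ * |θ| + ‖s‖ := by
        gcongr
        exact (norm_sub_le _ _).trans_eq (by simp)
    _ ≤ (|η| + |θ| + 1) * (1 + ‖s‖) := by
        nlinarith [abs_nonneg η, abs_nonneg θ, norm_nonneg s,
          mul_nonneg (abs_nonneg η) (norm_nonneg s)]

theorem norm_le_rpow_mul_exp (hs : 0 ≤ s.im) (hu : u.im ≤ 0) (hu₁ : 1 ≤ u.re)
    (hθ : 2 * |θ| ≤ u.re) :
    ‖zetaTerm η θ s u‖ ≤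
      ‖u‖ ^ (|η| + |s.re| * |θ|) * Real.exp (s.im * u.im / 2 - s.re * u.re) := by
  have hu₀ : 0 < u.re := zero_lt_one.trans_le hu₁
  have hexponent : η - s.re * θ ≤ |η| + |s.re| * |θ| := by
    rw [← abs_mul]
    linarith [le_abs_self η, neg_abs_le (s.re * θ)]
  have hrot : θ * arg u ≤ -u.im / 2 :=
    calc θ * arg u ≤ |θ| * |arg u| := by rw [← abs_mul]; exact le_abs_self _
      _ ≤ u.re / 2 * (|u.im| / u.re) := by
        gcongr
        · linarith
        · exact abs_arg_le_abs_im_div_re hu₀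
      _ = -u.im / 2 := by rw [abs_of_nonpos hu]; field_simp
  have hnorm : ‖zetaTerm η θ s u‖ =
      ‖u‖ ^ (η - s.re * θ) * Real.exp (s.im * (θ * arg u) - (s.re * u.re - s.im * u.im)) := by
    rw [zetaTerm, norm_mul, norm_cpow_of_ne_zero (by rintro rfl; simp at hu₀), norm_exp,
      div_eq_mul_inv, ← Real.exp_neg, mul_assoc, ← Real.exp_add]
    simp only [sub_re, sub_im, mul_re, mul_im, neg_re, ofReal_re, ofReal_im, mul_zero, sub_zero,
      zero_add, zero_sub]
    ring_nf
  rw [hnorm]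
  have hexp : s.im * (θ * arg u) - (s.re * u.re - s.im * u.im) ≤
      s.im * u.im / 2 - s.re * u.re := by
    linarith [mul_le_mul_of_nonneg_left hrot hs]
  exact mul_le_mul (Real.rpow_le_rpow_of_exponent_le (hu₁.trans (re_le_norm u)) hexponent)
    (Real.exp_le_exp.2 hexp) (Real.exp_pos _).le (by positivity)

theorem exists_forall_norm_le (η θ d : ℝ) {ε : ℝ} (hε : 0 < ε) :
    ∃ C > 0, ∀ s u : ℂ, |s.re| ≤ d → 0 ≤ s.im → u.im ≤ 0 → 1 ≤ u.re → 2 * |θ| ≤ u.re →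
      ‖zetaTerm η θ s u‖ ≤ C * Real.exp ((ε - s.re) * u.re + (s.im / 2 - ε) * u.im) := by
  obtain ⟨C, hC, hC_le⟩ := exists_forall_rpow_le_mul_exp (|η| + d * |θ|) hε
  refine ⟨C, hC, fun s u hsd hs hu hu₁ hθ ↦ ?_⟩
  have hnorm_ge : 1 ≤ ‖u‖ := hu₁.trans (re_le_norm u)
  have hnorm_le : ‖u‖ ≤ u.re - u.im := by
    have := norm_le_abs_re_add_abs_im u
    rwa [abs_of_nonneg (zero_le_one.trans hu₁), abs_of_nonpos hu] at this
  calc ‖zetaTerm η θ s u‖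
      ≤ ‖u‖ ^ (|η| + |s.re| * |θ|) * Real.exp (s.im * u.im / 2 - s.re * u.re) :=
        norm_le_rpow_mul_exp hs hu hu₁ hθ
    _ ≤ ‖u‖ ^ (|η| + d * |θ|) * Real.exp (s.im * u.im / 2 - s.re * u.re) := by gcongr
    _ ≤ C * Real.exp (ε * (u.re - u.im)) * Real.exp (s.im * u.im / 2 - s.re * u.re) := by
        gcongr
        exact (hC_le _ hnorm_ge).trans (by gcongr)
    _ = C * Real.exp ((ε - s.re) * u.re + (s.im / 2 - ε) * u.im) := by
        rw [mul_assoc, ← Real.exp_add]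
        ring_nf

theorem exists_forall_norm_deriv_ofReal_le (η θ d : ℝ) {ε : ℝ} (hε : 0 < ε) :
    ∃ C > 0, ∀ (s : ℂ) (a u : ℝ), ε ≤ s.re → s.re ≤ d → 0 ≤ s.im → 1 ≤ a → 2 * |θ| ≤ a → a ≤ u →
      ‖zetaTerm η θ s u * ((η - s * θ) / u - s)‖ ≤
        C * (1 + ‖s‖) * Real.exp ((ε - s.re) * a) := by
  obtain ⟨C, hC, hC_le⟩ := exists_forall_norm_le η θ d hε
  refine ⟨C * (|η| + |θ| + 1), by positivity, fun s a u hεs hsd hs ha haθ hau ↦ ?_⟩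
  have hu : 1 ≤ u := ha.trans hau
  have hterm : ‖zetaTerm η θ s u‖ ≤ C * Real.exp ((ε - s.re) * a) :=
    calc ‖zetaTerm η θ s u‖ ≤ C * Real.exp ((ε - s.re) * u) := by
          simpa using hC_le s u (abs_le.2 ⟨by linarith, hsd⟩) hs (by simp) hu (haθ.trans hau)
      _ ≤ C * Real.exp ((ε - s.re) * a) := by
          gcongr C * Real.exp ?_
          exact mul_le_mul_of_nonpos_left hau (by linarith)
  have hu_norm : 1 ≤ ‖(u : ℂ)‖ := by rwa [norm_real, Real.norm_of_nonneg (by linarith)]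
  rw [norm_mul]
  exact (mul_le_mul hterm (norm_sub_div_sub_le η θ s hu_norm) (norm_nonneg _)
    (by positivity)).trans_eq (by ring)

end zetaTerm

section ZetaTail

variable {η θ : ℝ} {s : ℂ} {a b : ℝ}

theorem exists_forall_norm_exp_mul_zetaTerm_le (η θ d : ℝ) :
    ∃ C > 0, ∀ s u : ℂ, |s.re| ≤ d → 1 / 2 ≤ s.im → u.im ≤ 0 → 1 ≤ u.re → 2 * |θ| ≤ u.re →
      ‖exp u * zetaTerm η θ s u‖ ≤
        C * Real.exp ((9 / 8 - s.re) * u.re) * Real.exp (1 / 8 * u.im) := by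
  obtain ⟨C, hC, hC_le⟩ :=
    zetaTerm.exists_forall_norm_le η θ d (show (0 : ℝ) < 1 / 8 by norm_num)
  refine ⟨C, hC, fun s u hsd hs hu hu₁ hθ ↦ ?_⟩
  calc ‖exp u * zetaTerm η θ s u‖
      ≤ Real.exp u.re *
          (C * Real.exp ((1 / 8 - s.re) * u.re + (s.im / 2 - 1 / 8) * u.im)) := by
        rw [norm_mul, norm_exp]
        gcongr
        exact hC_le s u hsd (by linarith) hu hu₁ hθ
    _ = C * Real.exp ((9 / 8 - s.re) * u.re + (s.im / 2 - 1 / 8) * u.im) := by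
        rw [mul_left_comm, ← Real.exp_add]
        ring_nf
    _ ≤ C * Real.exp ((9 / 8 - s.re) * u.re + 1 / 8 * u.im) := by
        gcongr C * Real.exp (_ + ?_)
        exact mul_le_mul_of_nonpos_right (by linarith) hu
    _ = C * Real.exp ((9 / 8 - s.re) * u.re) * Real.exp (1 / 8 * u.im) := by
        rw [Real.exp_add, mul_assoc]

/-- The tail `∫ u in a..∞, exp u * zetaTerm η θ s u` of the integral with which `ζ_{η,θ}(s)` is
compared, taken along the vertical ray from `a` to `a - i∞` instead of `[a, ∞)`, so that it
converges for all `s` in the upper half-plane. -/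
noncomputable def zetaTail (η θ a : ℝ) (s : ℂ) : ℂ :=
  verticalTail (fun u ↦ exp u * zetaTerm η θ s u) a

theorem exists_forall_norm_zetaTail_le (η θ d : ℝ) :
    ∃ C > 0, ∀ (s : ℂ) (a : ℝ), |s.re| ≤ d → 1 / 2 ≤ s.im → 1 ≤ a → 2 * |θ| ≤ a →
      ‖zetaTail η θ a s‖ ≤ C * Real.exp ((9 / 8 - s.re) * a) := by
  obtain ⟨C, hC, hC_le⟩ := exists_forall_norm_exp_mul_zetaTerm_le η θ d
  refine ⟨C / (1 / 8), by positivity, fun s a hsd hs ha haθ ↦ ?_⟩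
  rw [div_mul_eq_mul_div]
  refine norm_verticalTail_le (by norm_num) fun y hy ↦ ?_
  simpa using hC_le s (a + y * I) hsd hs (by simpa) (by simpa) (by simpa)

theorem tendsto_zetaTail_atTop (hre : 2 < s.re) (him : 1 / 2 ≤ s.im) :
    Tendsto (fun a ↦ zetaTail η θ a s) atTop (𝓝 0) := by
  obtain ⟨C, -, hC_le⟩ := exists_forall_norm_zetaTail_le η θ |s.re|
  have hlim : Tendsto (fun a ↦ C * Real.exp ((9 / 8 - s.re) * a)) atTop (𝓝 0) := by
    simpa using (Real.tendsto_exp_atBot.comp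
      (tendsto_id.const_mul_atTop_of_neg (show 9 / 8 - s.re < 0 by linarith))).const_mul C
  refine squeeze_zero_norm' ?_ hlim
  filter_upwards [eventually_ge_atTop 1, eventually_ge_atTop (2 * |θ|)] with a ha haθ
  exact hC_le s a le_rfl him ha haθ

theorem differentiableOn_exp_mul_zetaTerm :
    DifferentiableOn ℂ (fun u ↦ exp u * zetaTerm η θ s u) slitPlane := fun _ hu ↦
  (differentiable_exp.differentiableAt.mul
    (zetaTerm.hasDerivAt_right hu).differentiableAt).differentiableWithinAt

theorem differentiableOn_zetaTail (ha : 1 ≤ a) (haθ : 2 * |θ| ≤ a) :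
    DifferentiableOn ℂ (zetaTail η θ a) {s | 1 / 2 < s.im} := by
  intro s₀ hs₀
  set U : Set ℂ := {s | |s.re| < |s₀.re| + 1} ∩ {s | 1 / 2 < s.im}
  have hU : IsOpen U := (isOpen_lt (by fun_prop) (by fun_prop)).inter
    (isOpen_lt (by fun_prop) (by fun_prop))
  have hs₀U : s₀ ∈ U := ⟨lt_add_one |s₀.re|, hs₀⟩
  obtain ⟨C, hC, hC_le⟩ := exists_forall_norm_exp_mul_zetaTerm_le η θ (|s₀.re| + 1)
  have hslit : ∀ y : ℝ, (a + y * I : ℂ) ∈ slitPlane := fun y ↦ .inl (by simp; linarith)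
  suffices DifferentiableOn ℂ (zetaTail η θ a) U from
    (this.differentiableAt (hU.mem_nhds hs₀U)).differentiableWithinAt
  refine differentiableOn_verticalTail (δ := 1 / 8)
    (K := C * Real.exp ((9 / 8 + (|s₀.re| + 1)) * a)) hU (by norm_num) (fun s _ ↦ ?_)
    (fun y _ ↦ ?_) fun s hs y hy ↦ ?_
  · exact differentiableOn_exp_mul_zetaTerm.continuousOn.comp (by fun_prop) fun y _ ↦ hslit y
  · have hterm := zetaTerm.differentiable_left (η := η) (θ := θ) (slitPlane_ne_zero (hslit y))
    exact (hterm.const_mul _).differentiableOn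
  · have hbound := hC_le s (a + y * I) hs.1.le hs.2.le (by simpa) (by simpa) (by simpa)
    simp only [add_re, ofReal_re, mul_re, I_re, mul_zero, ofReal_im, I_im, mul_one, sub_self,
      add_zero, add_im, mul_im, zero_add] at hbound
    refine hbound.trans ?_
    gcongr
    have hs_re : |s.re| < |s₀.re| + 1 := hs.1
    linarith [neg_abs_le s.re]

theorem zetaTail_sub_zetaTail (hs : 1 / 2 ≤ s.im) (ha : 1 ≤ a) (haθ : 2 * |θ| ≤ a) (hab : a ≤ b) :
    zetaTail η θ a s - zetaTail η θ b s = ∫ u in a..b, Real.exp u • zetaTerm η θ s u := by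
  obtain ⟨C, hC, hC_le⟩ := exists_forall_norm_exp_mul_zetaTerm_le η θ |s.re|
  have hslit : Icc a b ×ℂ Iic 0 ⊆ slitPlane := fun u hu ↦
    .inl (zero_lt_one.trans_le (ha.trans hu.1.1))
  rw [zetaTail, zetaTail, verticalTail_sub_verticalTail (δ := 1 / 8)
    (K := C * Real.exp (|9 / 8 - s.re| * b)) hab (by norm_num)
    (differentiableOn_exp_mul_zetaTerm.mono hslit)]
  · simp only [real_smul, ofReal_exp]
  · intro u ⟨hu_re, hu_im⟩
    refine (hC_le s u le_rfl hs hu_im (ha.trans hu_re.1) (haθ.trans hu_re.1)).trans ?_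
    have : 0 ≤ u.re := zero_le_one.trans (ha.trans hu_re.1)
    gcongr
    · exact le_abs_self _
    · exact hu_re.2

theorem log_add_one_sub_log_le {x : ℝ} (hx : 0 < x) : Real.log (x + 1) - Real.log x ≤ x⁻¹ :=
  calc Real.log (x + 1) - Real.log x = Real.log ((x + 1) / x) :=
        (Real.log_div (by positivity) hx.ne').symm
    _ ≤ (x + 1) / x - 1 := Real.log_le_sub_one_of_pos (by positivity)
    _ = x⁻¹ := by field_simp; ring

theorem exists_forall_norm_zetaTerm_sub_zetaTail_sub_le (η θ d : ℝ) {ε : ℝ} (hε : 0 < ε) :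
    ∃ C > 0, ∀ (s : ℂ) (x : ℝ), ε ≤ s.re → s.re ≤ d → 1 / 2 ≤ s.im → 0 < x →
      1 ≤ Real.log x → 2 * |θ| ≤ Real.log x →
      ‖zetaTerm η θ s (Real.log x) -
          (zetaTail η θ (Real.log x) s - zetaTail η θ (Real.log (x + 1)) s)‖ ≤
        C * (1 + ‖s‖) * x ^ (ε - s.re - 1) := by
  obtain ⟨C, hC, hC_le⟩ := zetaTerm.exists_forall_norm_deriv_ofReal_le η θ d hε
  refine ⟨C, hC, fun s x hεs hsd hs hx hlog hlogθ ↦ ?_⟩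
  have hlog_le : Real.log x ≤ Real.log (x + 1) := Real.log_le_log hx (by linarith)
  have hderiv : ∀ u ∈ Icc (Real.log x) (Real.log (x + 1)),
      HasDerivWithinAt (fun u : ℝ ↦ zetaTerm η θ s u)
        (zetaTerm η θ s u * ((η - s * θ) / u - s)) (Icc (Real.log x) (Real.log (x + 1))) u :=
    fun u hu ↦ (zetaTerm.hasDerivAt_right
      (.inl (zero_lt_one.trans_le (hlog.trans hu.1)))).comp_ofReal.hasDerivWithinAt
  have hcompare := norm_sub_integral_exp_smul_le hlog_le hderiv fun u hu ↦
    hC_le s (Real.log x) u hεs hsd (by linarith) hlog hlogθ hu.1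
  rw [Real.exp_log hx, Real.exp_log (by positivity), add_sub_cancel_left, one_smul,
    ← zetaTail_sub_zetaTail hs hlog hlogθ hlog_le, mul_one] at hcompare
  calc ‖zetaTerm η θ s (Real.log x) -
        (zetaTail η θ (Real.log x) s - zetaTail η θ (Real.log (x + 1)) s)‖
      ≤ (Real.log (x + 1) - Real.log x) *
          (C * (1 + ‖s‖) * Real.exp ((ε - s.re) * Real.log x)) := hcompare
    _ ≤ x⁻¹ * (C * (1 + ‖s‖) * Real.exp ((ε - s.re) * Real.log x)) := by
        gcongr
        exact log_add_one_sub_log_le hx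
    _ = C * (1 + ‖s‖) * x ^ (ε - s.re - 1) := by
        rw [Real.rpow_sub_one hx.ne', Real.rpow_def_of_pos hx, mul_comm (Real.log x)]
        ring

end ZetaTail

theorem summable_add_natCast_rpow_neg {x p : ℝ} (hx : 0 < x) (hp : 1 < p) :
    Summable fun n : ℕ ↦ (x + n) ^ (-p) :=
  ((Real.summable_one_div_nat_add_rpow x p).2 hp).congr fun n ↦ by
    rw [abs_of_nonneg (by positivity), Real.rpow_neg (by positivity), one_div, add_comm x]

theorem tendsto_log_add_natCast_atTop (x : ℝ) :
    Tendsto (fun n : ℕ ↦ Real.log (x + n)) atTop atTop :=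
  Real.tendsto_log_atTop.comp (tendsto_atTop_add_const_left _ _ tendsto_natCast_atTop_atTop)

theorem summable_zetaTerm_log_add {x : ℝ} (hx : 0 < x) (η θ : ℝ) {s : ℂ} (hs : 1 < s.re) :
    Summable fun n : ℕ ↦ zetaTerm η θ s (Real.log (x + n)) := by
  obtain ⟨C, -, hC_le⟩ :=
    exists_forall_rpow_le_mul_exp (η - s.re * θ) (show 0 < (s.re - 1) / 2 by linarith)
  refine .of_norm_bounded_eventually_nat ((summable_add_natCast_rpow_neg hx
    (show 1 < (s.re + 1) / 2 by linarith)).mul_left C) ?_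
  filter_upwards [(tendsto_log_add_natCast_atTop x).eventually_ge_atTop 1] with n hn
  calc ‖zetaTerm η θ s (Real.log (x + n))‖
      = Real.log (x + n) ^ (η - s.re * θ) * Real.exp (-(s.re * Real.log (x + n))) :=
        zetaTerm.norm_ofReal (by linarith)
    _ ≤ C * Real.exp ((s.re - 1) / 2 * Real.log (x + n)) *
          Real.exp (-(s.re * Real.log (x + n))) := by
        gcongr
        exact hC_le _ hn
    _ = C * (x + n) ^ (-((s.re + 1) / 2)) := by
        rw [Real.rpow_def_of_pos (by positivity), mul_assoc, ← Real.exp_add]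
        ring_nf

theorem hasSum_zetaTerm_log (η θ : ℝ) {s : ℂ} (hs : 1 < s.re) :
    HasSum (fun n : ℕ ↦ zetaTerm η θ s (Real.log (n + 2)))
      (∑' n : ℕ, ((Real.log (n + 2) ^ η : ℝ) : ℂ) *
        exp (-s * ((Real.log (n + 2) : ℝ) + θ * Real.log (Real.log (n + 2))))) := by
  rw [← tsum_congr fun n : ℕ ↦
    zetaTerm.ofReal_log (x := n + 2) (by linarith [n.cast_nonneg (α := ℝ)]) s]
  simpa only [add_comm] using (summable_zetaTerm_log_add two_pos η θ hs).hasSum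

section UpperHalfPlane

variable {η θ : ℝ} {F : ℂ → ℂ} {x : ℝ}

theorem norm_sub_zetaTail_le_tsum (hx : 0 < x) (hlog : 1 ≤ Real.log x)
    (hlogθ : 2 * |θ| ≤ Real.log x) (hF : DifferentiableOn ℂ F {s | 0 < s.im})
    (hF_sum : ∀ s : ℂ, 1 < s.re → 0 < s.im →
      HasSum (fun n : ℕ ↦ zetaTerm η θ s (Real.log (x + n))) (F s))
    {c d T : ℝ} (hcd : c < d) (hd : 2 < d) (hT : 1 / 2 < T) {w : ℕ → ℝ} (hw : Summable w)
    (hle : ∀ n : ℕ, ∀ s ∈ Ioo c d ×ℂ Ioo (1 / 2) T, ‖zetaTerm η θ s (Real.log (x + n)) -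
      (zetaTail η θ (Real.log (x + n)) s - zetaTail η θ (Real.log (x + n + 1)) s)‖ ≤ w n)
    {s : ℂ} (hs : s ∈ Ioo c d ×ℂ Ioo (1 / 2) T) :
    ‖F s - zetaTail η θ (Real.log x) s‖ ≤ ∑' n, w n := by
  have hlog_le (n : ℕ) : Real.log x ≤ Real.log (x + n) := Real.log_le_log hx (by simp)
  have hU : IsOpen (Ioo c d ×ℂ Ioo (1 / 2) T) := isOpen_Ioo.reProdIm isOpen_Ioo
  have hU' : IsPreconnected (Ioo c d ×ℂ Ioo (1 / 2) T) :=
    (((convex_Ioo c d).linear_preimage reLm).inter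
      ((convex_Ioo _ T).linear_preimage imLm)).isPreconnected
  obtain ⟨σ, hσ, hσd⟩ := exists_between (max_lt hcd hd)
  obtain ⟨t, ht, htT⟩ := exists_between hT
  have hz₀ : (⟨σ, t⟩ : ℂ) ∈ Ioo c d ×ℂ Ioo (1 / 2) T :=
    ⟨⟨(le_max_left _ _).trans_lt hσ, hσd⟩, ht, htT⟩
  have hnear : ∀ᶠ z : ℂ in 𝓝 ⟨σ, t⟩, 2 < z.re ∧ 1 / 2 < z.im :=
    ((isOpen_lt continuous_const continuous_re).inter
      (isOpen_lt continuous_const continuous_im)).mem_nhds ⟨(le_max_right _ _).trans_lt hσ, ht⟩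
  simpa using norm_sub_le_tsum_of_telescoping hU hU'
    (T := fun n s ↦ zetaTail η θ (Real.log (x + n)) s)
    (hF.mono fun z hz ↦ (show (0 : ℝ) < 1 / 2 by norm_num).trans hz.2.1)
    (fun n ↦ (zetaTerm.differentiable_left (ofReal_ne_zero.2
      (zero_lt_one.trans_le (hlog.trans (hlog_le n))).ne')).differentiableOn)
    (fun n ↦ (differentiableOn_zetaTail (hlog.trans (hlog_le n))
      (hlogθ.trans (hlog_le n))).mono fun z hz ↦ hz.2.1)
    hw (by simpa only [Nat.cast_succ, ← add_assoc] using hle) hz₀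
    (hnear.mono fun z hz ↦ hF_sum z (by linarith) (by linarith))
    (hnear.mono fun z hz ↦
      (tendsto_zetaTail_atTop hz.1 hz.2.le).comp (tendsto_log_add_natCast_atTop x)) hs

theorem exists_forall_norm_sub_zetaTail_le (hx : 0 < x) (hlog : 1 ≤ Real.log x)
    (hlogθ : 2 * |θ| ≤ Real.log x) (hF : DifferentiableOn ℂ F {s | 0 < s.im})
    (hF_sum : ∀ s : ℂ, 1 < s.re → 0 < s.im →
      HasSum (fun n : ℕ ↦ zetaTerm η θ s (Real.log (x + n))) (F s))
    {σ₁ : ℝ} (hσ₁ : 0 < σ₁) (σ₂ : ℝ) :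
    ∃ C ≥ 0, ∀ s : ℂ, σ₁ ≤ s.re → s.re ≤ σ₂ → 1 ≤ s.im →
      ‖F s - zetaTail η θ (Real.log x) s‖ ≤ C * (1 + s.im) := by
  set d := |σ₂| + 3
  obtain ⟨C, hC, hC_le⟩ := exists_forall_norm_zetaTerm_sub_zetaTail_sub_le η θ d
    (show 0 < σ₁ / 4 by positivity)
  set W := ∑' n : ℕ, (x + n) ^ (-(1 + σ₁ / 4))
  have hweight : Summable fun n : ℕ ↦ (x + n) ^ (-(1 + σ₁ / 4)) :=
    summable_add_natCast_rpow_neg hx (by linarith)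
  refine ⟨C * (2 + d) * W, by positivity, fun s hs₁ hs₂ hs ↦ ?_⟩
  have hσ₂ : s.re ≤ |σ₂| := hs₂.trans (le_abs_self σ₂)
  calc ‖F s - zetaTail η θ (Real.log x) s‖
      ≤ ∑' n : ℕ, C * (2 + d + s.im) * (x + n) ^ (-(1 + σ₁ / 4)) := by
        refine norm_sub_zetaTail_le_tsum hx hlog hlogθ hF hF_sum (c := σ₁ / 2) (d := d)
          (T := s.im + 1) (by linarith) (by linarith) (by linarith) (hweight.mul_left _)
          (fun n z ⟨hz_re, hz_im⟩ ↦ ?_) ⟨⟨by linarith, by linarith⟩, by linarith, by linarith⟩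
        have hx₁ : 1 < x := (Real.log_pos_iff hx.le).1 (zero_lt_one.trans_le hlog)
        have hlog_le : Real.log x ≤ Real.log (x + n) := Real.log_le_log hx (by simp)
        have hz_norm : ‖z‖ ≤ d + (s.im + 1) := by
          refine (norm_le_abs_re_add_abs_im z).trans ?_
          rw [abs_of_pos (by linarith [hz_re.1]), abs_of_pos (by linarith [hz_im.1])]
          exact add_le_add hz_re.2.le hz_im.2.le
        refine (hC_le z (x + n) (by linarith [hz_re.1]) hz_re.2.le hz_im.1.le (by positivity)
          (hlog.trans hlog_le) (hlogθ.trans hlog_le)).trans ?_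
        gcongr C * ?_ * ?_
        · linarith
        · exact Real.rpow_le_rpow_of_exponent_le (by linarith [n.cast_nonneg (α := ℝ)])
            (by linarith [hz_re.1])
    _ = C * (2 + d + s.im) * W := tsum_mul_left
    _ ≤ C * (2 + d) * W * (1 + s.im) := by
        have hfactor : 2 + d + s.im ≤ (2 + d) * (1 + s.im) := by
          nlinarith [show 0 ≤ d by positivity]
        exact (by gcongr : _ ≤ C * ((2 + d) * (1 + s.im)) * W).trans_eq (by ring)

theorem exists_forall_norm_le_of_hasSum_zetaTerm_log_add (hx : 0 < x) (hlog : 1 ≤ Real.log x)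
    (hlogθ : 2 * |θ| ≤ Real.log x) (hF : DifferentiableOn ℂ F {s | 0 < s.im})
    (hF_sum : ∀ s : ℂ, 1 < s.re → 0 < s.im →
      HasSum (fun n : ℕ ↦ zetaTerm η θ s (Real.log (x + n))) (F s))
    {σ₁ : ℝ} (hσ₁ : 0 < σ₁) (σ₂ : ℝ) :
    ∃ C > 0, ∀ s : ℂ, σ₁ ≤ s.re → s.re ≤ σ₂ → 1 ≤ s.im → ‖F s‖ ≤ C * (1 + s.im) := by
  obtain ⟨C₁, hC₁, hC₁_le⟩ := exists_forall_norm_sub_zetaTail_le hx hlog hlogθ hF hF_sum hσ₁ σ₂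
  obtain ⟨C₂, hC₂, hC₂_le⟩ := exists_forall_norm_zetaTail_le η θ σ₂
  refine ⟨C₁ + C₂ * Real.exp (9 / 8 * Real.log x), by positivity, fun s hs₁ hs₂ hs ↦ ?_⟩
  calc ‖F s‖ ≤ ‖F s - zetaTail η θ (Real.log x) s‖ + ‖zetaTail η θ (Real.log x) s‖ :=
        norm_le_norm_sub_add _ _
    _ ≤ C₁ * (1 + s.im) + C₂ * Real.exp ((9 / 8 - s.re) * Real.log x) :=
        add_le_add (hC₁_le s hs₁ hs₂ hs) (hC₂_le s _ (abs_le.2 ⟨by linarith, hs₂⟩)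
          (by linarith) hlog hlogθ)
    _ ≤ C₁ * (1 + s.im) + C₂ * Real.exp (9 / 8 * Real.log x) * (1 + s.im) := by
        gcongr _ + ?_
        refine (?_ : _ ≤ C₂ * Real.exp (9 / 8 * Real.log x)).trans
          (le_mul_of_one_le_right (by positivity) (by linarith))
        gcongr
        linarith
    _ = (C₁ + C₂ * Real.exp (9 / 8 * Real.log x)) * (1 + s.im) := (add_mul _ _ _).symm

theorem exists_forall_norm_zetaTerm_log_le (η θ : ℝ) (hx : 1 < x) (σ₁ σ₂ : ℝ) :
    ∃ C, ∀ s : ℂ, σ₁ ≤ s.re → s.re ≤ σ₂ → ‖zetaTerm η θ s (Real.log x)‖ ≤ C := by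
  have hlog : 0 < Real.log x := Real.log_pos hx
  have hcont : Continuous fun σ : ℝ ↦ zetaTerm η θ σ (Real.log x) :=
    (zetaTerm.differentiable_left (ofReal_ne_zero.2 hlog.ne')).continuous.comp continuous_ofReal
  obtain ⟨C, hC⟩ := isCompact_Icc.exists_bound_of_continuousOn (hcont.continuousOn (s := Icc σ₁ σ₂))
  refine ⟨C, fun s hs₁ hs₂ ↦ ?_⟩
  have hre := hC s.re ⟨hs₁, hs₂⟩
  rwa [zetaTerm.norm_ofReal hlog, ofReal_re, ← zetaTerm.norm_ofReal hlog] at hre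

theorem exists_forall_norm_sum_zetaTerm_log_le (η θ : ℝ) (N : ℕ) (σ₁ σ₂ : ℝ) :
    ∃ C ≥ 0, ∀ s : ℂ, σ₁ ≤ s.re → s.re ≤ σ₂ →
      ‖∑ n ∈ Finset.range N, zetaTerm η θ s (Real.log (n + 2))‖ ≤ C := by
  choose B hB using fun n : ℕ ↦ exists_forall_norm_zetaTerm_log_le η θ
    (show (1 : ℝ) < n + 2 by linarith [n.cast_nonneg (α := ℝ)]) σ₁ σ₂
  exact ⟨∑ n ∈ Finset.range N, |B n|, by positivity, fun s hs₁ hs₂ ↦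
    norm_sum_le_of_le _ fun n _ ↦ (hB n s hs₁ hs₂).trans (le_abs_self _)⟩

theorem exists_forall_norm_le_of_hasSum_zetaTerm_log (hF : DifferentiableOn ℂ F {s | 0 < s.im})
    (hF_sum : ∀ s : ℂ, 1 < s.re → 0 < s.im →
      HasSum (fun n : ℕ ↦ zetaTerm η θ s (Real.log (n + 2))) (F s))
    {σ₁ : ℝ} (hσ₁ : 0 < σ₁) (σ₂ : ℝ) :
    ∃ C > 0, ∀ s : ℂ, σ₁ ≤ s.re → s.re ≤ σ₂ → 1 ≤ s.im → ‖F s‖ ≤ C * (1 + s.im) := by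
  obtain ⟨N, hN, hNθ⟩ : ∃ N : ℕ, 1 ≤ Real.log (2 + N) ∧ 2 * |θ| ≤ Real.log (2 + N) :=
    (((tendsto_log_add_natCast_atTop 2).eventually_ge_atTop 1).and
      ((tendsto_log_add_natCast_atTop 2).eventually_ge_atTop (2 * |θ|))).exists
  set head : ℂ → ℂ := fun s ↦ ∑ n ∈ Finset.range N, zetaTerm η θ s (Real.log (n + 2))
  have hhead_diff : Differentiable ℂ head := .fun_sum fun n _ ↦
    zetaTerm.differentiable_left
      (ofReal_ne_zero.2 (Real.log_pos (by linarith [n.cast_nonneg (α := ℝ)])).ne')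
  have htail_sum (s : ℂ) (hre : 1 < s.re) (him : 0 < s.im) :
      HasSum (fun n : ℕ ↦ zetaTerm η θ s (Real.log (2 + N + n))) (F s - head s) := by
    refine ((hasSum_nat_add_iff' N).2 (hF_sum s hre him)).congr_fun fun n ↦ ?_
    push_cast
    ring_nf
  obtain ⟨C₁, hC₁, hC₁_le⟩ := exists_forall_norm_le_of_hasSum_zetaTerm_log_add (by positivity)
    hN hNθ (hF.sub hhead_diff.differentiableOn) htail_sum hσ₁ σ₂
  obtain ⟨C₂, hC₂, hC₂_le⟩ := exists_forall_norm_sum_zetaTerm_log_le η θ N σ₁ σ₂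
  refine ⟨C₁ + C₂, by positivity, fun s hs₁ hs₂ hs ↦ ?_⟩
  calc ‖F s‖ ≤ ‖F s - head s‖ + ‖head s‖ := norm_le_norm_sub_add _ _
    _ ≤ C₁ * (1 + s.im) + C₂ := add_le_add (hC₁_le s hs₁ hs₂ hs) (hC₂_le s hs₁ hs₂)
    _ ≤ C₁ * (1 + s.im) + C₂ * (1 + s.im) := by
        gcongr
        exact le_mul_of_one_le_right hC₂ (by linarith)
    _ = (C₁ + C₂) * (1 + s.im) := (add_mul _ _ _).symm

end UpperHalfPlane

theorem exists_forall_norm_le_mul_one_add_abs_im {η θ : ℝ} {F : ℂ → ℂ}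
    (hF : ∀ s : ℂ, s.im ≠ 0 → DifferentiableAt ℂ F s)
    (hF_sum : ∀ s : ℂ, 1 < s.re → s.im ≠ 0 →
      HasSum (fun n : ℕ ↦ zetaTerm η θ s (Real.log (n + 2))) (F s))
    {σ₁ : ℝ} (hσ₁ : 0 < σ₁) (σ₂ : ℝ) :
    ∃ C > 0, ∀ s : ℂ, σ₁ ≤ s.re → s.re ≤ σ₂ → 1 ≤ |s.im| → ‖F s‖ ≤ C * (1 + |s.im|) := by
  set G : ℂ → ℂ := fun s ↦ conj (F (conj s))
  have hG (s : ℂ) (hs : 0 < s.im) : DifferentiableAt ℂ G s :=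
    differentiableAt_conj_conj_iff.2 (hF _ (by simpa using hs.ne'))
  have hG_sum (s : ℂ) (hre : 1 < s.re) (him : 0 < s.im) :
      HasSum (fun n : ℕ ↦ zetaTerm η θ s (Real.log (n + 2))) (G s) := by
    have hsum := hasSum_conj'.2 (hF_sum (conj s) (by simpa) (by simpa using him.ne'))
    refine hsum.congr_fun fun n ↦ (zetaTerm.conj_ofReal (Real.log_nonneg ?_)).symm
    linarith [n.cast_nonneg (α := ℝ)]
  obtain ⟨C₁, hC₁, hupper⟩ := exists_forall_norm_le_of_hasSum_zetaTerm_log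
    (fun s hs ↦ (hF s (ne_of_gt hs)).differentiableWithinAt)
    (fun s hre him ↦ hF_sum s hre him.ne') hσ₁ σ₂
  obtain ⟨C₂, hC₂, hlower⟩ := exists_forall_norm_le_of_hasSum_zetaTerm_log
    (fun s hs ↦ (hG s hs).differentiableWithinAt) hG_sum hσ₁ σ₂
  refine ⟨C₁ + C₂, by positivity, fun s hs₁ hs₂ hs ↦ ?_⟩
  have him_nonneg : 0 ≤ 1 + |s.im| := by positivity
  rw [add_mul]
  rcases le_total 0 s.im with him | him
  · rw [abs_of_nonneg him] at hs him_nonneg ⊢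
    exact (hupper s hs₁ hs₂ hs).trans (le_add_of_nonneg_right (by positivity))
  · rw [abs_of_nonpos him] at hs him_nonneg ⊢
    refine (?_ : ‖F s‖ ≤ C₂ * (1 + -s.im)).trans (le_add_of_nonneg_left (by positivity))
    simpa [G] using hlower (conj s) (by simpa) (by simpa) (by simpa)

/-- Lemma 2.2 (polynomial growth): the analytic continuation `F` of
`ζ_{η,θ}` to `ℂ \ (−∞, 1]` grows at most polynomially in `|Im s|` on vertical
strips with bounded positive real part. -/
theorem zeta_eta_theta_polynomial_growth (η θ : ℝ)
    (F : ℂ → ℂ)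
    (hF_diff : DifferentiableOn ℂ F {s : ℂ | ¬(s.im = 0 ∧ s.re ≤ 1)})
    (hF_eq : ∀ s : ℂ, 1 < s.re →
      F s = ∑' n : ℕ,
        ((Real.log ((n : ℝ) + 2)) ^ η : ℝ) *
          Complex.exp (-s * ((Real.log ((n : ℝ) + 2) : ℝ)
            + θ * Real.log (Real.log ((n : ℝ) + 2))))) :
    ∀ σ₁ σ₂ : ℝ, 0 < σ₁ → σ₁ ≤ σ₂ →
      ∃ C > (0 : ℝ), ∃ k : ℕ, ∀ s : ℂ,
        σ₁ ≤ s.re → s.re ≤ σ₂ → 1 ≤ |s.im| →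
        ‖F s‖ ≤ C * (1 + |s.im|) ^ k := by
  intro σ₁ σ₂ hσ₁ _
  have hF_at (s : ℂ) (hs : s.im ≠ 0) : DifferentiableAt ℂ F s :=
    hF_diff.differentiableAt (mem_of_superset
      ((isOpen_ne_fun continuous_im continuous_const).mem_nhds hs) fun z hz h ↦ hz h.1)
  have hF_sum (s : ℂ) (hs : 1 < s.re) :
      HasSum (fun n : ℕ ↦ zetaTerm η θ s (Real.log (n + 2))) (F s) :=
    hF_eq s hs ▸ hasSum_zetaTerm_log η θ hs
  obtain ⟨C, hC, hC_le⟩ :=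
    exists_forall_norm_le_mul_one_add_abs_im hF_at (fun s hs _ ↦ hF_sum s hs) hσ₁ σ₂
  exact ⟨C, hC, 1, by simpa only [pow_one] using hC_le⟩
end

section
/- Let η(s) := Σ_{n=0}^∞ (n!)^{−s}, which converges absolutely and defines an analytic function on the right half-plane {s ∈ ℂ : Re(s) > 0}. Then s·log(1/s)·η(s) → 1 as s → 0 along the positive real axis. -/
open Filter Real

/-!
Both bounds compare `η(s) = ∑ exp (-s log n!)` with a geometric series. By `M ^ n / n! ≤ exp M`
with `M = exp m`, the sequence `log n!` lies above the line `n m - exp m`, whence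
`η(s) ≤ exp (s exp m) (1 + 1 / (s m))`. Conversely `log n! ≤ n log y` for `n ≤ y`, so the terms
with `n ≤ y` dominate a geometric progression of ratio `exp (-s log y)`. Write `L = log (1 / s)`.
Choosing `m = L - log L` keeps `s exp m = 1 / L` small while `m ∼ L`; choosing `y = 1 / s` makes
the truncated tail of the progression at most `s`. Together,
`1 - s ≤ s L η(s) ≤ exp (1 / L) (s L + L / (L - log L))`, and both ends tend to `1`.
-/

open scoped Topology

theorem inv_one_sub_exp_neg_le {x : ℝ} (hx : 0 < x) : (1 - exp (-x))⁻¹ ≤ 1 + x⁻¹ := by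
  have exp_neg_le : exp (-x) ≤ (1 + x)⁻¹ := by
    rw [exp_neg]
    exact inv_anti₀ (by positivity) (by linarith [add_one_le_exp x])
  calc (1 - exp (-x))⁻¹ ≤ (1 - (1 + x)⁻¹)⁻¹ := by
        refine inv_anti₀ (sub_pos.2 (inv_lt_one_of_one_lt₀ ?_)) ?_ <;> linarith
    _ = 1 + x⁻¹ := by
        have : 1 - (1 + x)⁻¹ = x / (1 + x) := by
          field_simp
          ring
        rw [this, inv_div, add_div, div_self hx.ne', one_div, add_comm]

section ExponentialSeries

variable {a : ℕ → ℝ} {s m c : ℝ}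

theorem exp_neg_mul_le_of_line_le (hs : 0 ≤ s) (ha : ∀ n : ℕ, n * m - c ≤ a n) (n : ℕ) :
    exp (-s * a n) ≤ exp (s * c) * exp (-(s * m)) ^ n := by
  rw [← exp_nat_mul, ← exp_add, exp_le_exp]
  linarith [mul_le_mul_of_nonneg_left (ha n) hs]

theorem hasSum_exp_mul_exp_neg_pow (c : ℝ) (hs : 0 < s) (hm : 0 < m) :
    HasSum (fun n : ℕ ↦ exp (s * c) * exp (-(s * m)) ^ n)
      (exp (s * c) * (1 - exp (-(s * m)))⁻¹) :=
  (hasSum_geometric_of_lt_one (exp_nonneg _)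
    (exp_lt_one_iff.2 (neg_neg_of_pos (mul_pos hs hm)))).mul_left _

theorem summable_exp_neg_mul_of_line_le (hs : 0 < s) (hm : 0 < m)
    (ha : ∀ n : ℕ, n * m - c ≤ a n) : Summable fun n ↦ exp (-s * a n) :=
  .of_nonneg_of_le (fun _ ↦ exp_nonneg _) (exp_neg_mul_le_of_line_le hs.le ha)
    (hasSum_exp_mul_exp_neg_pow c hs hm).summable

theorem tsum_exp_neg_mul_le_of_line_le (hs : 0 < s) (hm : 0 < m)
    (ha : ∀ n : ℕ, n * m - c ≤ a n) :
    ∑' n, exp (-s * a n) ≤ exp (s * c) * (1 + (s * m)⁻¹) :=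
  calc ∑' n, exp (-s * a n) ≤ exp (s * c) * (1 - exp (-(s * m)))⁻¹ :=
        hasSum_le (exp_neg_mul_le_of_line_le hs.le ha)
          (summable_exp_neg_mul_of_line_le hs hm ha).hasSum (hasSum_exp_mul_exp_neg_pow c hs hm)
    _ ≤ exp (s * c) * (1 + (s * m)⁻¹) := by
        gcongr
        exact inv_one_sub_exp_neg_le (mul_pos hs hm)

theorem one_sub_exp_neg_le_mul_tsum_exp_neg_mul {N : ℕ} (hs : 0 ≤ s) (hm : 0 ≤ m)
    (ha : ∀ n < N, a n ≤ n * m) (hsum : Summable fun n ↦ exp (-s * a n)) :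
    1 - exp (-(s * m * N)) ≤ s * m * ∑' n, exp (-s * a n) := by
  have geometric_le (n : ℕ) (hn : n < N) : exp (-(s * m)) ^ n ≤ exp (-s * a n) := by
    rw [← exp_nat_mul, exp_le_exp]
    linarith [mul_le_mul_of_nonneg_left (ha n hn) hs]
  calc 1 - exp (-(s * m * N))
      = (1 - exp (-(s * m))) * ∑ n ∈ Finset.range N, exp (-(s * m)) ^ n := by
        rw [mul_neg_geom_sum, ← exp_nat_mul]
        ring_nf
    _ ≤ s * m * ∑ n ∈ Finset.range N, exp (-(s * m)) ^ n := by
        gcongr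
        linarith [one_sub_le_exp_neg (s * m)]
    _ ≤ s * m * ∑ n ∈ Finset.range N, exp (-s * a n) := by
        gcongr with n hn
        exact geometric_le n (Finset.mem_range.1 hn)
    _ ≤ s * m * ∑' n, exp (-s * a n) := by
        gcongr
        exact hsum.sum_le_tsum _ fun _ _ ↦ exp_nonneg _

end ExponentialSeries

theorem mul_sub_exp_le_log_factorial (m : ℝ) (n : ℕ) :
    n * m - exp m ≤ log (n.factorial : ℝ) := by
  have log_le := log_le_log (by positivity) (pow_div_factorial_le_exp _ (exp_nonneg m) n)
  rw [log_div (by positivity) (by positivity), log_pow, log_exp, log_exp] at log_le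
  linarith

theorem log_factorial_le_mul_log {n : ℕ} {y : ℝ} (hny : n ≤ y) :
    log (n.factorial : ℝ) ≤ n * log y := by
  rw [← log_pow]
  refine log_le_log (by positivity) ?_
  calc (n.factorial : ℝ) ≤ (n : ℝ) ^ n := mod_cast n.factorial_le_pow
    _ ≤ y ^ n := by gcongr

/-- The factorial Dirichlet series `η(s) = ∑ (n!)^(-s)`, restricted to real `s`. It diverges for
`s ≤ 0`, where its value is the junk value `0` of `tsum`. -/
noncomputable def factorialDirichletSeries (s : ℝ) : ℝ :=
  ∑' n : ℕ, exp (-s * log (n.factorial : ℝ))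

namespace factorialDirichletSeries

variable {s : ℝ}

theorem summable (hs : 0 < s) : Summable fun n : ℕ ↦ exp (-s * log (n.factorial : ℝ)) :=
  summable_exp_neg_mul_of_line_le hs one_pos (mul_sub_exp_le_log_factorial 1)

theorem one_sub_le_mul_log_mul (hs : 0 < s) (hs1 : s ≤ 1) :
    1 - s ≤ s * log (1 / s) * factorialDirichletSeries s := by
  have log_nonneg : 0 ≤ log (1 / s) := Real.log_nonneg (one_le_one_div hs hs1)
  set N := ⌊1 / s⌋₊ + 1
  have log_factorial_le (n : ℕ) (hn : n < N) : log (n.factorial : ℝ) ≤ n * log (1 / s) :=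
    log_factorial_le_mul_log
      ((Nat.le_floor_iff (by positivity)).1 (Nat.lt_add_one_iff.1 hn))
  have one_le_mul : 1 ≤ s * N := by
    have : 1 / s ≤ N := mod_cast (Nat.lt_floor_add_one (1 / s)).le
    rwa [div_le_iff₀' hs] at this
  have tail_le : exp (-(s * log (1 / s) * N)) ≤ s :=
    calc exp (-(s * log (1 / s) * N)) ≤ exp (-log (1 / s)) := by
          rw [exp_le_exp]
          linarith [mul_le_mul_of_nonneg_right one_le_mul log_nonneg]
      _ = s := by rw [one_div, log_inv, neg_neg, exp_log hs]
  calc 1 - s ≤ 1 - exp (-(s * log (1 / s) * N)) := by linarith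
    _ ≤ s * log (1 / s) * factorialDirichletSeries s :=
        one_sub_exp_neg_le_mul_tsum_exp_neg_mul hs.le log_nonneg log_factorial_le (summable hs)

theorem mul_log_mul_le (hs : 0 < s) (hs1 : s < 1) :
    s * log (1 / s) * factorialDirichletSeries s ≤
      exp (log (1 / s))⁻¹ *
        (s * log (1 / s) + log (1 / s) / (log (1 / s) - log (log (1 / s)))) := by
  have exp_log_eq : exp (log (1 / s)) = 1 / s := exp_log (by positivity)
  have log_pos : 0 < log (1 / s) := Real.log_pos (one_lt_one_div hs hs1)
  generalize log (1 / s) = L at *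
  have slope_pos : 0 < L - log L := by linarith [log_le_sub_one_of_pos log_pos]
  have mul_exp_slope : s * exp (L - log L) = L⁻¹ := by
    rw [exp_sub, exp_log_eq, exp_log log_pos]
    field_simp
  calc s * L * factorialDirichletSeries s
      ≤ s * L * (exp (s * exp (L - log L)) * (1 + (s * (L - log L))⁻¹)) := by
        gcongr
        exact tsum_exp_neg_mul_le_of_line_le hs slope_pos (mul_sub_exp_le_log_factorial _)
    _ = exp L⁻¹ * (s * L + L / (L - log L)) := by
        rw [mul_exp_slope]
        field_simp

end factorialDirichletSeries

theorem tendsto_log_one_div_nhdsGT_zero :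
    Tendsto (fun s : ℝ ↦ log (1 / s)) (𝓝[>] 0) atTop := by
  simpa only [one_div, Function.comp_def] using tendsto_log_atTop.comp tendsto_inv_nhdsGT_zero

theorem tendsto_mul_log_one_div_nhdsGT_zero :
    Tendsto (fun s : ℝ ↦ s * log (1 / s)) (𝓝[>] 0) (𝓝 0) := by
  simpa [negMulLog_def] using (continuous_negMulLog.tendsto 0).mono_left nhdsWithin_le_nhds

theorem tendsto_div_sub_log_atTop :
    Tendsto (fun x : ℝ ↦ x / (x - log x)) atTop (𝓝 1) := by
  have log_div_tendsto : Tendsto (fun x : ℝ ↦ log x / x) atTop (𝓝 0) :=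
    isLittleO_log_id_atTop.tendsto_div_nhds_zero
  have inv_tendsto : Tendsto (fun x : ℝ ↦ (1 - log x / x)⁻¹) atTop (𝓝 1) := by
    simpa using (log_div_tendsto.const_sub 1).inv₀ (by norm_num)
  refine inv_tendsto.congr' ?_
  filter_upwards [eventually_ne_atTop 0] with x hx
  rw [one_sub_div hx, inv_div]

theorem tendsto_exp_inv_log_mul_nhdsGT_zero :
    Tendsto
      (fun s : ℝ ↦ exp (log (1 / s))⁻¹ *
        (s * log (1 / s) + log (1 / s) / (log (1 / s) - log (log (1 / s)))))
      (𝓝[>] 0) (𝓝 1) := by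
  have exp_inv_tendsto :=
    (continuous_exp.tendsto 0).comp (tendsto_inv_atTop_zero.comp tendsto_log_one_div_nhdsGT_zero)
  have ratio_tendsto := tendsto_div_sub_log_atTop.comp tendsto_log_one_div_nhdsGT_zero
  simpa using exp_inv_tendsto.mul (tendsto_mul_log_one_div_nhdsGT_zero.add ratio_tendsto)

/-- Lemma 3.1 (asymptotics at the origin): for the factorial Dirichlet series
`η(s) = ∑_{n=0}^∞ (n!)^{−s}` one has `η(s) ∼ 1/(s log(1/s))` as `s ↓ 0` along
the positive real axis, i.e. `s · log(1/s) · η(s) → 1`. -/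
theorem factorial_dirichlet_series_asymptotics_at_zero :
    Filter.Tendsto
      (fun s : ℝ =>
        s * Real.log (1 / s) *
          ∑' n : ℕ, Real.exp (-s * Real.log (n.factorial : ℝ)))
      (nhdsWithin 0 (Set.Ioi (0 : ℝ))) (nhds 1) := by
  have lower_tendsto : Tendsto (fun s : ℝ ↦ 1 - s) (𝓝[>] 0) (𝓝 1) :=
    tendsto_nhdsWithin_of_tendsto_nhds (Continuous.tendsto' (by fun_prop) _ _ (sub_zero 1))
  have mem_Ioo : ∀ᶠ s : ℝ in 𝓝[>] 0, s ∈ Set.Ioo 0 1 :=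
    Ioo_mem_nhdsGT one_pos
  refine tendsto_of_tendsto_of_tendsto_of_le_of_le' lower_tendsto
    tendsto_exp_inv_log_mul_nhdsGT_zero ?_ ?_
  · filter_upwards [mem_Ioo] with s ⟨s_pos, s_lt_one⟩
    exact factorialDirichletSeries.one_sub_le_mul_log_mul s_pos s_lt_one.le
  · filter_upwards [mem_Ioo] with s ⟨s_pos, s_lt_one⟩
    exact factorialDirichletSeries.mul_log_mul_le s_pos s_lt_one
end

section
/- Let η(s) := Σ_{n=0}^∞ (n!)^{−s} for Re(s) > 0. The imaginary axis is a natural boundary for η: for every t ∈ ℝ and every ε > 0, there is no function g analytic on the open ball B(i·t, ε) ⊆ ℂ such that g(s) = η(s) for all s ∈ B(i·t, ε) with Re(s) > 0. -/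
open Filter Complex

/-!
Suppose `η` extended continuously to the imaginary axis near `it`. Multiply the extension,
restricted to the vertical line through `σ ≥ 0`, by a smooth bump `ψ` and take its Fourier
coefficient at the frequency `log m!`. By Riemann–Lebesgue the coefficient on the boundary line
`σ = 0` tends to `0` as `m → ∞`. For `σ > 0`, termwise integration expresses it as a sum over `n` of
values of `𝓕 ψ` at `log n! - log m!`, up to scaling. The gaps `log (n + 1)` between consecutive
frequencies tend to infinity and `𝓕 ψ` decays quadratically, so uniformly in `σ` all terms but the
diagonal one are negligible for large `m`. Letting `σ → 0`, the diagonal term alone shows that the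
coefficient on the boundary line stays away from `0`.

The same argument applies to any Dirichlet series with bounded coefficients and gaps tending to
infinity: if it extends continuously to a boundary point, then its coefficients tend to `0`.
-/

open MeasureTheory Metric Real Topology FourierTransform SchwartzMap
open scoped ContDiff

section Gaps

variable {u ℓ : ℕ → ℝ}

lemma tendsto_atTop_of_tendsto_sub_atTop
    (hu : Tendsto (fun n ↦ u (n + 1) - u n) atTop atTop) : Tendsto u atTop atTop := by
  obtain ⟨N, hN⟩ := eventually_atTop.1 (hu.eventually_ge_atTop 1)
  have linear_growth : ∀ n ≥ N, u N - N + n ≤ u n := by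
    intro n hn
    induction n, hn using Nat.le_induction with
    | base => linarith
    | succ k hk ih =>
      push_cast
      linarith [hN k hk]
  exact tendsto_atTop_mono' _ (eventually_atTop.2 ⟨N, linear_growth⟩)
    (tendsto_atTop_add_const_left _ _ tendsto_natCast_atTop_atTop)

lemma eventually_forall_le_and_forall_ge
    (hu : Tendsto (fun n ↦ u (n + 1) - u n) atTop atTop) :
    ∀ᶠ m in atTop, (∀ n ≤ m, u n ≤ u m) ∧ ∀ n ≥ m, u m ≤ u n := by
  obtain ⟨N, hN⟩ := eventually_atTop.1 (hu.eventually_ge_atTop 0)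
  have mono : MonotoneOn u (Set.Ici N) :=
    monotoneOn_nat_Ici_of_le_succ fun n hn ↦ sub_nonneg.1 (hN n hn)
  have initial_le : ∀ᶠ m in atTop, ∀ n ∈ Finset.range N, u n ≤ u m :=
    (Finset.eventually_all _).2 fun n _ ↦
      (tendsto_atTop_of_tendsto_sub_atTop hu).eventually_ge_atTop (u n)
  filter_upwards [initial_le, eventually_ge_atTop N] with m hm hNm
  refine ⟨fun n hn ↦ ?_, fun n hn ↦ mono hNm (hNm.trans hn) hn⟩
  rcases lt_or_ge n N with hnN | hnN
  · exact hm n (Finset.mem_range.2 hnN)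
  · exact mono hnN hNm hn

lemma tendsto_gap_sub_mul (hℓ : Tendsto (fun n ↦ ℓ (n + 1) - ℓ n) atTop atTop) (K : ℝ) :
    Tendsto (fun n : ℕ ↦ (ℓ (n + 1) - K * (n + 1 : ℕ)) - (ℓ n - K * n)) atTop atTop := by
  refine (tendsto_atTop_add_const_right _ (-K) hℓ).congr fun n ↦ ?_
  push_cast
  ring

lemma eventually_forall_mul_abs_sub_le
    (hℓ : Tendsto (fun n ↦ ℓ (n + 1) - ℓ n) atTop atTop) (K : ℝ) :
    ∀ᶠ m : ℕ in atTop, ∀ n : ℕ, K * |(n : ℝ) - m| ≤ |ℓ n - ℓ m| := by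
  filter_upwards [eventually_forall_le_and_forall_ge (u := fun n ↦ ℓ n - K * n)
    (tendsto_gap_sub_mul hℓ K)] with m ⟨le_of_le, ge_of_ge⟩ n
  rcases le_total n m with h | h
  · rw [abs_sub_comm, abs_of_nonneg (sub_nonneg.2 (Nat.cast_le.2 h)), abs_sub_comm]
    linarith [le_of_le n h, le_abs_self (ℓ m - ℓ n)]
  · rw [abs_of_nonneg (sub_nonneg.2 (Nat.cast_le.2 h))]
    linarith [ge_of_ge n h, le_abs_self (ℓ n - ℓ m)]

lemma summable_exp_neg_mul (hℓ : Tendsto (fun n ↦ ℓ (n + 1) - ℓ n) atTop atTop)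
    {σ : ℝ} (hσ : 0 < σ) : Summable fun n ↦ Real.exp (-σ * ℓ n) := by
  refine (summable_exp_nat_mul_iff.2 (neg_neg_of_pos hσ)).of_norm_bounded_eventually_nat ?_
  have tendsto_sub : Tendsto (fun n : ℕ ↦ ℓ n - 1 * n) atTop atTop :=
    tendsto_atTop_of_tendsto_sub_atTop (tendsto_gap_sub_mul hℓ 1)
  filter_upwards [tendsto_sub.eventually_ge_atTop 0] with n hn
  rw [norm_of_nonneg (exp_nonneg _), exp_le_exp]
  nlinarith

end Gaps

section OffDiagonal

variable {E : Type*} [NormedAddCommGroup E]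

lemma eventually_forall_norm_apply_sub_le {f : ℝ → E} {C : ℝ} (hf : ∀ x, x ^ 2 * ‖f x‖ ≤ C)
    {ℓ : ℕ → ℝ} (hℓ : Tendsto (fun n ↦ ℓ (n + 1) - ℓ n) atTop atTop) {δ : ℝ} (hδ : 0 < δ) :
    ∀ᶠ m : ℕ in atTop, ∀ n ≠ m, ‖f (ℓ n - ℓ m)‖ ≤ δ / ((n : ℝ) - m) ^ 2 := by
  set K := √(C / δ) + 1
  have hK : 0 < K := by positivity
  have hCK : C ≤ δ * K ^ 2 := by
    rw [← div_le_iff₀' hδ]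
    exact (Real.sqrt_le_left hK.le).1 (by simp [K])
  filter_upwards [eventually_forall_mul_abs_sub_le hℓ K] with m hm n hnm
  have hnm' : 0 < ((n : ℝ) - m) ^ 2 := by
    have : (n : ℝ) - m ≠ 0 := sub_ne_zero.2 (Nat.cast_injective.ne hnm)
    positivity
  have separation : K ^ 2 * ((n : ℝ) - m) ^ 2 ≤ (ℓ n - ℓ m) ^ 2 := by
    rw [← mul_pow, sq_le_sq, abs_mul, abs_of_pos hK]
    exact hm n
  rw [le_div_iff₀ hnm']
  refine le_of_mul_le_mul_right ?_ (pow_pos hK 2)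
  calc ‖f (ℓ n - ℓ m)‖ * ((n : ℝ) - m) ^ 2 * K ^ 2
      = K ^ 2 * ((n : ℝ) - m) ^ 2 * ‖f (ℓ n - ℓ m)‖ := by ring
    _ ≤ (ℓ n - ℓ m) ^ 2 * ‖f (ℓ n - ℓ m)‖ := by gcongr
    _ ≤ δ * K ^ 2 := (hf _).trans hCK

-- The term `k = 0` of the sum over `ℤ` is `1 / 0 = 0`.
lemma norm_apply_le_of_hasSum {b : ℕ → E} {J : E} (hb : HasSum b J) {m : ℕ} {C : ℝ}
    (hC : ∀ n ≠ m, ‖b n‖ ≤ C / ((n : ℝ) - m) ^ 2) :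
    ‖b m‖ ≤ ‖J‖ + C * ∑' k : ℤ, 1 / (k : ℝ) ^ 2 := by
  have C_nonneg : 0 ≤ C := by simpa using (norm_nonneg _).trans (hC (m + 1) (by simp))
  have shift_injective : Function.Injective fun n : ℕ ↦ (n : ℤ) - m := fun _ _ h ↦ by simpa using h
  have summable_int : Summable fun k : ℤ ↦ 1 / (k : ℝ) ^ 2 :=
    Real.summable_one_div_int_pow.2 one_lt_two
  have off_diagonal : ‖J - b m‖ ≤ C * ∑' n : ℕ, 1 / (((n : ℤ) - m : ℤ) : ℝ) ^ 2 := by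
    have update_sum : HasSum (Function.update b m 0) (J - b m) := by
      simpa [sub_eq_neg_add] using hb.update m 0
    refine update_sum.norm_le_of_bounded
      ((summable_int.comp_injective shift_injective).hasSum.mul_left C) fun n ↦ ?_
    rcases eq_or_ne n m with rfl | hnm
    · simp
    · simpa [Function.update_of_ne hnm, div_eq_mul_inv] using hC n hnm
  calc ‖b m‖ ≤ ‖J‖ + ‖J - b m‖ := by simpa using norm_sub_le J (J - b m)
    _ ≤ ‖J‖ + C * ∑' k : ℤ, 1 / (k : ℝ) ^ 2 := by
      gcongr
      refine off_diagonal.trans (mul_le_mul_of_nonneg_left ?_ C_nonneg)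
      exact tsum_comp_le_tsum_of_inj summable_int (fun k ↦ by positivity) shift_injective

end OffDiagonal

section TestFunctions

variable {E : Type*} [NormedAddCommGroup E] [NormedSpace ℂ E]

lemma exists_schwartzMap_support_subset_ball {r : ℝ} (hr : 0 < r) :
    ∃ ψ : 𝓢(ℝ, ℂ), Function.support ψ ⊆ ball 0 r ∧ 𝓕 (ψ : ℝ → ℂ) 0 ≠ 0 := by
  let φ : ContDiffBump (0 : ℝ) := ⟨r / 2, r, half_pos hr, half_lt_self hr⟩
  have smooth : ContDiff ℝ ∞ fun x ↦ (φ x : ℂ) := ofRealCLM.contDiff.comp φ.contDiff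
  refine ⟨(φ.hasCompactSupport.comp_left ofReal_zero).toSchwartzMap smooth, fun x hx ↦ ?_, ?_⟩
  · rw [← show φ.rOut = r from rfl, ← φ.support_eq]
    exact fun h ↦ hx (by simp [h])
  · suffices ((∫ x, φ x : ℝ) : ℂ) ≠ 0 by
      rw [← integral_complex_ofReal] at this
      simpa [fourier_real_eq_integral_exp_smul] using this
    exact ofReal_ne_zero.2 φ.integral_pos.ne'

lemma exists_sq_mul_norm_fourier_le (ψ : 𝓢(ℝ, E)) :
    ∃ C, ∀ w : ℝ, w ^ 2 * ‖𝓕 (ψ : ℝ → E) w‖ ≤ C := by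
  obtain ⟨C, -, hC⟩ := (𝓕 ψ).decay 2 0
  exact ⟨C, fun w ↦ by simpa [fourier_coe] using hC w⟩

lemma fourier_mul_cexp (ψ : ℝ → ℂ) (ξ w : ℝ) :
    𝓕 (fun x : ℝ ↦ ψ x * cexp (-(x * I) * ξ)) w = 𝓕 ψ (w + ξ / (2 * π)) := by
  simp only [fourier_real_eq_integral_exp_smul, smul_eq_mul]
  congr 1 with x
  rw [mul_left_comm, ← Complex.exp_add, mul_comm]
  congr 2
  push_cast
  field_simp
  ring

lemma continuous_fourier_of_compact_support {X : Type*} [TopologicalSpace X] {F : X → ℝ → E}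
    (hF : Continuous F.uncurry) {k : Set ℝ} (hk : IsCompact k) (hFk : ∀ p, ∀ x ∉ k, F p x = 0)
    (w : ℝ) : Continuous fun p ↦ 𝓕 (F p) w := by
  simp only [fourier_real_eq_integral_exp_smul, ← continuousOn_univ]
  refine continuousOn_integral_of_compact_support hk (Continuous.continuousOn ?_)
    fun p x _ hx ↦ by simp [hFk p x hx]
  fun_prop

lemma tendsto_norm_fourier_neg_div_two_pi {ι : Type*} {l : Filter ι} {ξ : ι → ℝ}
    (hξ : Tendsto ξ l atTop) (f : ℝ → E) :
    Tendsto (fun i ↦ ‖𝓕 f (-(ξ i / (2 * π)))‖) l (𝓝 0) := by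
  have freq_tendsto : Tendsto (fun i ↦ -(ξ i / (2 * π))) l (cocompact ℝ) :=
    (tendsto_neg_atTop_atBot.comp (hξ.atTop_div_const two_pi_pos)).mono_right atBot_le_cocompact
  exact tendsto_zero_iff_norm_tendsto_zero.1 ((zero_at_infty_fourier f).comp freq_tendsto)

end TestFunctions

lemma exists_continuous_eqOn.{u, v} {X : Type u} {Y : Type v} [TopologicalSpace X] [NormalSpace X]
    [TopologicalSpace Y] [TietzeExtension.{u, v} Y] {s : Set X} (hs : IsClosed s) {g : X → Y}
    (hg : ContinuousOn g s) : ∃ G : X → Y, Continuous G ∧ Set.EqOn G g s := by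
  obtain ⟨G, hG⟩ := ContinuousMap.exists_restrict_eq hs ⟨s.domRestrict g, hg.domRestrict⟩
  exact ⟨G, G.continuous, fun z hz ↦ DFunLike.congr_fun hG ⟨z, hz⟩⟩

lemma add_ofReal_add_mul_I_mem_closedBall (s : ℂ) {σ x r : ℝ} (hσ : |σ| ≤ r) (hx : |x| ≤ r) :
    s + σ + x * I ∈ closedBall s (2 * r) := by
  rw [mem_closedBall, dist_eq_norm, add_assoc, add_sub_cancel_left]
  calc ‖(σ : ℂ) + x * I‖ ≤ |σ| + |x| := by simpa using norm_add_le (σ : ℂ) (x * I)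
    _ ≤ 2 * r := by linarith

/-- The general Dirichlet series `∑ aₙ e^{-ℓₙ s}` with coefficients `a` and frequencies `ℓ`, of
which `η` is the case `aₙ = 1`, `ℓₙ = log n!`; its value is `0` where the series does not converge
absolutely. -/
noncomputable def dirichletSeries (a : ℕ → ℂ) (ℓ : ℕ → ℝ) (s : ℂ) : ℂ :=
  ∑' n, a n * cexp (-s * ℓ n)

section DirichletSeries

variable {a : ℕ → ℂ} {ℓ : ℕ → ℝ} {A : ℝ}

lemma norm_cexp_neg_mul_ofReal (s : ℂ) (ξ : ℝ) : ‖cexp (-s * ξ)‖ = Real.exp (-s.re * ξ) := by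
  simp [Complex.norm_exp]

lemma hasSum_fourier_mul_dirichletSeries {s : ℂ}
    (hs : Summable fun n ↦ ‖a n‖ * Real.exp (-s.re * ℓ n)) {ψ : ℝ → ℂ} (hψ : Integrable ψ)
    (w : ℝ) :
    HasSum (fun n ↦ a n * cexp (-s * ℓ n) * 𝓕 ψ (w + ℓ n / (2 * π)))
      (𝓕 (fun x : ℝ ↦ ψ x * dirichletSeries a ℓ (s + x * I)) w) := by
  let F (n : ℕ) (x : ℝ) : ℂ :=
    cexp ((-2 * π * x * w : ℝ) * I) • (ψ x * (a n * cexp (-(s + x * I) * ℓ n)))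
  have norm_F (n : ℕ) (x : ℝ) : ‖F n x‖ = ‖a n‖ * Real.exp (-s.re * ℓ n) * ‖ψ x‖ := by
    simp only [F, norm_smul, norm_mul, norm_exp_ofReal_mul_I, norm_cexp_neg_mul_ofReal, add_re,
      re_ofReal_mul, I_re, mul_zero, add_zero]
    ring
  have integrable_F (n : ℕ) : Integrable (F n) := by
    refine (hψ.norm.const_mul (‖a n‖ * Real.exp (-s.re * ℓ n))).mono' ?_
      (.of_forall fun x ↦ (norm_F n x).le)
    have := hψ.aestronglyMeasurable
    fun_prop
  have integral_F (n : ℕ) :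
      ∫ x, F n x = a n * cexp (-s * ℓ n) * 𝓕 ψ (w + ℓ n / (2 * π)) := by
    rw [← fourier_mul_cexp, fourier_real_eq_integral_exp_smul, ← integral_const_mul]
    congr 1 with x
    simp only [F, smul_eq_mul]
    rw [show -(s + x * I) * ℓ n = -s * ℓ n + -(x * I) * ℓ n by ring, Complex.exp_add]
    ring
  have tsum_F (x : ℝ) : ∑' n, F n x =
      cexp ((-2 * π * x * w : ℝ) * I) • (ψ x * dirichletSeries a ℓ (s + x * I)) := by
    simp only [F, smul_eq_mul, tsum_mul_left, dirichletSeries]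
  have summable_integral_norm : Summable fun n ↦ ∫ x, ‖F n x‖ := by
    simpa only [norm_F, integral_const_mul] using hs.mul_right _
  simpa only [integral_F, tsum_F, ← fourier_real_eq_integral_exp_smul] using
    hasSum_integral_of_summable_integral_norm integrable_F summable_integral_norm

lemma eventually_forall_norm_coeff_le (hA : ∀ n, ‖a n‖ ≤ A) (hℓ_nonneg : ∀ n, 0 ≤ ℓ n)
    (hℓ : Tendsto (fun n ↦ ℓ (n + 1) - ℓ n) atTop atTop) (ψ : 𝓢(ℝ, ℂ)) {δ : ℝ} (hδ : 0 < δ) :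
    ∀ᶠ m in atTop, ∀ s : ℂ, 0 < s.re →
      ‖a m‖ * Real.exp (-s.re * ℓ m) * ‖𝓕 (ψ : ℝ → ℂ) 0‖ ≤
        ‖𝓕 (fun x : ℝ ↦ ψ x * dirichletSeries a ℓ (s + x * I)) (-(ℓ m / (2 * π)))‖ + δ := by
  obtain ⟨C, hC⟩ := exists_sq_mul_norm_fourier_le ψ
  have scaled_gap : Tendsto (fun n ↦ ℓ (n + 1) / (2 * π) - ℓ n / (2 * π)) atTop atTop := by
    simpa only [sub_div] using hℓ.atTop_div_const two_pi_pos
  obtain ⟨η, hη, hηδ⟩ := exists_pos_mul_lt hδ (A * ∑' k : ℤ, 1 / (k : ℝ) ^ 2)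
  filter_upwards [eventually_forall_norm_apply_sub_le (ℓ := fun n ↦ ℓ n / (2 * π)) hC scaled_gap hη]
    with m hm s hs
  have norm_term_le (n : ℕ) : ‖a n * cexp (-s * ℓ n)‖ ≤ A := by
    rw [norm_mul, norm_cexp_neg_mul_ofReal]
    refine (mul_le_of_le_one_right (norm_nonneg _) ?_).trans (hA n)
    exact exp_le_one_iff.2 (by nlinarith [hℓ_nonneg n])
  have summable_terms : Summable fun n ↦ ‖a n‖ * Real.exp (-s.re * ℓ n) :=
    ((summable_exp_neg_mul hℓ hs).mul_left A).of_nonneg_of_le (fun _ ↦ by positivity)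
      fun n ↦ by gcongr; exact hA n
  have diagonal_le := norm_apply_le_of_hasSum (m := m) (C := A * η)
    (hasSum_fourier_mul_dirichletSeries summable_terms ψ.integrable (-(ℓ m / (2 * π))))
    fun n hn ↦ by
      rw [norm_mul, mul_div_assoc, neg_add_eq_sub]
      exact mul_le_mul (norm_term_le n) (hm n hn) (norm_nonneg _)
        ((norm_nonneg _).trans (norm_term_le n))
  rw [norm_mul, norm_mul, norm_cexp_neg_mul_ofReal, neg_add_cancel] at diagonal_le
  linarith

lemma eventually_norm_coeff_le_of_continuous_extension (hA : ∀ n, ‖a n‖ ≤ A)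
    (hℓ_nonneg : ∀ n, 0 ≤ ℓ n) (hℓ : Tendsto (fun n ↦ ℓ (n + 1) - ℓ n) atTop atTop)
    {ψ : 𝓢(ℝ, ℂ)} {r : ℝ} (hr : 0 < r) (hψ : Function.support ψ ⊆ ball 0 r)
    {G : ℂ → ℂ} (hG : Continuous G) {s₀ : ℂ} (hs₀ : s₀.re = 0)
    (hGs : ∀ σ ∈ Set.Ioo 0 r, ∀ x ∈ ball (0 : ℝ) r,
      G (s₀ + σ + x * I) = dirichletSeries a ℓ (s₀ + σ + x * I)) {δ : ℝ} (hδ : 0 < δ) :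
    ∀ᶠ m in atTop, ‖a m‖ * ‖𝓕 (ψ : ℝ → ℂ) 0‖ ≤
      ‖𝓕 (fun x : ℝ ↦ ψ x * G (s₀ + x * I)) (-(ℓ m / (2 * π)))‖ + δ := by
  filter_upwards [eventually_forall_norm_coeff_le hA hℓ_nonneg hℓ ψ hδ] with m hm
  have continuous_slice : Continuous fun σ : ℝ ↦
      𝓕 (fun x : ℝ ↦ ψ x * G (s₀ + σ + x * I)) (-(ℓ m / (2 * π))) := by
    refine continuous_fourier_of_compact_support (by have := ψ.continuous; fun_prop)
      (isCompact_closedBall 0 r) (fun σ x hx ↦ ?_) _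
    rw [Function.notMem_support.1 fun h ↦ hx (ball_subset_closedBall (hψ h)), zero_mul]
  have bound_of_pos : ∀ σ ∈ Set.Ioo 0 r, ‖a m‖ * Real.exp (-σ * ℓ m) * ‖𝓕 (ψ : ℝ → ℂ) 0‖ ≤
      ‖𝓕 (fun x : ℝ ↦ ψ x * G (s₀ + σ + x * I)) (-(ℓ m / (2 * π)))‖ + δ := by
    intro σ hσ
    have eq_series : (fun x : ℝ ↦ ψ x * G (s₀ + σ + x * I)) =
        fun x : ℝ ↦ ψ x * dirichletSeries a ℓ (s₀ + σ + x * I) := by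
      ext x
      by_cases hx : x ∈ Function.support ψ
      · rw [hGs σ hσ x (hψ hx)]
      · simp only [Function.notMem_support.1 hx, zero_mul]
    simpa [eq_series, hs₀] using hm (s₀ + σ) (by simpa [hs₀] using hσ.1)
  have zero_mem_closure : 0 ∈ closure (Set.Ioo 0 r) := by
    simpa [closure_Ioo hr.ne] using hr.le
  simpa using le_on_closure bound_of_pos (by fun_prop)
    (continuous_slice.norm.add_const δ).continuousOn zero_mem_closure

theorem tendsto_coeff_zero_of_continuousOn_extension (hA : ∀ n, ‖a n‖ ≤ A)
    (hℓ_nonneg : ∀ n, 0 ≤ ℓ n) (hℓ : Tendsto (fun n ↦ ℓ (n + 1) - ℓ n) atTop atTop)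
    {s₀ : ℂ} (hs₀ : s₀.re = 0) {ε : ℝ} (hε : 0 < ε) {g : ℂ → ℂ}
    (hg : ContinuousOn g (ball s₀ ε ∩ {s | 0 ≤ s.re}))
    (hgs : ∀ s ∈ ball s₀ ε, 0 < s.re → g s = dirichletSeries a ℓ s) :
    Tendsto a atTop (𝓝 0) := by
  have hε4 : 0 < ε / 4 := by positivity
  have closedBall_subset : closedBall s₀ (2 * (ε / 4)) ⊆ ball s₀ ε :=
    closedBall_subset_ball (by linarith)
  obtain ⟨ψ, hψ, hψ_zero⟩ := exists_schwartzMap_support_subset_ball hε4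
  obtain ⟨G, hG, hGg⟩ := exists_continuous_eqOn
    (isClosed_closedBall.inter (isClosed_le continuous_const continuous_re))
    (hg.mono (Set.inter_subset_inter_left _ closedBall_subset))
  have hGs : ∀ σ ∈ Set.Ioo 0 (ε / 4), ∀ x ∈ ball (0 : ℝ) (ε / 4),
      G (s₀ + σ + x * I) = dirichletSeries a ℓ (s₀ + σ + x * I) := by
    intro σ hσ x hx
    have re_pos : 0 < (s₀ + σ + x * I).re := by simpa [hs₀] using hσ.1
    have mem_closedBall := add_ofReal_add_mul_I_mem_closedBall s₀
      ((abs_of_pos hσ.1).trans_le hσ.2.le) (mem_ball_zero_iff.1 hx).le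
    rw [hGg ⟨mem_closedBall, re_pos.le⟩, hgs _ (closedBall_subset mem_closedBall) re_pos]
  have boundary_coeff_tendsto : Tendsto
      (fun m ↦ ‖𝓕 (fun x : ℝ ↦ ψ x * G (s₀ + x * I)) (-(ℓ m / (2 * π)))‖) atTop (𝓝 0) :=
    tendsto_norm_fourier_neg_div_two_pi (tendsto_atTop_of_tendsto_sub_atTop hℓ) _
  have mul_tendsto : Tendsto (fun m ↦ ‖a m‖ * ‖𝓕 (ψ : ℝ → ℂ) 0‖) atTop (𝓝 0) := by
    refine tendsto_order.2 ⟨fun b hb ↦ .of_forall fun m ↦ hb.trans_le (by positivity),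
      fun b hb ↦ ?_⟩
    filter_upwards [boundary_coeff_tendsto.eventually_lt_const (half_pos hb),
      eventually_norm_coeff_le_of_continuous_extension hA hℓ_nonneg hℓ hε4 hψ hG hs₀ hGs
        (half_pos hb)] with m hm_small hm_le
    linarith
  rw [tendsto_zero_iff_norm_tendsto_zero]
  simpa [hψ_zero] using mul_tendsto.div_const ‖𝓕 (ψ : ℝ → ℂ) 0‖

end DirichletSeries

lemma log_factorial_succ_sub_log_factorial (n : ℕ) :
    Real.log (n + 1).factorial - Real.log n.factorial = Real.log (n + 1 : ℕ) := by
  rw [Nat.factorial_succ, Nat.cast_mul, Real.log_mul (by positivity) (by positivity),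
    add_sub_cancel_right]

lemma tendsto_log_factorial_gap :
    Tendsto (fun n : ℕ ↦ Real.log (n + 1).factorial - Real.log n.factorial) atTop atTop := by
  simp only [log_factorial_succ_sub_log_factorial]
  exact tendsto_log_atTop.comp (tendsto_natCast_atTop_atTop.comp (tendsto_add_atTop_nat 1))

theorem factorial_dirichlet_series_natural_boundary_general (t : ℝ) {ε : ℝ} (hε : 0 < ε) :
    ¬ ∃ g : ℂ → ℂ,
      ContinuousOn g (ball (t * I) ε ∩ {s | 0 ≤ s.re}) ∧
      ∀ s ∈ ball ((t : ℂ) * I) ε, 0 < s.re →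
        g s = ∑' n : ℕ, cexp (-s * (Real.log (n.factorial : ℝ) : ℂ)) := by
  rintro ⟨g, hg, hgs⟩
  have one_tendsto_zero : Tendsto (fun _ : ℕ ↦ (1 : ℂ)) atTop (𝓝 0) :=
    tendsto_coeff_zero_of_continuousOn_extension (fun _ ↦ norm_one.le)
      (fun n ↦ log_natCast_nonneg n.factorial) tendsto_log_factorial_gap (by simp) hε hg
      (by simpa only [dirichletSeries, one_mul] using hgs)
  exact one_ne_zero (tendsto_const_nhds_iff.1 one_tendsto_zero)

/-- Lemma 3.1 (natural boundary): the imaginary axis is a natural boundary of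
the factorial Dirichlet series `η(s) = ∑_{n=0}^∞ (n!)^{−s}`: no point `i t`
of the imaginary axis admits a ball on which an analytic function agrees with
`η` on the part of the ball inside the right half-plane. -/
theorem factorial_dirichlet_series_natural_boundary :
    ∀ t : ℝ, ∀ ε > (0 : ℝ),
      ¬ ∃ g : ℂ → ℂ,
        DifferentiableOn ℂ g (Metric.ball ((t : ℂ) * Complex.I) ε) ∧
        ∀ s ∈ Metric.ball ((t : ℂ) * Complex.I) ε, 0 < s.re →
          g s = ∑' n : ℕ, Complex.exp (-s * (Real.log (n.factorial : ℝ) : ℂ)) := by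
  rintro t ε hε ⟨g, hg, hgs⟩
  exact factorial_dirichlet_series_natural_boundary_general t hε
    ⟨g, hg.continuousOn.mono Set.inter_subset_left, hgs⟩
end
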